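/- arXiv:2310.01173 — 9 statements merged into one kernel-verified Lean document; each statement's English description precedes it below -/
import Mathlib

section
/- Let n be a natural number, p ∈ (0,1], and c ≥ 1/2 a real number. If B(n,p) is a binomial random variable with parameters n and p, then E[1/(c + B(n,p))] ≤ 2/(p(n+1)); equivalently, Σ_{k=0}^n (1/(c+k))·C(n,k)·p^k·(1−p)^{n−k} ≤ 2/(p(n+1)). -/
/-- For `n : ℕ`, `p ∈ (0,1]` and `c ≥ 1/2`, the expectation of
`1/(c + B(n,p))` for a binomial random variable `B(n,p)` is at most `2/(p(n+1))`:
`∑_{k=0}^n (1/(c+k))·C(n,k)·p^k·(1−p)^{n−k} ≤ 2/(p(n+1))`. -/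
theorem binomial_inv_shift_expectation_le
    (n : ℕ) (p : ℝ) (hp0 : 0 < p) (hp1 : p ≤ 1) (c : ℝ) (hc : 1 / 2 ≤ c) :
    ∑ k ∈ Finset.range (n + 1),
        (1 / (c + (k : ℝ))) * (n.choose k : ℝ) * p ^ k * (1 - p) ^ (n - k)
      ≤ 2 / (p * ((n : ℝ) + 1)) := by
  have hn : (0:ℝ) < (n:ℝ) + 1 := by positivity
  have hq : 0 ≤ 1 - p := by linarith
  have hS := add_pow p (1 - p) (n + 1)
  rw [Finset.sum_range_succ'] at hS
  have h1 : p + (1 - p) = 1 := by ring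
  rw [h1, one_pow] at hS
  have h0 : 0 ≤ p ^ 0 * (1 - p) ^ (n + 1 - 0) * (((n + 1).choose 0 : ℕ) : ℝ) := by positivity
  rw [le_div_iff₀ (by positivity), Finset.sum_mul]
  have key : ∀ k ∈ Finset.range (n + 1),
      (1 / (c + (k : ℝ))) * (n.choose k : ℝ) * p ^ k * (1 - p) ^ (n - k) * (p * ((n : ℝ) + 1))
      ≤ 2 * (p ^ (k + 1) * (1 - p) ^ (n + 1 - (k + 1)) * (((n + 1).choose (k + 1) : ℕ) : ℝ)) := by
    intro k _
    have hk : (0:ℝ) ≤ k := Nat.cast_nonneg k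
    have hch : ((n:ℝ) + 1) * (n.choose k : ℝ) = ((n + 1).choose (k + 1) : ℕ) * ((k:ℝ) + 1) := by
      exact_mod_cast Nat.add_one_mul_choose_eq n k
    have hck : 0 < c + (k:ℝ) := by linarith
    have hr : 1 / (c + (k:ℝ)) * ((k:ℝ) + 1) ≤ 2 := by
      rw [one_div_mul_eq_div, div_le_iff₀ hck]
      linarith
    rw [Nat.add_sub_add_right]
    have hX : 0 ≤ p ^ (k + 1) * (1 - p) ^ (n - k) * (((n + 1).choose (k + 1) : ℕ) : ℝ) := by
      positivity
    calc _ = 1 / (c + (k:ℝ)) * p ^ (k + 1) * (1 - p) ^ (n - k) *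
            (((n:ℝ) + 1) * (n.choose k : ℝ)) := by ring
      _ = (1 / (c + (k:ℝ)) * ((k:ℝ) + 1)) *
          (p ^ (k + 1) * (1 - p) ^ (n - k) * (((n + 1).choose (k + 1) : ℕ) : ℝ)) := by
        rw [hch]; ring
      _ ≤ _ := mul_le_mul_of_nonneg_right hr hX
  refine (Finset.sum_le_sum key).trans ?_
  rw [← Finset.mul_sum]
  linarith
end

section
/- Let n be a natural number and p ∈ (0,1]. If B(n,p) is a binomial random variable with parameters n and p, then E[(1/B(n,p))·1_{B(n,p)>0}] ≤ 2/(p(n+1)); equivalently, Σ_{k=1}^n (1/k)·C(n,k)·p^k·(1−p)^{n−k} ≤ 2/(p(n+1)). -/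
/-- For `n : ℕ` and `p ∈ (0,1]`, the expectation of
`(1/B(n,p))·1_{B(n,p)>0}` for a binomial random variable `B(n,p)` is at most
`2/(p(n+1))`: `∑_{k=1}^n (1/k)·C(n,k)·p^k·(1−p)^{n−k} ≤ 2/(p(n+1))`. -/
theorem binomial_inv_pos_expectation_le
    (n : ℕ) (p : ℝ) (hp0 : 0 < p) (hp1 : p ≤ 1) :
    ∑ k ∈ Finset.Icc 1 n,
        (1 / (k : ℝ)) * (n.choose k : ℝ) * p ^ k * (1 - p) ^ (n - k)
      ≤ 2 / (p * ((n : ℝ) + 1)) := by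
  have hq : 0 ≤ 1 - p := by linarith
  have hn : (0:ℝ) < (n:ℝ) + 1 := by positivity
  have hsum : ∑ m ∈ Finset.range (n + 1 + 1),
      p ^ m * (1 - p) ^ (n + 1 - m) * ((n + 1).choose m : ℝ) = 1 := by
    rw [← add_pow]; simp
  have h2 : ∑ k ∈ Finset.range (n + 1),
      p ^ (k + 1) * (1 - p) ^ (n - k) * ((n + 1).choose (k + 1) : ℝ) ≤ 1 := by
    rw [Finset.sum_range_succ'] at hsum
    simp only [Nat.add_sub_add_right] at hsum
    have : 0 ≤ p ^ 0 * (1 - p) ^ (n + 1 - 0) * ((n + 1).choose 0 : ℝ) := by positivity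
    linarith
  have h3 : ∀ k ∈ Finset.Icc 1 n,
      (1 / (k : ℝ)) * (n.choose k : ℝ) * p ^ k * (1 - p) ^ (n - k) ≤
      2 / (p * ((n : ℝ) + 1)) *
        (p ^ (k + 1) * (1 - p) ^ (n - k) * ((n + 1).choose (k + 1) : ℝ)) := by
    intro k hk
    have hk1 : (1:ℝ) ≤ k := by exact_mod_cast (Finset.mem_Icc.mp hk).1
    have hc : ((n:ℝ) + 1) * (n.choose k : ℝ) = ((n + 1).choose (k + 1) : ℝ) * ((k:ℝ) + 1) := by
      exact_mod_cast Nat.add_one_mul_choose_eq n k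
    have hc' : ((n + 1).choose (k + 1) : ℝ) = ((n:ℝ) + 1) * (n.choose k : ℝ) / ((k:ℝ) + 1) := by
      rw [hc]; field_simp
    have e : 2 / (p * ((n : ℝ) + 1)) *
        (p ^ (k + 1) * (1 - p) ^ (n - k) * ((n + 1).choose (k + 1) : ℝ)) =
        (2 / ((k:ℝ) + 1)) * (n.choose k : ℝ) * p ^ k * (1 - p) ^ (n - k) := by
      rw [hc', pow_succ]; field_simp
    rw [e]
    have : 1 / (k:ℝ) ≤ 2 / ((k:ℝ) + 1) := by
      rw [div_le_div_iff₀ (by linarith) (by linarith)]; linarith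
    gcongr
  refine (Finset.sum_le_sum h3).trans ?_
  rw [← Finset.mul_sum]
  refine mul_le_of_le_one_right (by positivity) (le_trans ?_ h2)
  apply Finset.sum_le_sum_of_subset_of_nonneg
  · intro k hk
    simp only [Finset.mem_Icc, Finset.mem_range] at *
    omega
  · intro k _ _
    positivity
end

section
/- Assume in addition that E[r_m(X)²] < ∞ for each m = 1,…,M. Then for every measurable function F : ℝ^M → ℝ with E[F(r(X))²] < ∞, one has E[|F(r(X)) − g*(X)|²] ≤ min_{1 ≤ m ≤ M} E[|r_m(X) − g*(X)|²] + E[|F(r(X)) − G(r(X))|²]. -/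
open MeasureTheory

lemma aux_ce {Ω : Type*} {m m0 : MeasurableSpace Ω} (μ : Measure Ω) [IsProbabilityMeasure μ]
    (hm : m ≤ m0) (h Y Z : Ω → ℝ) (hh : StronglyMeasurable[m] h) (h2 : MemLp h 2 μ)
    (hY : MemLp Y 2 μ) (hZ : Z =ᵐ[μ] μ[Y | m]) :
    ∫ ω, h ω * Z ω ∂μ = ∫ ω, h ω * Y ω ∂μ := by
  have hi : Integrable (h * Y) μ := h2.integrable_mul hY
  have e := condExp_mul_of_stronglyMeasurable_left hh hi (hY.integrable (by norm_num))
  have e2 : ∫ ω, (μ[h * Y | m]) ω ∂μ = ∫ ω, (h * Y) ω ∂μ := integral_condExp hm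
  have e3 : ∫ ω, h ω * Z ω ∂μ = ∫ ω, (μ[h * Y | m]) ω ∂μ := by
    apply integral_congr_ae
    filter_upwards [e, hZ] with ω h1 h2
    rw [h1, Pi.mul_apply, h2]
  rw [e3, e2]
  rfl

/-- With `(X,Y)`, `r`, `g*`, `G` as in the consensual-aggregation setup,
assume moreover `E[r_m(X)²] < ∞` for each `m`.  Then for every measurable `F : ℝ^M → ℝ`
with `E[F(r(X))²] < ∞` one has
`E[|F(r(X)) − g*(X)|²] ≤ min_{1≤m≤M} E[|r_m(X) − g*(X)|²] + E[|F(r(X)) − G(r(X))|²]`. -/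
theorem risk_le_min_estimator_add_variance
    {Ω : Type*} [MeasurableSpace Ω] (μ : Measure Ω) [IsProbabilityMeasure μ]
    {d M : ℕ} (hM : 0 < M)
    (X : Ω → Fin d → ℝ) (Y : Ω → ℝ) (hX : Measurable X) (hY : Measurable Y)
    (hY2 : Integrable (fun ω => (Y ω) ^ 2) μ)
    (r : (Fin d → ℝ) → (Fin M → ℝ)) (hr : Measurable r)
    (hr2 : ∀ m : Fin M, Integrable (fun ω => (r (X ω) m) ^ 2) μ)
    (gstar : (Fin d → ℝ) → ℝ) (hgstar : Measurable gstar)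
    (hgstarCE : (fun ω => gstar (X ω)) =ᵐ[μ]
      μ[Y | MeasurableSpace.comap X inferInstance])
    (G : (Fin M → ℝ) → ℝ) (hG : Measurable G)
    (hGCE : (fun ω => G (r (X ω))) =ᵐ[μ]
      μ[Y | MeasurableSpace.comap (fun ω => r (X ω)) inferInstance])
    (F : (Fin M → ℝ) → ℝ) (hF : Measurable F)
    (hF2 : Integrable (fun ω => (F (r (X ω))) ^ 2) μ) :
    ∫ ω, |F (r (X ω)) - gstar (X ω)| ^ 2 ∂μ
      ≤ (⨅ m : Fin M, ∫ ω, |r (X ω) m - gstar (X ω)| ^ 2 ∂μ)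
        + ∫ ω, |F (r (X ω)) - G (r (X ω))| ^ 2 ∂μ := by
  have mem : ∀ f : Ω → ℝ, Measurable f → Integrable (fun ω => (f ω) ^ 2) μ → MemLp f 2 μ :=
    fun f hf h => (memLp_two_iff_integrable_sq hf.aestronglyMeasurable).2 h
  have Y2 := mem Y hY hY2
  have g2 : MemLp (fun ω => gstar (X ω)) 2 μ :=
    (memLp_congr_ae hgstarCE).2 (Y2.condExp (by norm_num))
  have G2 : MemLp (fun ω => G (r (X ω))) 2 μ :=
    (memLp_congr_ae hGCE).2 (Y2.condExp (by norm_num))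
  have hrX : Measurable (fun ω => r (X ω)) := hr.comp hX
  have key : ∀ f : (Fin M → ℝ) → ℝ, Measurable f → Integrable (fun ω => (f (r (X ω))) ^ 2) μ →
      ∫ ω, |f (r (X ω)) - gstar (X ω)| ^ 2 ∂μ = ∫ ω, |f (r (X ω)) - G (r (X ω))| ^ 2 ∂μ
        + ∫ ω, |G (r (X ω)) - gstar (X ω)| ^ 2 ∂μ := by
    intro f hf hf2
    have f2 := mem _ (hf.comp hrX) hf2
    have d2 : MemLp (fun ω => f (r (X ω)) - G (r (X ω))) 2 μ := f2.sub G2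
    have q2 : MemLp (fun ω => G (r (X ω)) - gstar (X ω)) 2 μ := G2.sub g2
    have e1 := aux_ce μ hrX.comap_le (fun ω => f (r (X ω)) - G (r (X ω))) Y _
      (((hf.sub hG).comp (comap_measurable (fun ω => r (X ω)))).stronglyMeasurable) d2 Y2 hGCE
    have e2 := aux_ce μ hX.comap_le (fun ω => f (r (X ω)) - G (r (X ω))) Y _
      ((((hf.sub hG).comp hr).comp (comap_measurable X)).stronglyMeasurable) d2 Y2 hgstarCE
    have i1 := d2.integrable_sq
    have i2 := q2.integrable_sq
    have i3 : Integrable (fun ω => (f (r (X ω)) - G (r (X ω))) * G (r (X ω))) μ :=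
      d2.integrable_mul G2
    have i4 : Integrable (fun ω => (f (r (X ω)) - G (r (X ω))) * gstar (X ω)) μ :=
      d2.integrable_mul g2
    simp only [sq_abs]
    have e5 : ∫ ω, 2 * ((f (r (X ω)) - G (r (X ω))) * G (r (X ω))
        - (f (r (X ω)) - G (r (X ω))) * gstar (X ω)) ∂μ = 0 := by
      rw [integral_const_mul, integral_sub i3 i4, e1, e2]; ring
    symm
    rw [← integral_add i1 i2, ← add_zero (∫ ω, _ ∂μ), ← e5, ← integral_add]
    · refine integral_congr_ae (Filter.Eventually.of_forall fun ω => ?_)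
      simp only
      ring
    · exact i1.add i2
    · exact (i3.sub i4).const_mul 2
  have : Nonempty (Fin M) := ⟨⟨0, hM⟩⟩
  rw [key F hF hF2, add_comm]
  gcongr
  refine le_ciInf fun m => ?_
  rw [key (fun x => x m) (measurable_pi_apply m) (hr2 m)]
  exact le_add_of_nonneg_left (integral_nonneg fun ω => by positivity)
end

section
/- Let K be a regular kernel with constants b, ρ, κ₀, and let (h_ℓ)_{ℓ≥1} be a sequence of positive bandwidths with h_ℓ → 0 and ℓ·h_ℓ^M → ∞ as ℓ → ∞. Then, with bandwidth h = h_ℓ, E[|G(r(X))·(Σ_{i=1}^ℓ W_{n,i}(X) − 1)|²] → 0 as ℓ → ∞, where the expectation is over both X and the sample (X_i,Y_i)_{i=1}^ℓ. -/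
open MeasureTheory Filter

/-- A kernel `K : ℝ^M → ℝ` is *regular* with constants `b, ρ > 0` and `κ₀ < ∞` if
`b·1_{‖z‖<ρ} ≤ K(z) ≤ 1` for every `z` and
`∫_{ℝ^M} sup_{u ∈ B(z,ρ)} K(u) dz = κ₀ < ∞`. -/
structure IsRegularKernel {M : ℕ} (K : EuclideanSpace ℝ (Fin M) → ℝ)
    (b ρ κ₀ : ℝ) : Prop where
  b_pos : 0 < b
  rho_pos : 0 < ρ
  measurable : Measurable K
  nonneg : ∀ z, 0 ≤ K z
  lower : ∀ z, ‖z‖ < ρ → b ≤ K z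
  le_one : ∀ z, K z ≤ 1
  lintegral_sup : ∫⁻ z, (⨆ u ∈ Metric.ball z ρ, ENNReal.ofReal (K u))
      = ENNReal.ofReal κ₀

/-- The weight `W_{n,i}(x) = K_h(r(x) − r(X_i)) / ∑_j K_h(r(x) − r(X_j))`
(with `K_h(z) = K(z/h)` and the convention `0/0 = 0`), where the sample points are
`X (ωs j)`, `j = 1,…,ℓ`. -/
noncomputable def kernelWeight {Ω : Type*} {d M : ℕ}
    (K : EuclideanSpace ℝ (Fin M) → ℝ) (h : ℝ)
    (r : (Fin d → ℝ) → EuclideanSpace ℝ (Fin M))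
    (X : Ω → Fin d → ℝ) {ℓ : ℕ} (ωs : Fin ℓ → Ω) (x : Fin d → ℝ) (i : Fin ℓ) : ℝ :=
  K (h⁻¹ • (r x - r (X (ωs i)))) / ∑ j, K (h⁻¹ • (r x - r (X (ωs j))))

/-- The kernel-based consensual aggregation estimator
`g_n(r(x)) = ∑_{i=1}^ℓ W_{n,i}(x)·Y_i`. -/
noncomputable def aggEstimator {Ω : Type*} {d M : ℕ}
    (K : EuclideanSpace ℝ (Fin M) → ℝ) (h : ℝ)
    (r : (Fin d → ℝ) → EuclideanSpace ℝ (Fin M))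
    (X : Ω → Fin d → ℝ) (Y : Ω → ℝ) {ℓ : ℕ} (ωs : Fin ℓ → Ω) (x : Fin d → ℝ) : ℝ :=
  ∑ i, kernelWeight K h r X ωs x i * Y (ωs i)

theorem aux_ae_conv {M : ℕ} (ν : Measure (EuclideanSpace ℝ (Fin M))) [IsProbabilityMeasure ν]
    (s : ℕ → ℝ) (hpos : ∀ ℓ, 0 < s ℓ) (h0 : Tendsto s atTop (nhds 0))
    (hs : Tendsto (fun ℓ : ℕ => (ℓ : ℝ) * s ℓ ^ M) atTop atTop) :
    ∀ᵐ z ∂ν, Tendsto (fun ℓ : ℕ => (ν (Metric.closedBall z (s ℓ))ᶜ) ^ ℓ) atTop (nhds 0) := by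
  filter_upwards [Besicovitch.ae_tendsto_rnDeriv (volume : Measure (EuclideanSpace ℝ (Fin M))) ν,
    Measure.rnDeriv_lt_top (volume : Measure (EuclideanSpace ℝ (Fin M))) ν] with z hz hfin
  set D := (volume : Measure (EuclideanSpace ℝ (Fin M))).rnDeriv ν z with hD
  have hs' : Tendsto s atTop (nhdsWithin 0 (Set.Ioi 0)) :=
    tendsto_nhdsWithin_iff.2 ⟨h0, Eventually.of_forall hpos⟩
  have hC : D + 1 ≠ ⊤ := by simp [hfin.ne]
  have hlt : D < D + 1 := ENNReal.lt_add_right hfin.ne one_ne_zero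
  have hev := (hz.comp hs').eventually_lt_const hlt
  set c := (volume : Measure (EuclideanSpace ℝ (Fin M))).real (Metric.ball 0 1) with hc
  have hcpos : 0 < c := by
    refine ENNReal.toReal_pos (Metric.measure_ball_pos _ _ one_pos).ne' measure_ball_lt_top.ne
  set C := (D + 1).toReal with hCdef
  have hCpos : 0 < C := ENNReal.toReal_pos (by simp) hC
  have key : ∀ᶠ ℓ in atTop, s ℓ ^ M * c ≤ C * ν.real (Metric.closedBall z (s ℓ)) := by
    filter_upwards [hev] with ℓ hℓ
    have h1 := (ENNReal.div_le_iff_le_mul (Or.inr hC) (Or.inl (measure_ne_top ν _))).1 hℓ.le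
    rw [Measure.addHaar_closedBall _ _ (hpos ℓ).le] at h1
    have h2 := ENNReal.toReal_mono (ENNReal.mul_ne_top hC (measure_ne_top ν _)) h1
    rw [ENNReal.toReal_mul, ENNReal.toReal_mul, ENNReal.toReal_ofReal
      (by have := hpos ℓ; positivity)] at h2
    simpa [Measure.real, hc, hCdef] using h2
  have hexp : Tendsto (fun ℓ : ℕ => ENNReal.ofReal (Real.exp (-((c / C) * ((ℓ : ℝ) * s ℓ ^ M)))))
      atTop (nhds 0) := by
    rw [← ENNReal.ofReal_zero]
    refine ENNReal.tendsto_ofReal (Real.tendsto_exp_neg_atTop_nhds_zero.comp ?_)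
    exact hs.const_mul_atTop (by positivity)
  refine tendsto_of_tendsto_of_tendsto_of_le_of_le' tendsto_const_nhds hexp
    (Eventually.of_forall fun _ => zero_le) ?_
  filter_upwards [key] with ℓ hℓ
  set p := ν.real (Metric.closedBall z (s ℓ)) with hp
  have hA : ν (Metric.closedBall z (s ℓ))ᶜ = ENNReal.ofReal (1 - p) := by
    rw [← ofReal_measureReal, probReal_compl_eq_one_sub Metric.isClosed_closedBall.measurableSet]
  have hp1 : p ≤ 1 := measureReal_le_one
  rw [hA, ← ENNReal.ofReal_pow (by linarith)]
  apply ENNReal.ofReal_le_ofReal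
  have h1 : 1 - p ≤ Real.exp (-p) := by linarith [Real.add_one_le_exp (-p)]
  calc (1 - p) ^ ℓ ≤ Real.exp (-p) ^ ℓ := pow_le_pow_left₀ (by linarith) h1 _
    _ = Real.exp (-(ℓ * p)) := by rw [← Real.exp_nat_mul]; ring_nf
    _ ≤ _ := by
      apply Real.exp_le_exp.2
      have h3 : c / C * s ℓ ^ M ≤ p := by
        rw [div_mul_eq_mul_div, div_le_iff₀ hCpos]; linarith
      have := mul_le_mul_of_nonneg_left h3 (Nat.cast_nonneg (α := ℝ) ℓ)
      nlinarith

/-- (Proposition A.3.)  Let `K` be a regular kernel with constants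
`b, ρ, κ₀`, and let `(h_ℓ)` be positive bandwidths with `h_ℓ → 0` and `ℓ·h_ℓ^M → ∞`.
Then, with bandwidth `h_ℓ`,
`E[|G(r(X))·(∑_{i=1}^ℓ W_{n,i}(X) − 1)|²] → 0` as `ℓ → ∞`, the expectation being over
both `X` and the sample `(X_i,Y_i)_{i=1}^ℓ`. -/
theorem aggWeights_mass_term_tendsto_zero
    {Ω : Type*} [MeasurableSpace Ω] (μ : Measure Ω) [IsProbabilityMeasure μ]
    {d M : ℕ} (hM : 0 < M)
    (K : EuclideanSpace ℝ (Fin M) → ℝ) (b ρ κ₀ : ℝ)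
    (hK : IsRegularKernel K b ρ κ₀)
    (X : Ω → Fin d → ℝ) (Y : Ω → ℝ) (hX : Measurable X) (hY : Measurable Y)
    (hY2 : Integrable (fun ω => (Y ω) ^ 2) μ)
    (r : (Fin d → ℝ) → EuclideanSpace ℝ (Fin M)) (hr : Measurable r)
    (hrBdd : ∃ R : ℝ, ∀ x, ‖r x‖ ≤ R)
    (G : EuclideanSpace ℝ (Fin M) → ℝ) (hG : Measurable G)
    (hGCE : (fun ω => G (r (X ω))) =ᵐ[μ]
      μ[Y | MeasurableSpace.comap (fun ω => r (X ω)) inferInstance])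
    (h : ℕ → ℝ) (hpos : ∀ ℓ, 0 < h ℓ)
    (h0 : Tendsto h atTop (nhds 0))
    (hℓh : Tendsto (fun ℓ : ℕ => (ℓ : ℝ) * h ℓ ^ M) atTop atTop) :
    Tendsto (fun ℓ : ℕ =>
        ∫ ω : (Fin ℓ → Ω) × Ω,
          |G (r (X ω.2)) * ((∑ i, kernelWeight K (h ℓ) r X ω.1 (X ω.2) i) - 1)| ^ 2
          ∂((Measure.pi fun _ : Fin ℓ => μ).prod μ))
      atTop (nhds 0) := by
  have hZ : Measurable (fun ω => r (X ω)) := hr.comp hX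
  set Z : Ω → EuclideanSpace ℝ (Fin M) := fun ω => r (X ω) with hZdef
  have hρ := hK.rho_pos
  have hKm := hK.measurable
  set s : ℕ → ℝ := fun ℓ => h ℓ * (ρ / 2) with hsdef
  have hspos : ∀ ℓ, 0 < s ℓ := fun ℓ => mul_pos (hpos ℓ) (by linarith)
  have hs0 : Tendsto s atTop (nhds 0) := by simpa using h0.mul_const (ρ / 2)
  have hsl : Tendsto (fun ℓ : ℕ => (ℓ : ℝ) * s ℓ ^ M) atTop atTop := by
    have : (fun ℓ : ℕ => (ℓ : ℝ) * s ℓ ^ M) = fun ℓ : ℕ => ((ℓ : ℝ) * h ℓ ^ M) * (ρ / 2) ^ M := by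
      funext ℓ; simp only [hsdef, mul_pow]; ring
    rw [this]
    exact hℓh.atTop_mul_const (by positivity)
  have : IsProbabilityMeasure (μ.map Z) := Measure.isProbabilityMeasure_map hZ.aemeasurable
  have hae := ae_of_ae_map hZ.aemeasurable (aux_ae_conv (μ.map Z) s hspos hs0 hsl)
  -- square integrability of G(Z)
  have hG2 : Integrable (fun ω => G (Z ω) ^ 2) μ := by
    have hYL : MemLp Y 2 μ := (memLp_two_iff_integrable_sq hY.aestronglyMeasurable).2 hY2
    have h1 : MemLp (fun ω => G (Z ω)) 2 μ := (memLp_congr_ae hGCE).2 (hYL.condExp (by norm_num))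
    exact h1.integrable_sq
  set g : Ω → ENNReal := fun ω => ENNReal.ofReal (G (Z ω) ^ 2) with hgdef
  have hGZ : Measurable (fun ω => G (Z ω)) := hG.comp hZ
  have hgm : Measurable g := (hGZ.pow_const 2).ennreal_ofReal
  have hgfin : ∫⁻ ω, g ω ∂μ ≠ ⊤ := (hG2.lintegral_lt_top).ne
  set A : ℕ → Ω → Set Ω := fun ℓ ω => Z ⁻¹' (Metric.closedBall (Z ω) (s ℓ))ᶜ with hAdef
  have hAm : ∀ ℓ ω, MeasurableSet (A ℓ ω) := fun ℓ ω =>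
    hZ Metric.isClosed_closedBall.measurableSet.compl
  have hAjm : ∀ ℓ, Measurable (fun ω => μ (A ℓ ω)) := by
    intro ℓ
    have hS : MeasurableSet {q : Ω × Ω | s ℓ < dist (Z q.2) (Z q.1)} :=
      measurableSet_lt measurable_const
        ((hZ.comp measurable_snd).dist (hZ.comp measurable_fst))
    have := measurable_measure_prodMk_left (ν := μ) hS
    convert this using 3 with ω
    ext ω'
    simp [hAdef]
  have hlim : Tendsto (fun ℓ : ℕ => ∫⁻ ω, g ω * μ (A ℓ ω) ^ ℓ ∂μ) atTop (nhds 0) := by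
    have : Tendsto (fun ℓ : ℕ => ∫⁻ ω, g ω * μ (A ℓ ω) ^ ℓ ∂μ) atTop (nhds (∫⁻ ω, 0 ∂μ)) := by
      refine tendsto_lintegral_of_dominated_convergence g
        (fun ℓ => hgm.mul ((hAjm ℓ).pow_const ℓ)) ?_ hgfin ?_
      · intro ℓ
        refine Eventually.of_forall fun ω => ?_
        exact mul_le_of_le_one_right' (pow_le_one₀ zero_le prob_le_one)
      · filter_upwards [hae] with ω hω
        have h2 : ∀ ℓ, μ (A ℓ ω) = (μ.map Z) (Metric.closedBall (Z ω) (s ℓ))ᶜ := fun ℓ =>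
          (Measure.map_apply hZ Metric.isClosed_closedBall.measurableSet.compl).symm
        simp only [h2]
        have := ENNReal.Tendsto.const_mul (a := g ω) hω (Or.inr ENNReal.ofReal_ne_top)
        simpa using this
    simpa using this
  have hmeas : ∀ ℓ : ℕ, Measurable (fun ω : (Fin ℓ → Ω) × Ω =>
      |G (r (X ω.2)) * ((∑ i, kernelWeight K (h ℓ) r X ω.1 (X ω.2) i) - 1)| ^ 2) := by
    intro ℓ
    have hk : ∀ i : Fin ℓ, Measurable (fun ω : (Fin ℓ → Ω) × Ω =>
        K ((h ℓ)⁻¹ • (r (X ω.2) - r (X (ω.1 i))))) := by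
      intro i
      have h1 : Measurable (fun ω : (Fin ℓ → Ω) × Ω => Z ω.2) := hZ.comp measurable_snd
      have h2 : Measurable (fun ω : (Fin ℓ → Ω) × Ω => Z (ω.1 i)) :=
        hZ.comp ((measurable_pi_apply i).comp measurable_fst)
      exact hKm.comp ((h1.sub h2).const_smul ((h ℓ)⁻¹))
    have hw : ∀ i : Fin ℓ, Measurable (fun ω : (Fin ℓ → Ω) × Ω =>
        kernelWeight K (h ℓ) r X ω.1 (X ω.2) i) := by
      intro i
      unfold kernelWeight
      exact (hk i).div (Finset.measurable_sum _ fun j _ => hk j)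
    have := ((hGZ.comp measurable_snd).mul
      ((Finset.measurable_sum Finset.univ fun j _ => hw j).sub_const 1)).abs.pow_const 2
    simpa [Real.norm_eq_abs] using this
  have hbound : ∀ ℓ : ℕ, ∫⁻ ω : (Fin ℓ → Ω) × Ω,
      ENNReal.ofReal (|G (r (X ω.2)) * ((∑ i, kernelWeight K (h ℓ) r X ω.1 (X ω.2) i) - 1)| ^ 2)
      ∂((Measure.pi fun _ : Fin ℓ => μ).prod μ) ≤ ∫⁻ ω, g ω * μ (A ℓ ω) ^ ℓ ∂μ := by
    intro ℓ
    rw [lintegral_prod_symm' _ (hmeas ℓ).ennreal_ofReal]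
    refine lintegral_mono fun ω => ?_
    have hSm : MeasurableSet (Set.univ.pi fun _ : Fin ℓ => A ℓ ω) :=
      MeasurableSet.univ_pi fun _ => hAm ℓ ω
    have hpi : (Measure.pi fun _ : Fin ℓ => μ) (Set.univ.pi fun _ : Fin ℓ => A ℓ ω)
        = μ (A ℓ ω) ^ ℓ := by simp [Measure.pi_pi]
    rw [← hpi, ← lintegral_indicator_const hSm]
    refine lintegral_mono fun ω' => ?_
    set T := ∑ j, K ((h ℓ)⁻¹ • (r (X ω) - r (X (ω' j)))) with hT
    have hsum : ∑ i, kernelWeight K (h ℓ) r X ω' (X ω) i = T / T := by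
      simp only [kernelWeight]
      rw [← Finset.sum_div]
    simp only [hsum]
    by_cases hT0 : T = 0
    · have hmem : ω' ∈ Set.univ.pi fun _ : Fin ℓ => A ℓ ω := by
        intro j _
        have hz := (Finset.sum_eq_zero_iff_of_nonneg (fun j _ => hK.nonneg _)).1 hT0 j
          (Finset.mem_univ j)
        by_contra hcon
        have hd : dist (Z (ω' j)) (Z ω) ≤ s ℓ := by simpa [hAdef] using hcon
        have hlt : ‖(h ℓ)⁻¹ • (r (X ω) - r (X (ω' j)))‖ < ρ := by
          rw [norm_smul, Real.norm_of_nonneg (inv_pos.2 (hpos ℓ)).le,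
            inv_mul_lt_iff₀ (hpos ℓ), ← dist_eq_norm, dist_comm]
          refine lt_of_le_of_lt hd ?_
          exact mul_lt_mul_of_pos_left (by linarith) (hpos ℓ)
        have := hK.lower _ hlt
        have := hK.b_pos
        linarith
      rw [Set.indicator_of_mem hmem]
      simp [hT0, hgdef, hZdef]
    · simp [div_self hT0]
  have hreal := (ENNReal.tendsto_toReal ENNReal.zero_ne_top).comp
    (tendsto_of_tendsto_of_tendsto_of_le_of_le tendsto_const_nhds hlim
      (fun _ => zero_le) hbound)
  rw [ENNReal.toReal_zero] at hreal
  refine hreal.congr fun ℓ => ?_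
  rw [integral_eq_lintegral_of_nonneg_ae (Eventually.of_forall fun _ => by positivity)
    (hmeas ℓ).aestronglyMeasurable]
  rfl
end

section
/- For every natural number M ≥ 1 and every real R > 0 there exists a constant C₀ = C₀(M,R) > 0 such that for every Borel probability measure ν on ℝ^M whose support is contained in the closed Euclidean ball of radius R centered at the origin, and every δ ∈ (0,1], one has ∫ 1/ν(B(y,δ)) ν(dy) ≤ C₀·δ^{−M}, where the integrand takes values in [0,∞] and B(y,δ) is the open Euclidean ball of center y and radius δ (for ν-almost every y one has ν(B(y,δ)) > 0). -/
open MeasureTheory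

/-- For every `M ≥ 1` and `R > 0` there is `C₀ = C₀(M,R) > 0` such that
for every Borel probability measure `ν` on `ℝ^M` supported in the closed ball of radius
`R` centered at the origin, and every `δ ∈ (0,1]`, one has
`∫ 1/ν(B(y,δ)) ν(dy) ≤ C₀·δ^{−M}` (the integrand taking values in `[0,∞]`; moreover for
`ν`-almost every `y` one has `ν(B(y,δ)) > 0`). -/
theorem integral_inv_ball_measure_le
    (M : ℕ) (hM : 1 ≤ M) (R : ℝ) (hR : 0 < R) :
    ∃ C₀ : ℝ, 0 < C₀ ∧
      ∀ ν : Measure (EuclideanSpace ℝ (Fin M)), IsProbabilityMeasure ν →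
        ν (Metric.closedBall 0 R)ᶜ = 0 →
        ∀ δ : ℝ, 0 < δ → δ ≤ 1 →
          (∀ᵐ y ∂ν, 0 < ν (Metric.ball y δ)) ∧
          ∫⁻ y, (ν (Metric.ball y δ))⁻¹ ∂ν ≤ ENNReal.ofReal (C₀ / δ ^ M) := by
  classical
  have hb0 : (volume : Measure (EuclideanSpace ℝ (Fin M))) (Metric.ball 0 (1/2)) ≠ 0 :=
    (Metric.measure_ball_pos _ _ (by norm_num)).ne'
  have hbt : (volume : Measure (EuclideanSpace ℝ (Fin M))) (Metric.ball 0 (1/2)) ≠ ⊤ := measure_ball_lt_top.ne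
  have hK0 : (volume : Measure (EuclideanSpace ℝ (Fin M))) (Metric.closedBall 0 (R+1)) ≠ 0 :=
    (Metric.measure_closedBall_pos _ _ (by linarith)).ne'
  have hKt : (volume : Measure (EuclideanSpace ℝ (Fin M))) (Metric.closedBall 0 (R+1)) ≠ ⊤ :=
    measure_closedBall_lt_top.ne
  refine ⟨((volume : Measure (EuclideanSpace ℝ (Fin M))) (Metric.closedBall 0 (R+1))).toReal /
    ((volume : Measure (EuclideanSpace ℝ (Fin M))) (Metric.ball 0 (1/2))).toReal,
    div_pos (ENNReal.toReal_pos hK0 hKt) (ENNReal.toReal_pos hb0 hbt), ?_⟩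
  intro ν hν hsupp δ hδ hδ1
  have hmeas : ∀ r : ℝ, Measurable (fun y : (EuclideanSpace ℝ (Fin M)) => ν (Metric.ball y r)) := by
    intro r
    have hs : MeasurableSet {p : (EuclideanSpace ℝ (Fin M)) × (EuclideanSpace ℝ (Fin M)) | dist p.2 p.1 < r} :=
      (isOpen_lt (by fun_prop) (by fun_prop)).measurableSet
    exact measurable_measure_prodMk_left hs
  have hvol : ∀ y : (EuclideanSpace ℝ (Fin M)), volume (Metric.ball y (δ/2)) =
      ENNReal.ofReal (δ ^ M) * (volume : Measure (EuclideanSpace ℝ (Fin M))) (Metric.ball 0 (1/2)) := by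
    intro y
    have h := Measure.addHaar_ball_mul_of_pos (volume : Measure (EuclideanSpace ℝ (Fin M))) y hδ (1/2)
    rw [finrank_euclideanSpace_fin] at h
    rw [← h]; congr 2; ring
  have hδM : 0 < δ ^ M := by positivity
  have key : (∫⁻ y, (ν (Metric.ball y δ))⁻¹ ∂ν) *
      (ENNReal.ofReal (δ ^ M) * (volume : Measure (EuclideanSpace ℝ (Fin M))) (Metric.ball 0 (1/2))) ≤
      (volume : Measure (EuclideanSpace ℝ (Fin M))) (Metric.closedBall 0 (R+1)) := by
    have hS : MeasurableSet {p : (EuclideanSpace ℝ (Fin M)) × (EuclideanSpace ℝ (Fin M)) | dist p.2 p.1 < δ/2} :=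
      (isOpen_lt (by fun_prop) (by fun_prop)).measurableSet
    let F : (EuclideanSpace ℝ (Fin M)) → (EuclideanSpace ℝ (Fin M)) → ENNReal := fun y x =>
      {p : (EuclideanSpace ℝ (Fin M)) × (EuclideanSpace ℝ (Fin M)) | dist p.2 p.1 < δ/2}.indicator
        (fun p => (ν (Metric.ball p.2 (δ/2)))⁻¹) (y, x)
    have hF : Measurable (Function.uncurry F) :=
      (((hmeas (δ/2)).comp measurable_snd).inv).indicator hS
    calc _ = ∫⁻ y, (ν (Metric.ball y δ))⁻¹ * volume (Metric.ball y (δ/2)) ∂ν := by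
          simp_rw [hvol]
          exact (lintegral_mul_const _ (hmeas δ).inv).symm
      _ ≤ ∫⁻ y, ∫⁻ x, F y x ∂volume ∂ν := by
          refine lintegral_mono fun y => ?_
          rw [← lintegral_indicator_const Metric.isOpen_ball.measurableSet]
          refine lintegral_mono fun x => ?_
          by_cases hx : dist x y < δ/2
          · have h1 : x ∈ Metric.ball y (δ/2) := hx
            have h2 : F y x = (ν (Metric.ball x (δ/2)))⁻¹ :=
              by
                simp only [F, Set.indicator, Set.mem_setOf_eq, hx, if_true]
            rw [Set.indicator_of_mem h1, h2, ENNReal.inv_le_inv]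
            exact measure_mono (Metric.ball_subset_ball' (by linarith))
          · have h1 : x ∉ Metric.ball y (δ/2) := hx
            rw [Set.indicator_of_notMem h1]
            exact zero_le
      _ = ∫⁻ x, ∫⁻ y, F y x ∂ν ∂volume := lintegral_lintegral_swap hF.aemeasurable
      _ ≤ ∫⁻ x, (Metric.closedBall (0:(EuclideanSpace ℝ (Fin M))) (R+1)).indicator (fun _ => 1) x ∂volume := by
          refine lintegral_mono fun x => ?_
          have h2 : ∀ y, F y x = (Metric.ball x (δ/2)).indicator
              (fun _ => (ν (Metric.ball x (δ/2)))⁻¹) y := by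
            intro y
            simp only [F, Set.indicator, Set.mem_setOf_eq, Metric.mem_ball, dist_comm]
          simp_rw [h2]
          rw [lintegral_indicator_const Metric.isOpen_ball.measurableSet]
          by_cases hx : x ∈ Metric.closedBall (0:(EuclideanSpace ℝ (Fin M))) (R+1)
          · rw [Set.indicator_of_mem hx]
            exact ENNReal.inv_mul_le_one _
          · have h0 : ν (Metric.ball x (δ/2)) = 0 := by
              refine measure_mono_null ?_ hsupp
              intro y hy hy2
              apply hx
              rw [Metric.mem_closedBall] at hy2 ⊢
              rw [Metric.mem_ball, dist_comm] at hy
              linarith [dist_triangle x y 0]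
            rw [h0, mul_zero]; exact zero_le
      _ = _ := by
          rw [lintegral_indicator_const Metric.isClosed_closedBall.measurableSet, one_mul]
  have main : ∫⁻ y, (ν (Metric.ball y δ))⁻¹ ∂ν ≤ ENNReal.ofReal
      (((volume : Measure (EuclideanSpace ℝ (Fin M))) (Metric.closedBall 0 (R+1))).toReal /
    ((volume : Measure (EuclideanSpace ℝ (Fin M))) (Metric.ball 0 (1/2))).toReal / δ ^ M) := by
    have hbp := ENNReal.toReal_pos hb0 hbt
    rw [div_div, ENNReal.ofReal_div_of_pos (by positivity), ENNReal.ofReal_toReal hKt,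
      ENNReal.ofReal_mul hbp.le, ENNReal.ofReal_toReal hbt,
      ENNReal.le_div_iff_mul_le, mul_comm ((volume : Measure (EuclideanSpace ℝ (Fin M))) (Metric.ball 0 (1/2)))]
    · exact key
    · left
      exact mul_ne_zero hb0 (by simpa using hδM)
    · left
      exact ENNReal.mul_ne_top hbt ENNReal.ofReal_ne_top
  refine ⟨?_, main⟩
  have hlt := ae_lt_top (hmeas δ).inv (ne_top_of_le_ne_top ENNReal.ofReal_ne_top main)
  filter_upwards [hlt] with y hy
  simpa [pos_iff_ne_zero] using hy
end

section
/- For every natural number M ≥ 1 and every ρ > 0 there exist a countable family of points (x_i)_{i≥1} in ℝ^M and a constant C = C(M,ρ) > 0 such that the open balls B(x_i, ρ/2) cover ℝ^M and, for every function K : ℝ^M → [0,∞], Σ_{i≥1} sup_{u ∈ B(x_i, ρ/2)} K(u) ≤ C · ∫⁻_{ℝ^M} sup_{u ∈ B(z,ρ)} K(u) dz, where ∫⁻ denotes the lower Lebesgue integral with respect to Lebesgue measure on ℝ^M (so that no measurability of the integrand is required). -/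
open MeasureTheory
open scoped ENNReal

/-- For every `M ≥ 1` and `ρ > 0` there exist a countable family of
points `(x_i)` in `ℝ^M` and a constant `C = C(M,ρ) > 0` such that the balls `B(x_i,ρ/2)`
cover `ℝ^M` and, for every function `K : ℝ^M → [0,∞]`,
`∑_i sup_{u ∈ B(x_i,ρ/2)} K(u) ≤ C·∫⁻_{ℝ^M} sup_{u ∈ B(z,ρ)} K(u) dz`,
where `∫⁻` is the lower Lebesgue integral (no measurability of the integrand needed). -/
theorem tsum_sup_ball_le_lintegral_sup
    (M : ℕ) (hM : 1 ≤ M) (ρ : ℝ) (hρ : 0 < ρ) :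
    ∃ (x : ℕ → EuclideanSpace ℝ (Fin M)) (C : ℝ), 0 < C ∧
      (⋃ i, Metric.ball (x i) (ρ / 2)) = Set.univ ∧
      ∀ K : EuclideanSpace ℝ (Fin M) → ℝ≥0∞,
        (∑' i, ⨆ u ∈ Metric.ball (x i) (ρ / 2), K u)
          ≤ ENNReal.ofReal C * ∫⁻ z, ⨆ u ∈ Metric.ball z ρ, K u := by
  classical
  let E := EuclideanSpace ℝ (Fin M)
  have : Nonempty (Fin M) := ⟨⟨0, hM⟩⟩
  obtain ⟨S, hS⟩ : ∃ S : Set E, Maximal (· ∈ {s : Set E | s.Pairwise fun a b => ρ / 2 ≤ dist a b}) S := by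
    apply zorn_subset
    intro c hc hchain
    refine ⟨⋃₀ c, ?_, fun s hs => Set.subset_sUnion_of_mem hs⟩
    exact (Set.pairwise_sUnion hchain.directedOn).2 hc
  have hsep : S.Pairwise fun a b => ρ / 2 ≤ dist a b := hS.prop
  have hcov : ∀ z : E, ∃ a ∈ S, dist z a < ρ / 2 := by
    intro z
    by_contra! h
    have hz : z ∈ S := by
      have h1 : insert z S ∈ {s : Set E | s.Pairwise fun a b => ρ / 2 ≤ dist a b} := by
        refine hsep.insert ?_
        intro b hb _
        exact ⟨h b hb, by rw [dist_comm]; exact h b hb⟩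
      exact hS.le_of_ge h1 (Set.subset_insert z S) (Set.mem_insert z S)
    have := h z hz
    rw [dist_self] at this
    linarith
  have hdisj : S.PairwiseDisjoint fun a => Metric.ball a (ρ / 4) := by
    intro a ha b hb hab
    apply Metric.ball_disjoint_ball
    have := hsep ha hb hab
    linarith
  have hcount : S.Countable :=
    hdisj.countable_of_isOpen (fun _ _ => Metric.isOpen_ball)
      (fun a _ => ⟨a, Metric.mem_ball_self (by positivity)⟩)
  have hinf : S.Infinite := by
    intro hfin
    have hb : Bornology.IsBounded (⋃ a ∈ S, Metric.ball a (ρ / 2)) :=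
      (Bornology.isBounded_biUnion hfin).2 fun _ _ => Metric.isBounded_ball
    have hu : (⋃ a ∈ S, Metric.ball a (ρ / 2)) = Set.univ := by
      ext z
      simpa using hcov z
    rw [hu] at hb
    exact NormedSpace.unbounded_univ ℝ E hb
  have : Countable S := hcount.to_subtype
  have : Infinite S := hinf.to_subtype
  obtain ⟨e⟩ : Nonempty (ℕ ≃ S) := by
    obtain ⟨d⟩ := nonempty_denumerable S
    exact ⟨(Denumerable.eqv S).symm⟩
  let v : ℝ≥0∞ := volume (Metric.ball (0 : E) (ρ / 4))
  have hv0 : v ≠ 0 := (Metric.measure_ball_pos volume (0 : E) (by positivity)).ne'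
  have hvt : v ≠ ∞ := measure_ball_lt_top.ne
  have hvp : 0 < v.toReal := ENNReal.toReal_pos hv0 hvt
  refine ⟨fun i => (e i : E), v.toReal⁻¹, inv_pos.2 hvp, ?_, ?_⟩
  · ext z
    obtain ⟨a, ha, hz⟩ := hcov z
    simp only [Set.mem_iUnion, Set.mem_univ, iff_true]
    exact ⟨e.symm ⟨a, ha⟩, by simpa using hz⟩
  · intro K
    rw [ENNReal.ofReal_inv_of_pos hvp, ENNReal.ofReal_toReal hvt, mul_comm, ← div_eq_mul_inv,
      ENNReal.le_div_iff_mul_le (Or.inl hv0) (Or.inl hvt), ← ENNReal.tsum_mul_right]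
    have hd : Pairwise (Function.onFun Disjoint fun i => Metric.ball (e i : E) (ρ / 4)) := by
      intro i j hij
      exact hdisj (e i).2 (e j).2 fun h => hij (e.injective (Subtype.ext h))
    calc _ ≤ ∑' i, ∫⁻ z in Metric.ball (e i : E) (ρ / 4), ⨆ u ∈ Metric.ball z ρ, K u := by
          refine ENNReal.tsum_le_tsum fun i => ?_
          have hvi : v = volume (Metric.ball (e i : E) (ρ / 4)) :=
            (Measure.addHaar_ball_center volume (e i : E) (ρ / 4)).symm
          rw [hvi, ← setLIntegral_const]
          refine setLIntegral_mono' measurableSet_ball fun z hz => ?_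
          refine biSup_mono fun u hu => ?_
          rw [Metric.mem_ball] at *
          have := dist_triangle_right u z (e i : E)
          linarith
      _ = ∫⁻ z in ⋃ i, Metric.ball (e i : E) (ρ / 4), ⨆ u ∈ Metric.ball z ρ, K u :=
          (lintegral_iUnion (fun _ => measurableSet_ball) hd _).symm
      _ ≤ _ := setLIntegral_le_lintegral _ _
end

section
/- For every natural number M ≥ 1 and every real R > 0 there exists a constant C₀ = C₀(M,R) > 0 such that for every Borel probability measure ν on ℝ^M whose support is contained in the closed Euclidean ball of radius R centered at the origin, every δ ∈ (0,1], and every integer n ≥ 1, one has ∫ (1 − ν(B(y,δ)))^n ν(dy) ≤ C₀/(n·δ^M). In particular, if Z, Z_1,…,Z_n are i.i.d. with law ν, the probability that every Z_j lies at Euclidean distance at least δ from Z is at most C₀/(n·δ^M). -/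
open MeasureTheory

lemma aux_pow (p : ℝ) (h0 : 0 ≤ p) (h1 : p ≤ 1) (n : ℕ) (hn : 1 ≤ n) :
    (1 - p) ^ n * p ≤ 1 / n := by
  have hn' : (0 : ℝ) < n := by exact_mod_cast hn
  rw [le_div_iff₀ hn']
  have hb : 1 + (n : ℝ) * p ≤ (1 + p) ^ n := one_add_mul_le_pow (by linarith) n
  have h2 : (1 - p) ^ n * (1 + p) ^ n ≤ 1 := by
    rw [← mul_pow]
    exact pow_le_one₀ (mul_nonneg (by linarith) (by linarith)) (by nlinarith)
  have h3 : 0 ≤ (1 - p) ^ n := pow_nonneg (by linarith) n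
  nlinarith

lemma aux_enn {E : Type*} [MeasurableSpace E] (ν : Measure E) [IsProbabilityMeasure ν]
    (s : Set E) (n : ℕ) (hn : 1 ≤ n) :
    (1 - ν s) ^ n * ν s ≤ ENNReal.ofReal (1 / n) := by
  have h1 : ν s ≤ 1 := prob_le_one
  have ht : ν s ≠ ⊤ := measure_ne_top _ _
  have := aux_pow (ν s).toReal ENNReal.toReal_nonneg
    (by simpa using ENNReal.toReal_mono ENNReal.one_ne_top h1) n hn
  refine le_trans (le_of_eq ?_) (ENNReal.ofReal_le_ofReal this)
  have h4 : 1 - ν s = ENNReal.ofReal (1 - (ν s).toReal) := by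
    rw [ENNReal.ofReal_sub _ ENNReal.toReal_nonneg, ENNReal.ofReal_toReal ht, ENNReal.ofReal_one]
  have h5 : 0 ≤ 1 - (ν s).toReal := by
    have := ENNReal.toReal_mono ENNReal.one_ne_top h1
    simp only [ENNReal.toReal_one] at this
    linarith
  rw [ENNReal.ofReal_mul (pow_nonneg h5 n), ENNReal.ofReal_pow h5, ← h4, ENNReal.ofReal_toReal ht]

lemma aux_cover (M : ℕ) (R : ℝ) (hR : 0 < R) (δ : ℝ) (hδ : 0 < δ) (hδ1 : δ ≤ 1) :
    ∃ (ι : Type) (s : Finset ι) (A : ι → Set (EuclideanSpace ℝ (Fin M))),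
      (∀ i, MeasurableSet (A i)) ∧
      (∀ i, ∀ x ∈ A i, ∀ y ∈ A i, dist x y < δ) ∧
      (Metric.closedBall 0 R ⊆ ⋃ i ∈ s, A i) ∧
      (s.card : ℝ) ≤ (2 * R * (M + 1) + 3) ^ M / δ ^ M := by
  set h : ℝ := δ / (M + 1) with hh
  have hM : (0 : ℝ) < M + 1 := by positivity
  have hpos : 0 < h := by positivity
  set K : ℕ := ⌈R / h⌉₊ with hK
  refine ⟨Fin M → ℤ, Fintype.piFinset fun _ => Finset.Icc (-(K : ℤ)) K,
    fun k => {y | ∀ i, ⌊y i / h⌋ = k i}, ?_, ?_, ?_, ?_⟩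
  · intro k
    beta_reduce
    rw [Set.ofPred_forall]
    refine MeasurableSet.iInter fun i => ?_
    have hm : Measurable fun y : EuclideanSpace ℝ (Fin M) => ⌊y i / h⌋ :=
      Int.measurable_floor.comp (by fun_prop)
    exact hm (measurableSet_singleton (k i))
  · intro k x hx y hy
    rw [EuclideanSpace.dist_eq, Real.sqrt_lt' hδ]
    have hc : ∀ i, dist (x i) (y i) ^ 2 ≤ h ^ 2 := by
      intro i
      have := Int.abs_sub_lt_one_of_floor_eq_floor ((hx i).trans (hy i).symm)
      rw [← sub_div, abs_div, abs_of_pos hpos, div_lt_one hpos] at this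
      rw [Real.dist_eq]
      exact pow_le_pow_left₀ (abs_nonneg _) this.le 2
    calc _ ≤ ∑ i : Fin M, h ^ 2 := Finset.sum_le_sum fun i _ => hc i
      _ = M * h ^ 2 := by simp
      _ < δ ^ 2 := by
        have : δ = h * (M + 1) := by rw [hh]; field_simp
        rw [this]
        have hMn : (0 : ℝ) ≤ M := Nat.cast_nonneg M
        have : 0 < h ^ 2 := by positivity
        nlinarith [mul_nonneg this.le hMn, mul_nonneg this.le (sq_nonneg (M : ℝ))]
  · intro y hy
    simp only [Set.mem_iUnion]
    refine ⟨fun i => ⌊y i / h⌋, ?_, fun i => rfl⟩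
    rw [Fintype.mem_piFinset]
    intro i
    have h1 : |y i| ≤ R := by
      have := PiLp.norm_apply_le y i
      rw [Real.norm_eq_abs] at this
      exact this.trans (by simpa using hy)
    have hRK : R / h ≤ K := Nat.le_ceil _
    obtain ⟨h2, h3⟩ := abs_le.mp h1
    have h4 : y i / h ≤ K := (div_le_div_of_nonneg_right h3 hpos.le).trans hRK
    have h5 : -(K : ℝ) ≤ y i / h := by
      have := div_le_div_of_nonneg_right h2 hpos.le
      rw [neg_div] at this
      linarith
    rw [Finset.mem_Icc]
    constructor
    · rw [Int.le_floor]; push_cast; exact h5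
    · have : ((⌊y i / h⌋ : ℤ) : ℝ) ≤ ((K : ℤ) : ℝ) := (Int.floor_le _).trans (by exact_mod_cast h4)
      exact_mod_cast this
  · rw [Fintype.card_piFinset, ← div_pow]
    simp only [Finset.prod_const, Finset.card_univ, Fintype.card_fin, Int.card_Icc]
    push_cast
    refine pow_le_pow_left₀ (by positivity) ?_ M
    have e : ((K : ℤ) + 1 - -(K : ℤ)).toNat = 2 * K + 1 := by omega
    rw [e]
    push_cast
    have hKl : (K : ℝ) < R / h + 1 := Nat.ceil_lt_add_one (by positivity)
    have hRh : R / h = R * (M + 1) / δ := by rw [hh]; field_simp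
    rw [hRh] at hKl
    have : (3 : ℝ) ≤ 3 / δ := by rw [le_div_iff₀ hδ]; linarith
    have e2 : (2 * R * (M + 1) + 3) / δ = 2 * (R * (M + 1) / δ) + 3 / δ := by ring
    rw [e2]; linarith

lemma aux_lint (M : ℕ) (R : ℝ) (hR : 0 < R)
    (ν : Measure (EuclideanSpace ℝ (Fin M))) [IsProbabilityMeasure ν]
    (hν : ν (Metric.closedBall 0 R)ᶜ = 0)
    (δ : ℝ) (hδ : 0 < δ) (hδ1 : δ ≤ 1) (n : ℕ) (hn : 1 ≤ n) :
    ∫⁻ y, (1 - ν (Metric.ball y δ)) ^ n ∂ν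
      ≤ ENNReal.ofReal ((2 * R * (M + 1) + 3) ^ M / (n * δ ^ M)) := by
  obtain ⟨ι, s, A, hA, hd, hc, hcard⟩ := aux_cover M R hR δ hδ hδ1
  have hn' : (0 : ℝ) < n := by exact_mod_cast hn
  have hae : ∀ᵐ y ∂ν, y ∈ ⋃ i ∈ s, A i := by
    have : ∀ᵐ y ∂ν, y ∈ Metric.closedBall (0 : EuclideanSpace ℝ (Fin M)) R := hν
    exact this.mono fun y hy => hc hy
  calc ∫⁻ y, (1 - ν (Metric.ball y δ)) ^ n ∂ν
      ≤ ∫⁻ y, ∑ i ∈ s, (A i).indicator (fun _ => (1 - ν (A i)) ^ n) y ∂ν := by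
        refine lintegral_mono_ae (hae.mono fun y hy => ?_)
        simp only [Set.mem_iUnion] at hy
        obtain ⟨i, his, hy⟩ := hy
        have hsub : A i ⊆ Metric.ball y δ := fun x hx => hd i x hx y hy
        refine le_trans ?_ (Finset.single_le_sum
          (f := fun i => (A i).indicator (fun _ => (1 - ν (A i)) ^ n) y)
          (fun _ _ => zero_le) his)
        simp only [Set.indicator_of_mem hy]
        gcongr
    _ = ∑ i ∈ s, (1 - ν (A i)) ^ n * ν (A i) := by
        rw [lintegral_finsetSum _ fun i _ => measurable_const.indicator (hA i)]
        exact Finset.sum_congr rfl fun i _ => lintegral_indicator_const (hA i) _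
    _ ≤ ∑ i ∈ s, ENNReal.ofReal (1 / n) := Finset.sum_le_sum fun i _ => aux_enn ν _ n hn
    _ = ENNReal.ofReal (s.card * (1 / n)) := by
        rw [Finset.sum_const, nsmul_eq_mul, ENNReal.ofReal_mul (by positivity),
          ENNReal.ofReal_natCast]
    _ ≤ _ := by
        apply ENNReal.ofReal_le_ofReal
        calc (s.card : ℝ) * (1 / n) ≤ (2 * R * (M + 1) + 3) ^ M / δ ^ M * (1 / n) := by gcongr
          _ = _ := by field_simp

theorem integral_one_sub_ball_pow_le
    (M : ℕ) (hM : 1 ≤ M) (R : ℝ) (hR : 0 < R) :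
    ∃ C₀ : ℝ, 0 < C₀ ∧
      ∀ ν : Measure (EuclideanSpace ℝ (Fin M)), IsProbabilityMeasure ν →
        ν (Metric.closedBall 0 R)ᶜ = 0 →
        ∀ δ : ℝ, 0 < δ → δ ≤ 1 → ∀ n : ℕ, 1 ≤ n →
          (∫ y, (1 - (ν (Metric.ball y δ)).toReal) ^ n ∂ν ≤ C₀ / (n * δ ^ M)) ∧
          ν.prod (Measure.pi fun _ : Fin n => ν)
              {p : EuclideanSpace ℝ (Fin M) × (Fin n → EuclideanSpace ℝ (Fin M)) |
                ∀ j, δ ≤ dist (p.2 j) p.1}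
            ≤ ENNReal.ofReal (C₀ / (n * δ ^ M)) := by

  refine ⟨(2 * R * (M + 1) + 3) ^ M, by positivity, ?_⟩
  intro ν hP hν δ hδ hδ1 n hn
  have key := aux_lint M R hR ν hν δ hδ hδ1 n hn
  constructor
  · have h0 : (0 : ℝ) ≤ (2 * R * (M + 1) + 3) ^ M / (n * δ ^ M) := by positivity
    refine (le_abs_self _).trans ?_
    rw [← ENNReal.ofReal_le_ofReal_iff h0, ← Real.enorm_eq_ofReal_abs]
    refine (enorm_integral_le_lintegral_enorm _).trans (le_trans (le_of_eq ?_) key)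
    refine lintegral_congr fun y => ?_
    have ht : ν (Metric.ball y δ) ≠ ⊤ := measure_ne_top _ _
    have h1 : ν (Metric.ball y δ) ≤ 1 := prob_le_one
    have h5 : 0 ≤ 1 - (ν (Metric.ball y δ)).toReal := by
      have := ENNReal.toReal_mono ENNReal.one_ne_top h1
      simp only [ENNReal.toReal_one] at this
      linarith
    rw [Real.enorm_eq_ofReal (pow_nonneg h5 n), ENNReal.ofReal_pow h5,
      ENNReal.ofReal_sub _ ENNReal.toReal_nonneg, ENNReal.ofReal_toReal ht, ENNReal.ofReal_one]
  · have hm : MeasurableSet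
        {p : EuclideanSpace ℝ (Fin M) × (Fin n → EuclideanSpace ℝ (Fin M)) |
                ∀ j, δ ≤ dist (p.2 j) p.1} := by
      rw [Set.ofPred_forall]
      exact MeasurableSet.iInter fun j => measurableSet_le measurable_const
        (Measurable.dist (by fun_prop) (by fun_prop))
    rw [Measure.prod_apply hm]
    refine le_trans (le_of_eq (lintegral_congr fun y => ?_)) key
    have : (Prod.mk y ⁻¹' {p : EuclideanSpace ℝ (Fin M) × (Fin n → EuclideanSpace ℝ (Fin M)) |
                ∀ j, δ ≤ dist (p.2 j) p.1}) = Set.univ.pi fun _ => (Metric.ball y δ)ᶜ := by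
      ext x; simp
    rw [this, Measure.pi_pi]
    simp [prob_compl_eq_one_sub Metric.isOpen_ball.measurableSet]
end

section
/- Let K be a regular kernel with constants b, ρ, κ₀ that moreover satisfies the tail bound K(z) ≤ C_K·exp(−‖z‖^α) for all z ∈ ℝ^M with ‖z‖ ≥ R_K, for some constants α, R_K, C_K > 0. Assume |Y| ≤ R almost surely and ‖r(x)‖ ≤ R for all x ∈ ℝ^d, for some constant R > 0, and assume there exist L ≥ 0 and an L-Lipschitz function G : ℝ^M → ℝ such that G(r(X)) is a version of E[Y | r(X)]. Then, choosing the bandwidth h = ℓ^{−1/(M+2)}, there exists a constant C > 0 independent of ℓ such that E[|g_n(r(X)) − G(r(X))|²] ≤ C·ℓ^{−2/(M+2)} for every ℓ ≥ 1, where the expectation is over both X and the sample (X_i,Y_i)_{i=1}^ℓ. -/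
open MeasureTheory Filter

namespace AggAux

open scoped ENNReal

/-- covering-type lemma -/
theorem covering {M : ℕ} (ν : Measure (EuclideanSpace ℝ (Fin M))) [SFinite ν]
    (s : ℝ) (hs : 0 < s) (f F : EuclideanSpace ℝ (Fin M) → ℝ≥0∞)
    (hf : Measurable f) (p : EuclideanSpace ℝ (Fin M) → ℝ≥0∞) (hp : Measurable p)
    (hpν : ∀ z, p z = ν (Metric.ball z (2 * s)))
    (hfF : ∀ z c, dist z c < s → f z ≤ F c) :
    ∫⁻ z, f z * (p z)⁻¹ ∂ν ≤ (volume (Metric.ball (0 : EuclideanSpace ℝ (Fin M)) s))⁻¹ * ∫⁻ c, F c := by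
  set V := volume (Metric.ball (0 : EuclideanSpace ℝ (Fin M)) s) with hV
  have hV0 : V ≠ 0 := (Metric.measure_ball_pos volume _ hs).ne'
  have hVt : V ≠ ⊤ := measure_ball_lt_top.ne
  have hmeas : Measurable (fun q : EuclideanSpace ℝ (Fin M) × EuclideanSpace ℝ (Fin M) =>
      {q : EuclideanSpace ℝ (Fin M) × EuclideanSpace ℝ (Fin M) | dist q.1 q.2 < s}.indicator
        (fun q => f q.1 * (p q.1)⁻¹) q) := by
    apply Measurable.indicator
    · exact (hf.comp measurable_fst).mul ((hp.comp measurable_fst).inv)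
    · exact measurableSet_lt (measurable_fst.dist measurable_snd) measurable_const
  have h1 : ∫⁻ z, ∫⁻ c, {q : EuclideanSpace ℝ (Fin M) × EuclideanSpace ℝ (Fin M) | dist q.1 q.2 < s}.indicator
        (fun q => f q.1 * (p q.1)⁻¹) (z, c) ∂volume ∂ν = ∫⁻ z, V * (f z * (p z)⁻¹) ∂ν := by
    apply lintegral_congr
    intro z
    have : (fun c => {q : EuclideanSpace ℝ (Fin M) × EuclideanSpace ℝ (Fin M) | dist q.1 q.2 < s}.indicator
        (fun q => f q.1 * (p q.1)⁻¹) (z, c)) = (Metric.ball z s).indicator (fun _ => f z * (p z)⁻¹) := by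
      ext c
      simp only [Set.indicator, Set.mem_ofPred_eq, Metric.mem_ball, dist_comm c z]
    rw [this, lintegral_indicator_const measurableSet_ball, mul_comm]
    congr 1
    rw [hV, Measure.addHaar_ball_center]
  have h2 : ∫⁻ z, ∫⁻ c, {q : EuclideanSpace ℝ (Fin M) × EuclideanSpace ℝ (Fin M) | dist q.1 q.2 < s}.indicator
        (fun q => f q.1 * (p q.1)⁻¹) (z, c) ∂volume ∂ν ≤ ∫⁻ c, F c := by
    rw [lintegral_lintegral_swap (f := fun z c => {q : EuclideanSpace ℝ (Fin M) × EuclideanSpace ℝ (Fin M) | dist q.1 q.2 < s}.indicator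
        (fun q => f q.1 * (p q.1)⁻¹) (z, c)) hmeas.aemeasurable]
    apply lintegral_mono
    intro c
    have hle : ∀ z, {q : EuclideanSpace ℝ (Fin M) × EuclideanSpace ℝ (Fin M) | dist q.1 q.2 < s}.indicator
        (fun q => f q.1 * (p q.1)⁻¹) (z, c) ≤ (Metric.ball c s).indicator (fun _ => F c * (ν (Metric.ball c s))⁻¹) z := by
      intro z
      by_cases hz : dist z c < s
      · rw [Set.indicator_of_mem (by exact hz), Set.indicator_of_mem (by exact hz)]
        simp only
        gcongr
        · exact hfF z c hz
        · rw [hpν]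
          apply measure_mono
          apply Metric.ball_subset_ball'
          rw [dist_comm]; linarith
      · rw [Set.indicator_of_notMem (by exact hz)]
        exact zero_le
    calc _ ≤ ∫⁻ z, (Metric.ball c s).indicator (fun _ => F c * (ν (Metric.ball c s))⁻¹) z ∂ν :=
          lintegral_mono hle
      _ = F c * ((ν (Metric.ball c s))⁻¹ * ν (Metric.ball c s)) := by
          rw [lintegral_indicator_const measurableSet_ball, mul_assoc]
      _ ≤ F c * 1 := by gcongr; exact ENNReal.inv_mul_le_one _
      _ = F c := mul_one _
  rw [h1, lintegral_const_mul' _ _ hVt] at h2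
  rw [← ENNReal.div_eq_inv_mul, ENNReal.le_div_iff_mul_le (Or.inl hV0) (Or.inl hVt), mul_comm]
  exact h2

theorem kernel_bound {M : ℕ} (K : EuclideanSpace ℝ (Fin M) → ℝ) (h0 : ∀ z, 0 ≤ K z) (h1 : ∀ z, K z ≤ 1)
    (α R_K C_K : ℝ) (hα : 0 < α) (hC_K : 0 < C_K)
    (htail : ∀ z : EuclideanSpace ℝ (Fin M), R_K ≤ ‖z‖ →
      K z ≤ C_K * Real.exp (-‖z‖ ^ α)) :
    ∃ C : ℝ, 0 < C ∧ ∀ v, K v * ‖v‖ ^ 2 ≤ C * (1 + ‖v‖) ^ (-((M : ℝ) + 1)) := by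
  obtain ⟨m, hm⟩ := exists_nat_gt (((M : ℝ) + 3) / α)
  set T := max R_K 1 with hT
  have hT1 : 1 ≤ T := le_max_right _ _
  refine ⟨(1 + T) ^ (M + 3) + C_K * m.factorial * 2 ^ (M + 3), by positivity, fun v => ?_⟩
  have hv : 0 ≤ ‖v‖ := norm_nonneg v
  set t := ‖v‖ with ht
  have e : (1 + t) ^ (-((M : ℝ) + 1)) = ((1 + t) ^ (M + 1))⁻¹ := by
    rw [Real.rpow_neg (by positivity)]
    congr 1
    rw [← Real.rpow_natCast]; push_cast; rfl
  rw [e, ← div_eq_mul_inv, le_div_iff₀ (by positivity)]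
  have h3 : K v * t ^ 2 * (1 + t) ^ (M + 1) ≤ K v * (1 + t) ^ (M + 3) := by
    have : t ^ 2 ≤ (1 + t) ^ 2 := by gcongr; linarith
    calc _ ≤ K v * (1 + t) ^ 2 * (1 + t) ^ (M + 1) := by
          have := h0 v
          gcongr
      _ = _ := by ring
  refine h3.trans ?_
  by_cases hc : t ≤ T
  · have : K v * (1 + t) ^ (M + 3) ≤ 1 * (1 + T) ^ (M + 3) := by
      gcongr
      exact h1 v
    have h4 : 0 ≤ C_K * m.factorial * 2 ^ (M + 3) := by positivity
    linarith
  · push Not at hc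
    have ht1 : 1 ≤ t := by linarith
    have hk := htail v ((le_max_left _ _).trans hc.le)
    rw [← ht] at hk
    have hexp : Real.exp (-t ^ α) * t ^ (M + 3) ≤ m.factorial := by
      have h5 := Real.pow_div_factorial_le_exp (t ^ α) (by positivity) m
      rw [div_le_iff₀ (by positivity)] at h5
      have h6 : t ^ (M + 3) ≤ (t ^ α) ^ m := by
        rw [← Real.rpow_natCast, ← Real.rpow_natCast, ← Real.rpow_mul hv]
        apply Real.rpow_le_rpow_of_exponent_le ht1
        rw [div_lt_iff₀ hα] at hm
        push_cast
        linarith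
      rw [Real.exp_neg, inv_mul_le_iff₀ (Real.exp_pos _)]
      linarith
    have h7 : (1 + t) ^ (M + 3) ≤ 2 ^ (M + 3) * t ^ (M + 3) := by
      rw [← mul_pow]; gcongr; linarith
    have h8 : 0 ≤ (1 + T) ^ (M + 3) := by positivity
    calc K v * (1 + t) ^ (M + 3) ≤ (C_K * Real.exp (-t ^ α)) * (2 ^ (M + 3) * t ^ (M + 3)) := by
          gcongr
      _ = C_K * 2 ^ (M + 3) * (Real.exp (-t ^ α) * t ^ (M + 3)) := by ring
      _ ≤ C_K * 2 ^ (M + 3) * m.factorial := by gcongr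
      _ ≤ _ := by linarith

theorem weights_sq {ι : Type*} [Fintype ι] (k n : ι → ℝ) (b : ℝ) (hb : 0 < b)
    (hk0 : ∀ i, 0 ≤ k i) (hk1 : ∀ i, k i ≤ 1) (hn : ∀ i, n i = 0 ∨ n i = 1)
    (hbn : ∀ i, b * n i ≤ k i) :
    ∑ i, (k i / ∑ j, k j) ^ 2 ≤ (1 + 2 / b) * (1 + ∑ j, n j)⁻¹ := by
  set S := ∑ j, k j with hS
  set N := ∑ j, n j with hN
  have hS0 : 0 ≤ S := Finset.sum_nonneg fun i _ => hk0 i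
  have hn0 : ∀ i, 0 ≤ n i := fun i => by rcases hn i with h | h <;> rw [h] <;> norm_num
  have hN0 : 0 ≤ N := Finset.sum_nonneg fun i _ => hn0 i
  have hSN : b * N ≤ S := by rw [hN, Finset.mul_sum]; exact Finset.sum_le_sum fun i _ => hbn i
  have hle1 : ∀ i, k i / S ≤ 1 := fun i =>
    div_le_one_of_le₀ (Finset.single_le_sum (fun j _ => hk0 j) (Finset.mem_univ i)) hS0
  have hsum1 : ∑ i, k i / S ≤ 1 := by rw [← Finset.sum_div]; exact div_self_le_one _
  by_cases h : ∀ i, n i = 0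
  · have : N = 0 := by simp [hN, h]
    rw [this]
    have : ∑ i, (k i / S) ^ 2 ≤ 1 := by
      refine le_trans (Finset.sum_le_sum fun i _ => ?_) hsum1
      have : 0 ≤ k i / S := div_nonneg (hk0 i) hS0
      nlinarith [hle1 i]
    have : 0 < 2 / b := by positivity
    simp; linarith
  · push Not at h
    obtain ⟨i, hi⟩ := h
    have hi1 : n i = 1 := (hn i).resolve_left hi
    have hN1 : 1 ≤ N := hi1 ▸ Finset.single_le_sum (fun j _ => hn0 j) (Finset.mem_univ i)
    have hSp : 0 < S := lt_of_lt_of_le (by positivity) hSN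
    have h2 : ∑ i, (k i / S) ^ 2 ≤ 1 / S := by
      have : ∀ i ∈ Finset.univ, (k i / S) ^ 2 ≤ (k i / S) * (1 / S) := by
        intro i _
        rw [sq]
        have : 0 ≤ k i / S := div_nonneg (hk0 i) hS0
        gcongr
        exact hk1 i
      refine (Finset.sum_le_sum this).trans ?_
      rw [← Finset.sum_mul]
      have : 0 ≤ 1 / S := by positivity
      nlinarith
    refine h2.trans ?_
    have h3 : 1 / S ≤ (2 / b) * (1 + N)⁻¹ := by
      rw [← div_eq_mul_inv, div_div, div_le_div_iff₀ hSp (by positivity)]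
      nlinarith
    refine h3.trans ?_
    gcongr
    linarith

theorem bias_sq {ι : Type*} [Fintype ι] (k n d v φ : ι → ℝ) (b B Λ g : ℝ) (hb : 0 < b)
    (hk0 : ∀ i, 0 ≤ k i) (hn : ∀ i, n i = 0 ∨ n i = 1)
    (hbn : ∀ i, b * n i ≤ k i) (hd : ∀ i, |d i| ≤ 2 * B) (hg : |g| ≤ B)
    (hdv : ∀ i, |d i| ≤ Λ * v i) (hφ : ∀ i, k i * v i ^ 2 ≤ φ i) (hφ0 : ∀ i, 0 ≤ φ i) :
    (∑ i, (k i / ∑ j, k j) * d i - (if ∑ j, k j = 0 then g else 0)) ^ 2 ≤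
      4 * B ^ 2 * (1 + ∑ j, n j)⁻¹ + 2 / b * Λ ^ 2 * ∑ i, φ i * (1 + ∑ j, n j)⁻¹ := by
  set S := ∑ j, k j with hS
  set N := ∑ j, n j with hN
  have hB : 0 ≤ B := (abs_nonneg _).trans hg
  have hS0 : 0 ≤ S := Finset.sum_nonneg fun i _ => hk0 i
  have hn0 : ∀ i, 0 ≤ n i := fun i => by rcases hn i with h | h <;> rw [h] <;> norm_num
  have hN0 : 0 ≤ N := Finset.sum_nonneg fun i _ => hn0 i
  have hSN : b * N ≤ S := by rw [hN, Finset.mul_sum]; exact Finset.sum_le_sum fun i _ => hbn i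
  have hsum1 : ∑ i, k i / S ≤ 1 := by rw [← Finset.sum_div]; exact div_self_le_one _
  have hw0 : ∀ i, 0 ≤ k i / S := fun i => div_nonneg (hk0 i) hS0
  have hlast : 0 ≤ 2 / b * Λ ^ 2 * ∑ i, φ i * (1 + N)⁻¹ := by
    have : 0 ≤ ∑ i, φ i * (1 + N)⁻¹ := Finset.sum_nonneg fun i _ => mul_nonneg (hφ0 i) (by positivity)
    positivity
  by_cases h : ∀ i, n i = 0
  · have hN : N = 0 := by simp [hN, h]
    have : |∑ i, (k i / S) * d i - (if S = 0 then g else 0)| ≤ 2 * B := by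
      by_cases hS1 : S = 0
      · simp [hS1]; linarith
      · simp only [hS1, if_false, sub_zero]
        calc _ ≤ ∑ i, |(k i / S) * d i| := Finset.abs_sum_le_sum_abs _ _
          _ ≤ ∑ i, (k i / S) * (2 * B) := by
            apply Finset.sum_le_sum
            intro i _
            rw [abs_mul, abs_of_nonneg (hw0 i)]
            exact mul_le_mul_of_nonneg_left (hd i) (hw0 i)
          _ = (∑ i, (k i / S)) * (2 * B) := by rw [Finset.sum_mul]
          _ ≤ 1 * (2 * B) := by gcongr
          _ = _ := one_mul _
    have h2 := sq_le_sq' (abs_le.1 this).1 (abs_le.1 this).2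
    rw [hN] at hlast ⊢
    simp at hlast ⊢
    nlinarith
  · push Not at h
    obtain ⟨i, hi⟩ := h
    have hi1 : n i = 1 := (hn i).resolve_left hi
    have hN1 : 1 ≤ N := hi1 ▸ Finset.single_le_sum (fun j _ => hn0 j) (Finset.mem_univ i)
    have hSp : 0 < S := lt_of_lt_of_le (by positivity) hSN
    simp only [hSp.ne', if_false, sub_zero]
    have hwsum : ∑ i, k i / S = 1 := by rw [← Finset.sum_div]; exact div_self hSp.ne'
    have hJ : (∑ i, (k i / S) * d i) ^ 2 ≤ ∑ i, (k i / S) * d i ^ 2 := by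
      have := (Even.convexOn_pow (𝕜 := ℝ) (n := 2) (by norm_num)).map_sum_le (t := Finset.univ) (w := fun i => k i / S)
        (p := d) (fun i _ => hw0 i) hwsum (fun _ _ => Set.mem_univ _)
      simpa only [smul_eq_mul] using this
    have h3 : 1 / S ≤ (2 / b) * (1 + N)⁻¹ := by
      rw [← div_eq_mul_inv, div_div, div_le_div_iff₀ hSp (by positivity)]
      nlinarith
    have h4 : ∑ i, (k i / S) * d i ^ 2 ≤ ∑ i, 2 / b * Λ ^ 2 * (φ i * (1 + N)⁻¹) := by
      apply Finset.sum_le_sum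
      intro i _
      have h5 : d i ^ 2 ≤ Λ ^ 2 * v i ^ 2 := by
        rw [← mul_pow, ← sq_abs]
        exact pow_le_pow_left₀ (abs_nonneg _) (hdv i) 2
      calc k i / S * d i ^ 2 ≤ k i / S * (Λ ^ 2 * v i ^ 2) := mul_le_mul_of_nonneg_left h5 (hw0 i)
        _ = Λ ^ 2 * (k i * v i ^ 2) * (1 / S) := by ring
        _ ≤ Λ ^ 2 * φ i * ((2 / b) * (1 + N)⁻¹) := by
          have := hφ0 i
          have := hφ i
          gcongr
        _ = _ := by ring
    rw [← Finset.mul_sum] at h4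
    have : 0 ≤ 4 * B ^ 2 * (1 + N)⁻¹ := by positivity
    linarith

end AggAux

namespace AggAux
open scoped ENNReal

theorem lintegral_pi_split {Ω : Type*} [MeasurableSpace Ω] (μ : Measure Ω) [IsProbabilityMeasure μ]
    {n : ℕ} (i : Fin (n + 1)) (f : Ω → ℝ≥0∞) (hf : Measurable f) (g : (Fin n → Ω) → ℝ≥0∞)
    (hg : Measurable g) :
    ∫⁻ ω, f (ω i) * g (i.removeNth ω) ∂(Measure.pi fun _ : Fin (n + 1) => μ)
      = (∫⁻ a, f a ∂μ) * ∫⁻ ω, g ω ∂(Measure.pi fun _ : Fin n => μ) := by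
  have h := measurePreserving_piFinSuccAbove (fun _ : Fin (n + 1) => μ) i
  have h2 := h.lintegral_comp (f := fun q : Ω × (Fin n → Ω) => f q.1 * g q.2)
    ((hf.comp measurable_fst).mul (hg.comp measurable_snd))
  refine Eq.trans ?_ (h2.trans ?_)
  · rfl
  · exact lintegral_prod_mul hf.aemeasurable hg.aemeasurable

theorem inv_binomial {Ω : Type*} [MeasurableSpace Ω] (μ : Measure Ω) [IsProbabilityMeasure μ]
    (A : Set Ω) (hA : MeasurableSet A) (m : ℕ) :
    ∫⁻ ω, (1 + ∑ j, A.indicator (1 : Ω → ℝ≥0∞) (ω j))⁻¹ ∂(Measure.pi fun _ : Fin m => μ)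
      ≤ (((m + 1 : ℕ) : ℝ≥0∞) * μ A)⁻¹ := by
  set I := ∫⁻ ω, (1 + ∑ j, A.indicator (1 : Ω → ℝ≥0∞) (ω j))⁻¹ ∂(Measure.pi fun _ : Fin m => μ) with hI
  have hi : Measurable (A.indicator (1 : Ω → ℝ≥0∞)) := measurable_one.indicator hA
  have hg : ∀ m : ℕ, Measurable (fun ω : Fin m → Ω => (1 + ∑ j, A.indicator (1 : Ω → ℝ≥0∞) (ω j))⁻¹) := by
    intro m
    fun_prop
  have h1 : ∀ i : Fin (m + 1), ∫⁻ ω, A.indicator (1 : Ω → ℝ≥0∞) (ω i) *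
      (1 + ∑ j, A.indicator (1 : Ω → ℝ≥0∞) (i.removeNth ω j))⁻¹ ∂(Measure.pi fun _ : Fin (m + 1) => μ)
      = μ A * I := by
    intro i
    rw [lintegral_pi_split μ i _ hi _ (hg m), lintegral_indicator_one hA]
  have h2 : ((m + 1 : ℕ) : ℝ≥0∞) * (μ A * I) ≤ 1 := by
    calc ((m + 1 : ℕ) : ℝ≥0∞) * (μ A * I) = ∑ i : Fin (m + 1), μ A * I := by simp
      _ = ∑ i : Fin (m + 1), ∫⁻ ω, A.indicator (1 : Ω → ℝ≥0∞) (ω i) *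
      (1 + ∑ j, A.indicator (1 : Ω → ℝ≥0∞) (i.removeNth ω j))⁻¹ ∂(Measure.pi fun _ : Fin (m + 1) => μ) := by
          simp_rw [h1]
      _ = ∫⁻ ω, ∑ i : Fin (m + 1), A.indicator (1 : Ω → ℝ≥0∞) (ω i) *
      (1 + ∑ j, A.indicator (1 : Ω → ℝ≥0∞) (i.removeNth ω j))⁻¹ ∂(Measure.pi fun _ : Fin (m + 1) => μ) := by
          rw [lintegral_finsetSum]
          intro i _
          unfold Fin.removeNth
          fun_prop
      _ ≤ ∫⁻ ω, 1 ∂(Measure.pi fun _ : Fin (m + 1) => μ) := by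
          apply lintegral_mono
          intro ω
          simp only
          calc _ = ∑ i : Fin (m + 1), A.indicator (1 : Ω → ℝ≥0∞) (ω i) *
                (∑ j, A.indicator (1 : Ω → ℝ≥0∞) (ω j))⁻¹ := by
                apply Finset.sum_congr rfl
                intro i _
                by_cases h : ω i ∈ A
                · rw [Fin.sum_univ_succAbove _ i]
                  simp [h, Fin.removeNth]
                · simp [h]
            _ ≤ 1 := by
                rw [← Finset.sum_mul]
                exact ENNReal.mul_inv_le_one _
      _ = 1 := by simp
  rw [← mul_assoc, mul_comm] at h2
  exact ENNReal.le_inv_iff_mul_le.2 h2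

theorem cross_zero {Ω E : Type*} [MeasurableSpace Ω] [MeasurableSpace E] (μ : Measure Ω) [IsProbabilityMeasure μ]
    (U : Ω → E) (ε : Ω → ℝ)
    (horth : ∀ f : E → ℝ, Measurable f → (∃ C, ∀ x, |f x| ≤ C) → ∫ ω, f (U ω) * ε ω ∂μ = 0)
    {n : ℕ} (i : Fin (n + 1)) (Φ : E → (Fin n → Ω) → ℝ) (hΦ : ∀ w, Measurable (fun x => Φ x w))
    (hΦb : ∀ w, ∃ C, ∀ x, |Φ x w| ≤ C) :
    ∫ ω, Φ (U (ω i)) (i.removeNth ω) * ε (ω i) ∂(Measure.pi fun _ : Fin (n + 1) => μ) = 0 := by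
  have h := measurePreserving_piFinSuccAbove (fun _ : Fin (n + 1) => μ) i
  have h2 := h.integral_comp' (g := fun q : Ω × (Fin n → Ω) => Φ (U q.1) q.2 * ε q.1)
  refine Eq.trans ?_ (h2.trans ?_)
  · rfl
  · by_cases hint : Integrable (fun q : Ω × (Fin n → Ω) => Φ (U q.1) q.2 * ε q.1) (μ.prod (Measure.pi fun _ : Fin n => μ))
    · refine (integral_prod_symm _ hint).trans ?_
      simp only
      rw [← integral_zero (Fin n → Ω) ℝ]
      congr 1
      ext w
      exact horth (fun x => Φ x w) (hΦ w) (hΦb w)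
    · exact integral_undef hint

theorem condexp_orth {Ω E : Type*} [m0 : MeasurableSpace Ω] [mE : MeasurableSpace E] (μ : Measure Ω)
    [IsProbabilityMeasure μ] (Z : Ω → E) (hZ : Measurable Z) (Y : Ω → ℝ) (hY : Integrable Y μ)
    (G : E → ℝ) 
    (hG : (fun ω => G (Z ω)) =ᵐ[μ] μ[Y | MeasurableSpace.comap Z mE])
    (f : E → ℝ) (hf : Measurable f) (hfb : ∃ C, ∀ x, |f x| ≤ C) :
    ∫ ω, f (Z ω) * (Y ω - G (Z ω)) ∂μ = 0 := by
  obtain ⟨C, hC⟩ := hfb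
  have hm : MeasurableSpace.comap Z mE ≤ m0 := hZ.comap_le
  have hfm : StronglyMeasurable[MeasurableSpace.comap Z mE] (fun ω => f (Z ω)) := by
    apply Measurable.stronglyMeasurable
    exact hf.comp (comap_measurable Z)
  have hfm' : AEStronglyMeasurable (fun ω => f (Z ω)) μ := (hf.comp hZ).aestronglyMeasurable
  have hi1 : Integrable (fun ω => f (Z ω) * Y ω) μ :=
    hY.bdd_mul hfm' (c := C) (Eventually.of_forall fun ω => hC _)
  have hGi : Integrable (fun ω => G (Z ω)) μ := integrable_condExp.congr hG.symm
  have hi2 : Integrable (fun ω => f (Z ω) * G (Z ω)) μ :=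
    hGi.bdd_mul hfm' (c := C) (Eventually.of_forall fun ω => hC _)
  simp_rw [mul_sub]
  rw [integral_sub hi1 hi2, sub_eq_zero]
  have h1 : μ[(fun ω => f (Z ω)) * Y | MeasurableSpace.comap Z mE] =ᵐ[μ] (fun ω => f (Z ω)) * μ[Y | MeasurableSpace.comap Z mE] :=
    condExp_mul_of_stronglyMeasurable_left hfm hi1 hY
  rw [← integral_condExp hm (f := fun ω => f (Z ω) * Y ω)]
  apply integral_congr_ae
  refine EventuallyEq.trans h1 ?_
  filter_upwards [hG] with ω hω
  simp [← hω]

end AggAux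

namespace AggAux
open scoped ENNReal

theorem variance_bound {Ω E : Type*} [MeasurableSpace Ω] [MeasurableSpace E] (μ : Measure Ω) [IsProbabilityMeasure μ]
    (U : Ω → E) (hU : Measurable U) (ε : Ω → ℝ) (hε : Measurable ε) (D : ℝ) (hD : ∀ᵐ ω ∂μ, |ε ω| ≤ D)
    (horth : ∀ f : E → ℝ, Measurable f → (∃ C, ∀ x, |f x| ≤ C) → ∫ ω, f (U ω) * ε ω ∂μ = 0)
    {n : ℕ} (q : Fin (n + 1) → (Fin (n + 1) → E) → ℝ) (hq : ∀ i, Measurable (q i))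
    (hq1 : ∀ i x, |q i x| ≤ 1) :
    ∫⁻ ω, ENNReal.ofReal ((∑ i, q i (fun j => U (ω j)) * ε (ω i)) ^ 2) ∂(Measure.pi fun _ : Fin (n + 1) => μ)
    ≤ ∫⁻ ω, ENNReal.ofReal (D ^ 2 * ∑ i, (q i (fun j => U (ω j))) ^ 2) ∂(Measure.pi fun _ : Fin (n + 1) => μ) := by
  set P := (Measure.pi fun _ : Fin (n + 1) => μ) with hP
  have hae : ∀ᵐ ω ∂P, ∀ i, |ε (ω i)| ≤ D := by
    rw [ae_all_iff]
    intro i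
    exact (Measure.tendsto_eval_ae_ae (μ := fun _ : Fin (n + 1) => μ) (i := i)).eventually hD
  have hqm : ∀ i, Measurable (fun ω : Fin (n + 1) → Ω => q i (fun j => U (ω j))) := by
    intro i
    exact (hq i).comp (by fun_prop)
  let F : Fin (n + 1) → Fin (n + 1) → (Fin (n + 1) → Ω) → ℝ := fun i j ω =>
    (q i (fun j => U (ω j)) * ε (ω i)) * (q j (fun j => U (ω j)) * ε (ω j))
  have hb : ∀ i, ∀ᵐ ω ∂P, |q i (fun j => U (ω j)) * ε (ω i)| ≤ D := by
    intro i
    filter_upwards [hae] with ω hω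
    rw [abs_mul]
    have := hω i
    have h2 := hq1 i (fun j => U (ω j))
    nlinarith [abs_nonneg (ε (ω i)), abs_nonneg (q i (fun j => U (ω j)))]
  have hFi : ∀ i j, Integrable (F i j) P := by
    intro i j
    apply Integrable.of_bound (C := D * D)
    · have := hqm i
      have := hqm j
      apply Measurable.aestronglyMeasurable
      fun_prop
    · filter_upwards [hb i, hb j] with ω h1 h2
      rw [Real.norm_eq_abs, abs_mul]
      exact mul_le_mul h1 h2 (abs_nonneg _) ((abs_nonneg _).trans h1)
  have hF0 : ∀ i j, i ≠ j → ∫ ω, F i j ω ∂P = 0 := by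
    intro i j hij
    obtain ⟨j', rfl⟩ := Fin.exists_succAbove_eq hij.symm
    have hins : ∀ ω : Fin (n + 1) → Ω, (fun j => U (ω j)) =
        i.insertNth (α := fun _ => E) (U (ω i)) (fun j => U (i.removeNth ω j)) := by
      intro ω
      rw [Fin.eq_insertNth_iff]
      exact ⟨rfl, rfl⟩
    have := cross_zero μ U ε horth i (fun x w => q i (i.insertNth (α := fun _ => E) x (fun j => U (w j))) *
      (q (i.succAbove j') (i.insertNth (α := fun _ => E) x (fun j => U (w j))) * ε (w j'))) ?_ ?_
    · rw [← this]
      congr 1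
      ext ω
      simp only [F]
      rw [← hins ω]
      simp only [Fin.removeNth]
      ring
    · intro w
      have hm : Measurable (fun x : E => i.insertNth (α := fun _ => E) x (fun j => U (w j))) := by
        rw [measurable_pi_iff]
        rw [Fin.forall_iff_succAbove i]
        constructor
        · simp only [Fin.insertNth_apply_same]
          exact measurable_id
        · intro k
          simp
      exact ((hq i).comp hm).mul (((hq _).comp hm).mul_const _)
    · intro w
      refine ⟨|ε (w j')|, fun x => ?_⟩
      rw [abs_mul, abs_mul]
      have h1 := hq1 i (i.insertNth (α := fun _ => E) x (fun j => U (w j)))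
      have h2 := hq1 (i.succAbove j') (i.insertNth (α := fun _ => E) x (fun j => U (w j)))
      calc _ ≤ 1 * (1 * |ε (w j')|) := by gcongr
        _ = _ := by ring
  have hexp : ∀ ω, (∑ i, q i (fun j => U (ω j)) * ε (ω i)) ^ 2 = ∑ i, ∑ j, F i j ω := by
    intro ω
    rw [sq, Finset.sum_mul_sum]
  have hint : ∫ ω, (∑ i, q i (fun j => U (ω j)) * ε (ω i)) ^ 2 ∂P = ∫ ω, ∑ i, F i i ω ∂P := by
    simp_rw [hexp]
    rw [integral_finsetSum _ (fun i _ => integrable_finsetSum _ fun j _ => hFi i j),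
      integral_finsetSum _ (fun i _ => hFi i i)]
    apply Finset.sum_congr rfl
    intro i _
    rw [integral_finsetSum _ (fun j _ => hFi i j)]
    rw [Finset.sum_eq_single i (fun j _ hj => hF0 i j hj.symm) (by simp)]
  rw [← ofReal_integral_eq_lintegral_ofReal _ (Eventually.of_forall fun ω => sq_nonneg _), hint,
    ofReal_integral_eq_lintegral_ofReal]
  · apply lintegral_mono_ae
    filter_upwards [hae] with ω hω
    apply ENNReal.ofReal_le_ofReal
    rw [Finset.mul_sum]
    apply Finset.sum_le_sum
    intro i _
    simp only [F]
    have h1 : ε (ω i) ^ 2 ≤ D ^ 2 := by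
      rw [← sq_abs]; exact pow_le_pow_left₀ (abs_nonneg _) (hω i) 2
    calc _ = ε (ω i) ^ 2 * q i (fun j => U (ω j)) ^ 2 := by ring
      _ ≤ _ := by gcongr
  · exact integrable_finsetSum _ fun i _ => hFi i i
  · refine Eventually.of_forall fun ω => ?_
    exact Finset.sum_nonneg fun i _ => mul_self_nonneg _
  · simp_rw [hexp]
    exact integrable_finsetSum _ fun i _ => integrable_finsetSum _ fun j _ => hFi i j

theorem pointwise_bound {Ω : Type*} [MeasurableSpace Ω] (μ : Measure Ω) [IsProbabilityMeasure μ] {M : ℕ}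
    (K : EuclideanSpace ℝ (Fin M) → ℝ) (b ρ : ℝ) (hb : 0 < b) (hKm : Measurable K)
    (hK0 : ∀ z, 0 ≤ K z) (hK1 : ∀ z, K z ≤ 1) (hKb : ∀ z, ‖z‖ < ρ → b ≤ K z)
    (Ψ : EuclideanSpace ℝ (Fin M) → ℝ) (hΨm : Measurable Ψ) (hΨ : ∀ v, K v * ‖v‖ ^ 2 ≤ Ψ v)
    (U : Ω → EuclideanSpace ℝ (Fin M)) (hU : Measurable U) (Y : Ω → ℝ) (hY : Measurable Y)
    (R B Λ : ℝ) (hYR : ∀ᵐ ω ∂μ, |Y ω| ≤ R)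
    (Γ : EuclideanSpace ℝ (Fin M) → ℝ) (hΓ : Measurable Γ) (hΓB : ∀ ω, |Γ (U ω)| ≤ B)
    (horth : ∀ f : EuclideanSpace ℝ (Fin M) → ℝ, Measurable f → (∃ C, ∀ x, |f x| ≤ C) →
      ∫ ω, f (U ω) * (Y ω - Γ (U ω)) ∂μ = 0)
    (u : EuclideanSpace ℝ (Fin M)) (huB : |Γ u| ≤ B) (hlip : ∀ ω, |Γ (U ω) - Γ u| ≤ Λ * ‖u - U ω‖)
    (n : ℕ) :
    ∫⁻ ω, ENNReal.ofReal (|∑ i, K (u - U (ω i)) / (∑ j, K (u - U (ω j))) * Y (ω i) - Γ u| ^ 2)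
        ∂(Measure.pi fun _ : Fin (n + 1) => μ)
      ≤ ENNReal.ofReal (2 * ((R + B) ^ 2 * (1 + 2 / b)) + 2 * (4 * B ^ 2)) *
          (((n + 1 : ℕ) : ℝ≥0∞) * μ {ω | ‖u - U ω‖ < ρ})⁻¹
        + ENNReal.ofReal (2 * (2 / b * Λ ^ 2)) * ((∫⁻ ω, ENNReal.ofReal (Ψ (u - U ω)) ∂μ) *
          (μ {ω | ‖u - U ω‖ < ρ})⁻¹) := by
  classical
  set P := (Measure.pi fun _ : Fin (n + 1) => μ) with hP
  set A := {ω | ‖u - U ω‖ < ρ} with hAdef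
  have hA : MeasurableSet A := measurableSet_lt (by fun_prop) measurable_const
  have hΨ0 : ∀ v, 0 ≤ Ψ v := fun v => (mul_nonneg (hK0 v) (sq_nonneg _)).trans (hΨ v)
  let nn : Ω → ℝ := A.indicator 1
  have hnn01 : ∀ ω, nn ω = 0 ∨ nn ω = 1 := by
    intro ω
    by_cases h : ω ∈ A <;> simp [nn, h]
  have hnn0 : ∀ ω, 0 ≤ nn ω := fun ω => by rcases hnn01 ω with h | h <;> rw [h]; norm_num
  have hnnof : ∀ ω, ENNReal.ofReal (nn ω) = A.indicator (1 : Ω → ℝ≥0∞) ω := by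
    intro ω
    by_cases h : ω ∈ A <;> simp [nn, h]
  have hbn : ∀ ω, b * nn ω ≤ K (u - U ω) := by
    intro ω
    by_cases h : ω ∈ A
    · simp only [nn, Set.indicator_of_mem h, Pi.one_apply, mul_one]
      exact hKb _ h
    · simp only [nn, Set.indicator_of_notMem h, mul_zero]
      exact hK0 _
  let J : (m : ℕ) → (Fin m → Ω) → ℝ≥0∞ := fun m ω => (1 + ∑ j, A.indicator (1 : Ω → ℝ≥0∞) (ω j))⁻¹
  have him : Measurable (A.indicator (1 : Ω → ℝ≥0∞)) := measurable_one.indicator hA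
  have hJm : ∀ m, Measurable (J m) := by
    intro m
    simp only [J]
    fun_prop
  have hJof : ∀ ω : Fin (n + 1) → Ω, ENNReal.ofReal ((1 + ∑ j, nn (ω j))⁻¹) = J _ ω := by
    intro ω
    have h0 : 0 ≤ ∑ j, nn (ω j) := Finset.sum_nonneg fun j _ => hnn0 _
    rw [ENNReal.ofReal_inv_of_pos (by positivity), ENNReal.ofReal_add zero_le_one h0,
      ENNReal.ofReal_sum_of_nonneg (fun j _ => hnn0 _)]
    simp only [hnnof, ENNReal.ofReal_one, J]
  have hJle : ∀ (i : Fin (n + 1)) (ω : Fin (n + 1) → Ω), J _ ω ≤ J _ (i.removeNth ω) := by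
    intro i ω
    simp only [J]
    rw [ENNReal.inv_le_inv, Fin.sum_univ_succAbove _ i]
    gcongr
    exact le_add_left le_rfl
  have hJint : ∫⁻ ω, J (n + 1) ω ∂P ≤ (((n + 1 : ℕ) : ℝ≥0∞) * μ A)⁻¹ := by
    refine (inv_binomial μ A hA (n + 1)).trans ?_
    gcongr
    omega
  have hJint' : ∫⁻ ω, J n ω ∂(Measure.pi fun _ : Fin n => μ) ≤ (((n + 1 : ℕ) : ℝ≥0∞) * μ A)⁻¹ :=
    inv_binomial μ A hA n
  let q : Fin (n + 1) → (Fin (n + 1) → EuclideanSpace ℝ (Fin M)) → ℝ := fun i x =>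
    K (u - x i) / ∑ j, K (u - x j)
  have hq : ∀ i, Measurable (q i) := by
    intro i
    simp only [q]
    fun_prop
  have hq1 : ∀ i x, |q i x| ≤ 1 := by
    intro i x
    have hS : 0 ≤ ∑ j, K (u - x j) := Finset.sum_nonneg fun j _ => hK0 _
    rw [abs_of_nonneg (div_nonneg (hK0 _) hS)]
    exact div_le_one_of_le₀ (Finset.single_le_sum (f := fun j => K (u - x j)) (fun j _ => hK0 _) (Finset.mem_univ i)) hS
  have hD : ∀ᵐ ω ∂μ, |Y ω - Γ (U ω)| ≤ R + B := by
    filter_upwards [hYR] with ω hω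
    exact (abs_sub _ _).trans (add_le_add hω (hΓB ω))
  have hvar := variance_bound μ U hU (fun ω => Y ω - Γ (U ω)) (hY.sub (hΓ.comp hU)) (R + B) hD horth q hq hq1
  have hvar2 : ∫⁻ ω, ENNReal.ofReal ((∑ i, q i (fun j => U (ω j)) * (Y (ω i) - Γ (U (ω i)))) ^ 2) ∂P ≤
      ENNReal.ofReal ((R + B) ^ 2 * (1 + 2 / b)) * (((n + 1 : ℕ) : ℝ≥0∞) * μ A)⁻¹ := by
    refine hvar.trans ?_
    calc _ ≤ ∫⁻ ω, ENNReal.ofReal ((R + B) ^ 2 * (1 + 2 / b)) * J (n + 1) ω ∂P := by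
          apply lintegral_mono
          intro ω
          simp only
          rw [← hJof, ← ENNReal.ofReal_mul (by positivity), mul_assoc]
          apply ENNReal.ofReal_le_ofReal
          gcongr
          exact weights_sq (fun i => K (u - U (ω i))) (fun i => nn (ω i)) b hb (fun i => hK0 _)
            (fun i => hK1 _) (fun i => hnn01 _) (fun i => hbn _)
      _ = ENNReal.ofReal ((R + B) ^ 2 * (1 + 2 / b)) * ∫⁻ ω, J (n + 1) ω ∂P :=
          lintegral_const_mul _ (hJm _)
      _ ≤ _ := by gcongr
  have hbias : ∀ ω : Fin (n + 1) → Ω, ENNReal.ofReal ((∑ i, q i (fun j => U (ω j)) * (Γ (U (ω i)) - Γ u) -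
      (if ∑ j, K (u - U (ω j)) = 0 then Γ u else 0)) ^ 2) ≤
      ENNReal.ofReal (4 * B ^ 2) * J (n + 1) ω + ENNReal.ofReal (2 / b * Λ ^ 2) *
        ∑ i, ENNReal.ofReal (Ψ (u - U (ω i))) * J n (i.removeNth ω) := by
    intro ω
    have h := bias_sq (fun i => K (u - U (ω i))) (fun i => nn (ω i)) (fun i => Γ (U (ω i)) - Γ u)
      (fun i => ‖u - U (ω i)‖) (fun i => Ψ (u - U (ω i))) b B Λ (Γ u) hb (fun i => hK0 _)
      (fun i => hnn01 _) (fun i => hbn _)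
      (fun i => by
        refine (abs_sub _ _).trans ?_
        have := hΓB (ω i)
        linarith) huB (fun i => hlip _) (fun i => hΨ _) (fun i => hΨ0 _)
    refine (ENNReal.ofReal_le_ofReal h).trans ?_
    have h0 : 0 ≤ ∑ j, nn (ω j) := Finset.sum_nonneg fun j _ => hnn0 _
    have hJ0 : 0 ≤ (1 + ∑ j, nn (ω j))⁻¹ := by positivity
    have hs0 : ∀ i ∈ (Finset.univ : Finset (Fin (n+1))), 0 ≤ Ψ (u - U (ω i)) * (1 + ∑ j, nn (ω j))⁻¹ :=
      fun i _ => mul_nonneg (hΨ0 _) hJ0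
    have hs0' := Finset.sum_nonneg hs0
    rw [ENNReal.ofReal_add (by positivity) (by positivity), ENNReal.ofReal_mul (by positivity), hJof,
      ENNReal.ofReal_mul (p := 2 / b * Λ ^ 2) (by positivity), ENNReal.ofReal_sum_of_nonneg hs0]
    gcongr with i _
    rw [ENNReal.ofReal_mul (hΨ0 _), hJof]
    gcongr
    exact hJle i ω
  have hterm : ∀ i : Fin (n + 1), ∫⁻ ω, ENNReal.ofReal (Ψ (u - U (ω i))) * J n (i.removeNth ω) ∂P ≤
      (∫⁻ ω, ENNReal.ofReal (Ψ (u - U ω)) ∂μ) * (((n + 1 : ℕ) : ℝ≥0∞) * μ A)⁻¹ := by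
    intro i
    rw [lintegral_pi_split μ i (fun a => ENNReal.ofReal (Ψ (u - U a))) (by fun_prop) (J n) (hJm n)]
    gcongr
  have hrm : ∀ i : Fin (n + 1), Measurable (fun ω : Fin (n + 1) → Ω => J n (i.removeNth ω)) := by
    intro i
    refine (hJm n).comp ?_
    unfold Fin.removeNth
    fun_prop
  have hpm : ∀ i : Fin (n + 1), Measurable (fun ω : Fin (n + 1) → Ω =>
      ENNReal.ofReal (Ψ (u - U (ω i))) * J n (i.removeNth ω)) := by
    intro i
    exact Measurable.mul (by fun_prop) (hrm i)
  have hbias2 : ∫⁻ ω, ENNReal.ofReal ((∑ i, q i (fun j => U (ω j)) * (Γ (U (ω i)) - Γ u) -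
      (if ∑ j, K (u - U (ω j)) = 0 then Γ u else 0)) ^ 2) ∂P ≤
      ENNReal.ofReal (4 * B ^ 2) * (((n + 1 : ℕ) : ℝ≥0∞) * μ A)⁻¹ + ENNReal.ofReal (2 / b * Λ ^ 2) *
        ((∫⁻ ω, ENNReal.ofReal (Ψ (u - U ω)) ∂μ) * (μ A)⁻¹) := by
    refine (lintegral_mono hbias).trans ?_
    rw [lintegral_add_left ((hJm _).const_mul _), lintegral_const_mul _ (hJm _),
      lintegral_const_mul _ (Finset.measurable_sum _ fun i _ => hpm i), lintegral_finsetSum _ (fun i _ => hpm i)]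
    gcongr
    refine (Finset.sum_le_sum fun i _ => hterm i).trans ?_
    rw [Finset.sum_const, Finset.card_univ, Fintype.card_fin, nsmul_eq_mul]
    rw [ENNReal.mul_inv (Or.inl (by simp)) (Or.inl (by simp))]
    apply le_of_eq
    calc _ = (((n + 1 : ℕ) : ℝ≥0∞) * ((n + 1 : ℕ) : ℝ≥0∞)⁻¹) * ((∫⁻ ω, ENNReal.ofReal (Ψ (u - U ω)) ∂μ) * (μ A)⁻¹) := by ring
      _ = _ := by rw [ENNReal.mul_inv_cancel (by simp) (by simp), one_mul]
  have hpt : ∀ ω : Fin (n + 1) → Ω,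
      ENNReal.ofReal (|∑ i, K (u - U (ω i)) / (∑ j, K (u - U (ω j))) * Y (ω i) - Γ u| ^ 2) ≤
      ENNReal.ofReal 2 * ENNReal.ofReal ((∑ i, q i (fun j => U (ω j)) * (Y (ω i) - Γ (U (ω i)))) ^ 2) +
      ENNReal.ofReal 2 * ENNReal.ofReal ((∑ i, q i (fun j => U (ω j)) * (Γ (U (ω i)) - Γ u) -
      (if ∑ j, K (u - U (ω j)) = 0 then Γ u else 0)) ^ 2) := by
    intro ω
    rw [← ENNReal.ofReal_mul (by norm_num), ← ENNReal.ofReal_mul (by norm_num),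
      ← ENNReal.ofReal_add (by positivity) (by positivity), sq_abs]
    apply ENNReal.ofReal_le_ofReal
    set T := ∑ i, q i (fun j => U (ω j)) * (Y (ω i) - Γ (U (ω i))) with hT
    set T' := ∑ i, q i (fun j => U (ω j)) * (Γ (U (ω i)) - Γ u) -
      (if ∑ j, K (u - U (ω j)) = 0 then Γ u else 0) with hT'
    have heq : ∑ i, K (u - U (ω i)) / (∑ j, K (u - U (ω j))) * Y (ω i) - Γ u = T + T' := by
      have h1 : T + T' = ∑ i, q i (fun j => U (ω j)) * Y (ω i) - (∑ i, q i (fun j => U (ω j))) * Γ u -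
          (if ∑ j, K (u - U (ω j)) = 0 then Γ u else 0) := by
        rw [hT, hT', Finset.sum_mul, ← add_sub_assoc, ← Finset.sum_add_distrib, ← Finset.sum_sub_distrib]
        congr 1
        apply Finset.sum_congr rfl
        intro i _
        ring
      rw [h1]
      simp only [q]
      rw [← Finset.sum_div]
      by_cases hS : ∑ j, K (u - U (ω j)) = 0
      · simp [hS]
      · simp [hS]
    rw [heq]
    nlinarith [sq_nonneg (T - T')]
  refine (lintegral_mono hpt).trans ?_
  have hTm : Measurable (fun ω : Fin (n + 1) → Ω => ∑ i, q i (fun j => U (ω j)) * (Y (ω i) - Γ (U (ω i)))) := by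
    apply Finset.measurable_sum
    intro i _
    have h1 : Measurable (fun ω : Fin (n + 1) → Ω => q i (fun j => U (ω j))) :=
      (hq i).comp (measurable_pi_lambda _ fun j => hU.comp (measurable_pi_apply j))
    have h2 : Measurable (fun ω : Fin (n + 1) → Ω => Γ (U (ω i))) := hΓ.comp (hU.comp (measurable_pi_apply i))
    fun_prop
  rw [lintegral_add_left ((hTm.pow_const 2).ennreal_ofReal.const_mul _), lintegral_const_mul' _ _ (by simp), lintegral_const_mul' _ _ (by simp)]
  calc _ ≤ ENNReal.ofReal 2 * (ENNReal.ofReal ((R + B) ^ 2 * (1 + 2 / b)) * (((n + 1 : ℕ) : ℝ≥0∞) * μ A)⁻¹) +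
        ENNReal.ofReal 2 * (ENNReal.ofReal (4 * B ^ 2) * (((n + 1 : ℕ) : ℝ≥0∞) * μ A)⁻¹ + ENNReal.ofReal (2 / b * Λ ^ 2) *
        ((∫⁻ ω, ENNReal.ofReal (Ψ (u - U ω)) ∂μ) * (μ A)⁻¹)) := by gcongr
    _ = _ := by
      rw [ENNReal.ofReal_add (by positivity) (by positivity), ENNReal.ofReal_mul (p := 2) (by norm_num),
        ENNReal.ofReal_mul (p := 2) (q := 4 * B ^ 2) (by norm_num),
        ENNReal.ofReal_mul (p := 2) (q := 2 / b * Λ ^ 2) (by norm_num)]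
      ring

theorem final_arith (a h w b L : ℝ) (M : ℕ) (q1 q2 : ℝ≥0∞) (ha : 0 ≤ a) (hh : 0 < h) (hw : 0 ≤ w) (hb : 0 < b)
    (hq1 : q1 ≠ ⊤) (hq2 : q2 ≠ ⊤) :
    ENNReal.ofReal a * ENNReal.ofReal (h ^ (M + 2)) * (q1 * ENNReal.ofReal ((w / h) ^ M)) +
        ENNReal.ofReal (2 * (2 / b * (L * h) ^ 2)) * q2 =
      ENNReal.ofReal ((a * q1.toReal * w ^ M + 2 * (2 / b * L ^ 2) * q2.toReal) * h ^ 2) := by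
  lift q1 to NNReal using hq1
  lift q2 to NNReal using hq2
  simp only [ENNReal.coe_toReal]
  rw [← ENNReal.ofReal_coe_nnreal (p := q1), ← ENNReal.ofReal_coe_nnreal (p := q2)]
  rw [← ENNReal.ofReal_mul (by positivity), ← ENNReal.ofReal_mul (by positivity),
    ← ENNReal.ofReal_mul (by positivity), ← ENNReal.ofReal_mul (by positivity),
    ← ENNReal.ofReal_add (by positivity) (by positivity)]
  congr 1
  rw [div_pow, pow_add]
  field_simp

end AggAux
/-- (Theorem 1, variance term.)  Let `K` be a regular kernel with
constants `b, ρ, κ₀` satisfying moreover the tail bound `K(z) ≤ C_K·exp(−‖z‖^α)` for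
`‖z‖ ≥ R_K` (with `α, R_K, C_K > 0`).  Assume `|Y| ≤ R` a.s. and `‖r(x)‖ ≤ R` for all
`x`, and that `G` is `L`-Lipschitz with `G(r(X))` a version of `E[Y | r(X)]`.  Then,
choosing `h = ℓ^{−1/(M+2)}`, there is `C > 0` independent of `ℓ` with
`E[|g_n(r(X)) − G(r(X))|²] ≤ C·ℓ^{−2/(M+2)}` for every `ℓ ≥ 1`, the expectation being
over both `X` and the sample `(X_i,Y_i)_{i=1}^ℓ`. -/
theorem aggEstimator_variance_rate
    {Ω : Type*} [MeasurableSpace Ω] (μ : Measure Ω) [IsProbabilityMeasure μ]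
    {d M : ℕ} (hM : 0 < M)
    (K : EuclideanSpace ℝ (Fin M) → ℝ) (b ρ κ₀ : ℝ)
    (hK : IsRegularKernel K b ρ κ₀)
    (α R_K C_K : ℝ) (hα : 0 < α) (hR_K : 0 < R_K) (hC_K : 0 < C_K)
    (htail : ∀ z : EuclideanSpace ℝ (Fin M), R_K ≤ ‖z‖ →
      K z ≤ C_K * Real.exp (-‖z‖ ^ α))
    (X : Ω → Fin d → ℝ) (Y : Ω → ℝ) (hX : Measurable X) (hY : Measurable Y)
    (hY2 : Integrable (fun ω => (Y ω) ^ 2) μ)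
    (R : ℝ) (hR : 0 < R) (hYbdd : ∀ᵐ ω ∂μ, |Y ω| ≤ R)
    (r : (Fin d → ℝ) → EuclideanSpace ℝ (Fin M)) (hr : Measurable r)
    (hrBdd : ∀ x, ‖r x‖ ≤ R)
    (L : ℝ) (hL : 0 ≤ L)
    (G : EuclideanSpace ℝ (Fin M) → ℝ) (hGLip : LipschitzWith L.toNNReal G)
    (hGCE : (fun ω => G (r (X ω))) =ᵐ[μ]
      μ[Y | MeasurableSpace.comap (fun ω => r (X ω)) inferInstance]) :
    ∃ C : ℝ, 0 < C ∧ ∀ ℓ : ℕ, 1 ≤ ℓ →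
      ∫ ω : (Fin ℓ → Ω) × Ω,
          |aggEstimator K ((ℓ : ℝ) ^ (-(1 : ℝ) / ((M : ℝ) + 2))) r X Y ω.1 (X ω.2)
              - G (r (X ω.2))| ^ 2
          ∂((Measure.pi fun _ : Fin ℓ => μ).prod μ)
        ≤ C * (ℓ : ℝ) ^ (-(2 : ℝ) / ((M : ℝ) + 2)) := by
  obtain ⟨CΨ, hCΨ, hΨ⟩ := AggAux.kernel_bound K hK.nonneg hK.le_one α R_K C_K hα hC_K htail
  set Ψ : EuclideanSpace ℝ (Fin M) → ℝ := fun v => CΨ * (1 + ‖v‖) ^ (-((M : ℝ) + 1)) with hΨdef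
  have hΨm : Measurable Ψ := by simp only [hΨdef]; fun_prop
  have hb := hK.b_pos
  have hρ := hK.rho_pos
  set V := volume (Metric.ball (0 : EuclideanSpace ℝ (Fin M)) (ρ / 2)) with hV
  have hV0 : V ≠ 0 := (Metric.measure_ball_pos volume _ (by positivity)).ne'
  set v1 := volume (Metric.ball (0 : EuclideanSpace ℝ (Fin M)) 1) with hv1
  have hv1t : v1 ≠ ⊤ := measure_ball_lt_top.ne
  have hVi : V⁻¹ ≠ ⊤ := ENNReal.inv_ne_top.2 hV0
  set q1 := V⁻¹ * v1 with hq1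
  set q2 := V⁻¹ * (ENNReal.ofReal ((1 + ρ / 2) ^ ((M : ℝ) + 1)) * ∫⁻ v, ENNReal.ofReal (Ψ v)) with hq2
  have hq1t : q1 ≠ ⊤ := ENNReal.mul_ne_top hVi hv1t
  have hΨint : ∫⁻ v, ENNReal.ofReal (Ψ v) ≠ ⊤ := by
    have : Integrable Ψ (volume : Measure (EuclideanSpace ℝ (Fin M))) :=
      (integrable_one_add_norm (by simp)).const_mul CΨ
    exact this.lintegral_lt_top.ne
  have hq2t : q2 ≠ ⊤ := ENNReal.mul_ne_top hVi (ENNReal.mul_ne_top (by simp) hΨint)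
  set B := |G 0| + L * R with hB
  have hB0 : 0 ≤ B := by positivity
  set a := 2 * ((R + B) ^ 2 * (1 + 2 / b)) + 2 * (4 * B ^ 2) with ha
  have ha0 : 0 ≤ a := by positivity
  set C := a * q1.toReal * (R + ρ / 2) ^ M + 2 * (2 / b * L ^ 2) * q2.toReal with hC
  have hC0 : 0 ≤ C := by positivity
  have hGl : ∀ x y, |G x - G y| ≤ L * ‖x - y‖ := by
    intro x y
    have := hGLip.dist_le_mul x y
    rwa [Real.dist_eq, dist_eq_norm, Real.coe_toNNReal L hL] at this
  have hGb : ∀ x, |G (r x)| ≤ B := by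
    intro x
    have h1 := hGl (r x) 0
    rw [sub_zero] at h1
    have h2 : L * ‖r x‖ ≤ L * R := mul_le_mul_of_nonneg_left (hrBdd x) hL
    have h3 := abs_sub_abs_le_abs_sub (G (r x)) (G 0)
    linarith
  have hGm : Measurable G := hGLip.continuous.measurable
  have hYi : Integrable Y μ := Integrable.of_bound hY.aestronglyMeasurable R hYbdd
  refine ⟨C + 1, by positivity, fun ℓ hℓ => ?_⟩
  obtain ⟨n, rfl⟩ : ∃ n, ℓ = n + 1 := ⟨ℓ - 1, by omega⟩
  have hℓ0 : (0 : ℝ) < ((n + 1 : ℕ) : ℝ) := by positivity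
  have hℓ1 : (1 : ℝ) ≤ ((n + 1 : ℕ) : ℝ) := by exact_mod_cast hℓ
  set h : ℝ := ((n + 1 : ℕ) : ℝ) ^ (-(1 : ℝ) / ((M : ℝ) + 2)) with hh
  have hh0 : 0 < h := Real.rpow_pos_of_pos hℓ0 _
  have hh1 : h ≤ 1 := Real.rpow_le_one_of_one_le_of_nonpos hℓ1
    (div_nonpos_of_nonpos_of_nonneg (by norm_num) (by positivity))
  have hh2 : ((n + 1 : ℕ) : ℝ) ^ (-(2 : ℝ) / ((M : ℝ) + 2)) = h ^ 2 := by
    rw [hh, ← Real.rpow_natCast, ← Real.rpow_mul hℓ0.le]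
    congr 1
    push_cast
    ring
  have hhM : ((n + 1 : ℕ) : ℝ)⁻¹ = h ^ (M + 2) := by
    rw [hh, ← Real.rpow_natCast, ← Real.rpow_mul hℓ0.le, ← Real.rpow_neg_one]
    congr 1
    push_cast
    field_simp
  rw [hh2]
  set U : Ω → EuclideanSpace ℝ (Fin M) := fun ω => h⁻¹ • r (X ω) with hU
  have hUm : Measurable U := (hr.comp hX).const_smul h⁻¹
  have hhU : ∀ ω, h • U ω = r (X ω) := fun ω => smul_inv_smul₀ hh0.ne' _
  let Γ : EuclideanSpace ℝ (Fin M) → ℝ := fun v => G (h • v)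
  have hΓm : Measurable Γ := hGm.comp (measurable_const_smul h)
  have hΓU : ∀ ω, Γ (U ω) = G (r (X ω)) := fun ω => by simp only [Γ, hhU]
  have horth : ∀ f : EuclideanSpace ℝ (Fin M) → ℝ, Measurable f → (∃ C, ∀ x, |f x| ≤ C) →
      ∫ ω, f (U ω) * (Y ω - Γ (U ω)) ∂μ = 0 := by
    intro f hf ⟨c, hc⟩
    have := AggAux.condexp_orth μ (fun ω => r (X ω)) (hr.comp hX) Y hYi G hGCE (fun v => f (h⁻¹ • v))
      (hf.comp (measurable_const_smul h⁻¹)) ⟨c, fun x => hc _⟩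
    simpa only [hΓU] using this
  have hpw : ∀ ω', _ := fun ω' => AggAux.pointwise_bound μ K b ρ hb hK.measurable hK.nonneg hK.le_one hK.lower
    Ψ hΨm hΨ U hUm Y hY R B (L * h) hYbdd Γ hΓm (fun ω => by rw [hΓU]; exact hGb _) horth (U ω')
    (by rw [hΓU]; exact hGb _) (fun ω => by
      refine (hGl _ _).trans ?_
      rw [← smul_sub, norm_smul, Real.norm_of_nonneg hh0.le, norm_sub_rev, mul_assoc]) n
  set ν := μ.map U with hν
  have : IsProbabilityMeasure ν := Measure.isProbabilityMeasure_map hUm.aemeasurable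
  let p : EuclideanSpace ℝ (Fin M) → ENNReal := fun u => ν (Metric.ball u ρ)
  have hpm : Measurable p := by
    have hs : MeasurableSet {q : EuclideanSpace ℝ (Fin M) × EuclideanSpace ℝ (Fin M) | dist q.2 q.1 < ρ} :=
      measurableSet_lt (measurable_snd.dist measurable_fst) measurable_const
    exact measurable_measure_prodMk_left (ν := ν) hs
  have hpU : ∀ u, μ {ω | ‖u - U ω‖ < ρ} = p u := by
    intro u
    simp only [p, hν]
    rw [Measure.map_apply hUm measurableSet_ball]
    congr 1
    ext ω
    simp [dist_eq_norm, norm_sub_rev]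
  have hΨm2 : Measurable (fun q : EuclideanSpace ℝ (Fin M) × EuclideanSpace ℝ (Fin M) =>
      ENNReal.ofReal (Ψ (q.1 - q.2))) := by fun_prop
  have hΨU : ∀ u, ∫⁻ ω, ENNReal.ofReal (Ψ (u - U ω)) ∂μ = ∫⁻ z, ENNReal.ofReal (Ψ (u - z)) ∂ν := by
    intro u
    rw [hν, lintegral_map (by fun_prop) hUm]
  have hE1 : ∫⁻ z, (p z)⁻¹ ∂ν ≤ q1 * ENNReal.ofReal (((R + ρ / 2) / h) ^ M) := by
    have hc := AggAux.covering ν (ρ / 2) (by positivity)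
      ((Metric.closedBall 0 (R / h)).indicator 1) ((Metric.closedBall 0 ((R + ρ / 2) / h)).indicator 1)
      (measurable_one.indicator measurableSet_closedBall) p hpm
      (fun z => by simp only [p]; congr 2; ring) ?_
    · rw [lintegral_indicator_one measurableSet_closedBall, Measure.addHaar_closedBall _ _ (by positivity)] at hc
      refine le_trans (le_of_eq ?_) (hc.trans (le_of_eq ?_))
      · apply lintegral_congr_ae
        have : ∀ᵐ z ∂ν, z ∈ Metric.closedBall (0 : EuclideanSpace ℝ (Fin M)) (R / h) := by
          refine (ae_map_iff hUm.aemeasurable (p := fun z => z ∈ Metric.closedBall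
            (0 : EuclideanSpace ℝ (Fin M)) (R / h)) measurableSet_closedBall).2 ?_
          refine Eventually.of_forall fun ω => ?_
          simp only [hU, mem_closedBall_zero_iff]
          rw [norm_smul, norm_inv, Real.norm_of_nonneg hh0.le, inv_mul_eq_div]
          gcongr
          exact hrBdd _
        filter_upwards [this] with z hz
        rw [Set.indicator_of_mem hz, Pi.one_apply, one_mul]
      · rw [finrank_euclideanSpace, Fintype.card_fin]
        ring
    · intro z c hzc
      by_cases hz : z ∈ Metric.closedBall (0 : EuclideanSpace ℝ (Fin M)) (R / h)
      · have hcm : c ∈ Metric.closedBall (0 : EuclideanSpace ℝ (Fin M)) ((R + ρ / 2) / h) := by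
          rw [mem_closedBall_zero_iff] at hz ⊢
          rw [dist_eq_norm, norm_sub_rev] at hzc
          have h1 := norm_le_norm_add_norm_sub' c z
          have h2 : ρ / 2 ≤ ρ / 2 / h := le_div_self (by positivity) hh0 hh1
          rw [add_div]
          linarith
        rw [Set.indicator_of_mem hz, Set.indicator_of_mem hcm]
        exact le_rfl
      · rw [Set.indicator_of_notMem hz]
        exact zero_le
  have hE2 : ∫⁻ z, (∫⁻ z', ENNReal.ofReal (Ψ (z - z')) ∂ν) * (p z)⁻¹ ∂ν ≤ q2 := by
    have h1 : ∀ z, (∫⁻ z', ENNReal.ofReal (Ψ (z - z')) ∂ν) * (p z)⁻¹ =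
        ∫⁻ z', ENNReal.ofReal (Ψ (z - z')) * (p z)⁻¹ ∂ν := by
      intro z
      rw [lintegral_mul_const _ (by fun_prop)]
    simp_rw [h1]
    rw [lintegral_lintegral_swap (f := fun z z' => ENNReal.ofReal (Ψ (z - z')) * (p z)⁻¹)
      ((hΨm2.mul (hpm.comp measurable_fst).inv).aemeasurable)]
    have h2 : ∀ z', ∫⁻ z, ENNReal.ofReal (Ψ (z - z')) * (p z)⁻¹ ∂ν ≤ q2 := by
      intro z'
      have hc := AggAux.covering ν (ρ / 2) (by positivity)
        (fun z => ENNReal.ofReal (Ψ (z - z')))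
        (fun c => ENNReal.ofReal ((1 + ρ / 2) ^ ((M : ℝ) + 1)) * ENNReal.ofReal (Ψ (c - z')))
        (by fun_prop) p hpm
        (fun z => by simp only [p]; congr 2; ring) ?_
      · rw [lintegral_const_mul _ (by fun_prop), lintegral_sub_right_eq_self (fun v => ENNReal.ofReal (Ψ v)) z'] at hc
        exact hc
      · intro z c hzc
        rw [← ENNReal.ofReal_mul (by positivity)]
        apply ENNReal.ofReal_le_ofReal
        simp only [hΨdef]
        have h3 : 1 + ‖c - z'‖ ≤ (1 + ρ / 2) * (1 + ‖z - z'‖) := by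
          rw [dist_eq_norm, norm_sub_rev] at hzc
          have : ‖c - z'‖ ≤ ‖c - z‖ + ‖z - z'‖ := norm_sub_le_norm_sub_add_norm_sub c z z'
          nlinarith [norm_nonneg (z - z')]
        have h4 : (1 + ‖c - z'‖) ^ ((M : ℝ) + 1) ≤ (1 + ρ / 2) ^ ((M : ℝ) + 1) * (1 + ‖z - z'‖) ^ ((M : ℝ) + 1) := by
          rw [← Real.mul_rpow (by positivity) (by positivity)]
          exact Real.rpow_le_rpow (by positivity) h3 (by positivity)
        rw [Real.rpow_neg (by positivity), Real.rpow_neg (by positivity)]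
        have h5 : 0 < (1 + ‖c - z'‖) ^ ((M : ℝ) + 1) := by positivity
        have h6 : 0 < (1 + ‖z - z'‖) ^ ((M : ℝ) + 1) := by positivity
        have h7 : ((1 + ‖z - z'‖) ^ ((M : ℝ) + 1))⁻¹ ≤
            (1 + ρ / 2) ^ ((M : ℝ) + 1) * ((1 + ‖c - z'‖) ^ ((M : ℝ) + 1))⁻¹ := by
          rw [← div_eq_mul_inv, inv_eq_one_div, div_le_div_iff₀ h6 h5]
          linarith
        calc _ ≤ CΨ * ((1 + ρ / 2) ^ ((M : ℝ) + 1) * ((1 + ‖c - z'‖) ^ ((M : ℝ) + 1))⁻¹) := by gcongr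
          _ = _ := by ring
    calc _ ≤ ∫⁻ z', q2 ∂ν := lintegral_mono h2
      _ = q2 := by simp
  have hest : ∀ ω : (Fin (n + 1) → Ω) × Ω, aggEstimator K h r X Y ω.1 (X ω.2) =
      ∑ i, K (U ω.2 - U (ω.1 i)) / (∑ j, K (U ω.2 - U (ω.1 j))) * Y (ω.1 i) := by
    intro ω
    simp only [aggEstimator, kernelWeight, hU, smul_sub]
  have hKm := hK.measurable
  simp_rw [hest, ← hΓU]
  have hmeas : Measurable (fun ω : (Fin (n + 1) → Ω) × Ω =>
      |∑ i, K (U ω.2 - U (ω.1 i)) / (∑ j, K (U ω.2 - U (ω.1 j))) * Y (ω.1 i) - Γ (U ω.2)| ^ 2) := by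
    have h1 : ∀ i, Measurable (fun ω : (Fin (n + 1) → Ω) × Ω => K (U ω.2 - U (ω.1 i))) := by
      intro i
      fun_prop
    have h2 : ∀ i, Measurable (fun ω : (Fin (n + 1) → Ω) × Ω => Y (ω.1 i)) := by
      intro i
      fun_prop
    have h3 : Measurable (fun ω : (Fin (n + 1) → Ω) × Ω => Γ (U ω.2)) := hΓm.comp (hUm.comp measurable_snd)
    have h4 := Finset.measurable_sum Finset.univ (fun i (_ : i ∈ Finset.univ) =>
      ((h1 i).div (Finset.measurable_sum Finset.univ (fun i (_ : i ∈ Finset.univ) => h1 i))).mul (h2 i))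
    have h5 := (h4.sub h3).norm.pow_const 2
    simpa only [Real.norm_eq_abs, Pi.sub_apply, Pi.mul_apply, Pi.div_apply] using h5
  rw [integral_eq_lintegral_of_nonneg_ae (Eventually.of_forall fun ω => by positivity) hmeas.aestronglyMeasurable]
  apply ENNReal.toReal_le_of_le_ofReal (by positivity)
  rw [lintegral_prod_symm _ hmeas.ennreal_ofReal.aemeasurable]
  have hC2 : ENNReal.ofReal (C * h ^ 2) ≤ ENNReal.ofReal ((C + 1) * h ^ 2) := by
    apply ENNReal.ofReal_le_ofReal
    nlinarith [sq_nonneg h]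
  refine le_trans ((lintegral_mono hpw).trans ?_) hC2
  simp_rw [hpU, hΨU]
  have hIm : Measurable (fun u => ∫⁻ z, ENNReal.ofReal (Ψ (u - z)) ∂ν) := hΨm2.lintegral_prod_right'
  calc _ = ∫⁻ u, (ENNReal.ofReal a * (((n + 1 : ℕ) : ENNReal) * p u)⁻¹ +
        ENNReal.ofReal (2 * (2 / b * (L * h) ^ 2)) * ((∫⁻ z, ENNReal.ofReal (Ψ (u - z)) ∂ν) * (p u)⁻¹)) ∂ν := by
        conv_rhs => rw [hν]
        rw [lintegral_map _ hUm]
        exact ((hpm.const_mul _).inv.const_mul _).add ((hIm.mul hpm.inv).const_mul _)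
    _ = ∫⁻ u, (ENNReal.ofReal a * ENNReal.ofReal (h ^ (M + 2)) * (p u)⁻¹ +
        ENNReal.ofReal (2 * (2 / b * (L * h) ^ 2)) * ((∫⁻ z, ENNReal.ofReal (Ψ (u - z)) ∂ν) * (p u)⁻¹)) ∂ν := by
        apply lintegral_congr
        intro u
        rw [ENNReal.mul_inv (Or.inl (by simp)) (Or.inl (by simp)), ← hhM, ENNReal.ofReal_inv_of_pos hℓ0,
          ENNReal.ofReal_natCast, mul_assoc]
    _ = ENNReal.ofReal a * ENNReal.ofReal (h ^ (M + 2)) * ∫⁻ u, (p u)⁻¹ ∂ν +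
        ENNReal.ofReal (2 * (2 / b * (L * h) ^ 2)) * ∫⁻ u, ((∫⁻ z, ENNReal.ofReal (Ψ (u - z)) ∂ν) * (p u)⁻¹) ∂ν := by
        have hpi : Measurable (fun u => (p u)⁻¹) := hpm.inv
        have hIp : Measurable (fun u => (∫⁻ z, ENNReal.ofReal (Ψ (u - z)) ∂ν) * (p u)⁻¹) := hIm.mul hpi
        rw [lintegral_add_left (hpi.const_mul _), lintegral_const_mul _ hpi,
          lintegral_const_mul _ hIp]
    _ ≤ ENNReal.ofReal a * ENNReal.ofReal (h ^ (M + 2)) * (q1 * ENNReal.ofReal (((R + ρ / 2) / h) ^ M)) +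
        ENNReal.ofReal (2 * (2 / b * (L * h) ^ 2)) * q2 := by gcongr
    _ = ENNReal.ofReal (C * h ^ 2) :=
        AggAux.final_arith a h (R + ρ / 2) b L M q1 q2 ha0 hh0 (by positivity) hb hq1t hq2t
end

section
/- Let K be a regular kernel with constants b, ρ, κ₀ that moreover satisfies the tail bound K(z) ≤ C_K·exp(−‖z‖^α) for all z ∈ ℝ^M with ‖z‖ ≥ R_K, for some constants α, R_K, C_K > 0. Assume |Y| ≤ R almost surely and ‖r(x)‖ ≤ R for all x ∈ ℝ^d, for some constant R > 0, and assume there exist L ≥ 0 and an L-Lipschitz function G : ℝ^M → ℝ such that G(r(X)) is a version of E[Y | r(X)]. Let g* : ℝ^d → ℝ be a measurable function such that g*(X) is a version of E[Y | X]. Then, choosing the bandwidth h = ℓ^{−1/(M+2)}, there exists a constant C > 0 independent of ℓ such that E[|g_n(r(X)) − g*(X)|²] ≤ min_{1 ≤ m ≤ M} E[|r_m(X) − g*(X)|²] + C·ℓ^{−2/(M+2)} for every ℓ ≥ 1, where the expectation is over both X and the sample (X_i,Y_i)_{i=1}^ℓ. -/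
open MeasureTheory Filter

open scoped ENNReal

lemma aux_lsplit {Ω : Type*} [MeasurableSpace Ω] (μ : Measure Ω) [IsProbabilityMeasure μ] {n : ℕ}
    (i : Fin (n+1)) (f : Ω → ℝ≥0∞) (g : (Fin n → Ω) → ℝ≥0∞) (hf : Measurable f) (hg : Measurable g) :
    ∫⁻ ω, f (ω i) * g (fun j => ω (i.succAbove j)) ∂(Measure.pi fun _ : Fin (n+1) => μ)
      = (∫⁻ a, f a ∂μ) * ∫⁻ y, g y ∂(Measure.pi fun _ : Fin n => μ) := by
  have h := measurePreserving_piFinSuccAbove (fun _ : Fin (n+1) => μ) i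
  rw [← lintegral_prod_mul hf.aemeasurable hg.aemeasurable, 
    ← h.lintegral_comp_emb (MeasurableEquiv.measurableEmbedding _)]
  rfl

lemma aux_isplit {Ω : Type*} [MeasurableSpace Ω] (μ : Measure Ω) [IsProbabilityMeasure μ] {n : ℕ}
    (i : Fin (n+1)) (f : Ω × (Fin n → Ω) → ℝ) (hf : Measurable f) (B : ℝ) (hB : ∀ z, |f z| ≤ B)
    (h0 : ∀ y, ∫ a, f (a, y) ∂μ = 0) :
    ∫ ω, f (ω i, (fun j => ω (i.succAbove j))) ∂(Measure.pi fun _ : Fin (n+1) => μ) = 0 := by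
  have h := measurePreserving_piFinSuccAbove (fun _ : Fin (n+1) => μ) i
  have h2 := h.integral_comp' f
  have h3 : Integrable f (μ.prod (Measure.pi fun _ : Fin n => μ)) :=
    Integrable.of_bound hf.aestronglyMeasurable B (Filter.Eventually.of_forall hB)
  rw [integral_prod_symm _ h3] at h2
  simp only [h0, integral_zero] at h2
  exact h2

lemma aux_count {Ω : Type*} [MeasurableSpace Ω] (μ : Measure Ω) [IsProbabilityMeasure μ] (n : ℕ)
    (A : Set Ω) (hA : MeasurableSet A) :
    ((n : ℝ≥0∞) + 1) * (μ A * ∫⁻ ω, (1 + ∑ j, A.indicator 1 (ω j))⁻¹ ∂(Measure.pi fun _ : Fin n => μ)) ≤ 1 := by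
  have hind : Measurable (A.indicator (1 : Ω → ℝ≥0∞)) := measurable_one.indicator hA
  have hg : Measurable fun ω : Fin n → Ω => (1 + ∑ j, A.indicator (1 : Ω → ℝ≥0∞) (ω j))⁻¹ := by
    fun_prop
  have key : ∀ i : Fin (n+1), μ A * ∫⁻ ω, (1 + ∑ j, A.indicator 1 (ω j))⁻¹ ∂(Measure.pi fun _ : Fin n => μ)
      = ∫⁻ ω, A.indicator 1 (ω i) * (1 + ∑ j, A.indicator 1 (ω (i.succAbove j)))⁻¹ 
        ∂(Measure.pi fun _ : Fin (n+1) => μ) := by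
    intro i
    rw [aux_lsplit μ i _ (fun ω => (1 + ∑ j, A.indicator 1 (ω j))⁻¹) hind hg, lintegral_indicator_one hA]
  calc _ = ∑ i : Fin (n+1), ∫⁻ ω, A.indicator 1 (ω i) * (1 + ∑ j, A.indicator 1 (ω (i.succAbove j)))⁻¹ 
        ∂(Measure.pi fun _ : Fin (n+1) => μ) := by
        simp only [← key]; simp
    _ = ∫⁻ ω, ∑ i : Fin (n+1), A.indicator 1 (ω i) * (1 + ∑ j, A.indicator 1 (ω (i.succAbove j)))⁻¹ 
        ∂(Measure.pi fun _ : Fin (n+1) => μ) := by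
        rw [lintegral_finsetSum]
        intro i _
        fun_prop
    _ ≤ ∫⁻ ω, 1 ∂(Measure.pi fun _ : Fin (n+1) => μ) := by
        apply lintegral_mono
        intro ω
        have : ∀ i : Fin (n+1), A.indicator (1 : Ω → ℝ≥0∞) (ω i) * (1 + ∑ j, A.indicator 1 (ω (i.succAbove j)))⁻¹
            = A.indicator 1 (ω i) * (∑ j, A.indicator (1 : Ω → ℝ≥0∞) (ω j))⁻¹ := by
          intro i
          rw [Fin.sum_univ_succAbove _ i]
          by_cases h : ω i ∈ A <;> simp [h]
        simp only [this]
        rw [← Finset.sum_mul, ← div_eq_mul_inv]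
        exact ENNReal.div_self_le_one
    _ = 1 := by simp

lemma aux_count' {Ω : Type*} [MeasurableSpace Ω] (μ : Measure Ω) [IsProbabilityMeasure μ] (n : ℕ)
    (A : Set Ω) (hA : MeasurableSet A) :
    ∫⁻ ω, (1 + ∑ j, A.indicator 1 (ω j))⁻¹ ∂(Measure.pi fun _ : Fin n => μ) ≤ (((n : ℝ≥0∞) + 1) * μ A)⁻¹ := by
  have h := aux_count μ n A hA
  rw [← mul_assoc] at h
  rw [ENNReal.le_inv_iff_mul_le, mul_comm]
  exact h

lemma aux_geom {M : ℕ} (q : Measure (EuclideanSpace ℝ (Fin M))) [IsProbabilityMeasure q] (s : ℝ) (hs : 0 < s)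
    (f H : EuclideanSpace ℝ (Fin M) → ℝ≥0∞) (hf : Measurable f) 
    (hfH : ∀ u w, dist u w < s → f u ≤ H w) :
    ∫⁻ u, f u * (q (Metric.ball u (2*s)))⁻¹ ∂q ≤ (volume (Metric.ball (0 : EuclideanSpace ℝ (Fin M)) s))⁻¹ * ∫⁻ w, H w := by
  set V := volume (Metric.ball (0 : EuclideanSpace ℝ (Fin M)) s) with hV
  have hV0 : V ≠ 0 := (Metric.measure_ball_pos _ _ hs).ne'
  have hVt : V ≠ ∞ := measure_ball_lt_top.ne
  have hqm : Measurable fun u : EuclideanSpace ℝ (Fin M) => q (Metric.ball u (2*s)) := by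
    have : MeasurableSet {p : EuclideanSpace ℝ (Fin M) × EuclideanSpace ℝ (Fin M) | dist p.2 p.1 < 2*s} :=
      (isOpen_lt (by fun_prop) (by fun_prop)).measurableSet
    exact measurable_measure_prodMk_left this
  have hS : MeasurableSet {p : EuclideanSpace ℝ (Fin M) × EuclideanSpace ℝ (Fin M) | dist p.2 p.1 < s} :=
      (isOpen_lt (by fun_prop) (by fun_prop)).measurableSet
  have hfq : Measurable fun u => f u * (q (Metric.ball u (2*s)))⁻¹ := hf.mul hqm.inv
  rw [← ENNReal.mul_le_iff_le_inv hV0 hVt, ← lintegral_const_mul _ hfq]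
  have h1 : ∀ u : EuclideanSpace ℝ (Fin M), V = ∫⁻ w, ({p : EuclideanSpace ℝ (Fin M) × EuclideanSpace ℝ (Fin M) | dist p.2 p.1 < s}.indicator 1 (u, w) : ℝ≥0∞) := by
    intro u
    have : (fun w => ({p : EuclideanSpace ℝ (Fin M) × EuclideanSpace ℝ (Fin M) | dist p.2 p.1 < s}.indicator 1 (u, w) : ℝ≥0∞)) = (Metric.ball u s).indicator 1 := by
      ext w; simp [Set.indicator]
    rw [this, lintegral_indicator_one measurableSet_ball, hV]
    exact (Measure.addHaar_ball_center volume u s).symm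
  calc _ = ∫⁻ u, (∫⁻ w, ({p : EuclideanSpace ℝ (Fin M) × EuclideanSpace ℝ (Fin M) | dist p.2 p.1 < s}.indicator 1 (u, w) : ℝ≥0∞) * (f u * (q (Metric.ball u (2*s)))⁻¹)) ∂q := by
        apply lintegral_congr
        intro u
        rw [lintegral_mul_const, ← h1 u]
        exact (measurable_one.indicator hS).comp (by fun_prop)
    _ = ∫⁻ w, ∫⁻ u, ({p : EuclideanSpace ℝ (Fin M) × EuclideanSpace ℝ (Fin M) | dist p.2 p.1 < s}.indicator 1 (u, w) : ℝ≥0∞) * (f u * (q (Metric.ball u (2*s)))⁻¹) ∂q := by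
        rw [lintegral_lintegral_swap]
        apply Measurable.aemeasurable
        apply Measurable.mul
        · exact (measurable_one.indicator hS).comp (by fun_prop)
        · exact (hf.mul hqm.inv).comp measurable_fst
    _ ≤ ∫⁻ w, H w := by
        apply lintegral_mono
        intro w
        calc _ ≤ ∫⁻ u, (Metric.ball w s).indicator 1 u * (H w * (q (Metric.ball w s))⁻¹) ∂q := by
              apply lintegral_mono
              intro u
              by_cases h : dist w u < s
              · have h' : dist u w < s := by rwa [dist_comm]
                have hsub : Metric.ball w s ⊆ Metric.ball u (2*s) := 
                  Metric.ball_subset_ball' (by linarith)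
                simp only [Set.indicator, Set.mem_ofPred_eq, h, Metric.mem_ball, h', if_true, Pi.one_apply, one_mul]
                gcongr
                exact hfH _ _ h'
              · simp [Set.indicator, h]
          _ = q (Metric.ball w s) * (H w * (q (Metric.ball w s))⁻¹) := by
              rw [lintegral_mul_const _ (measurable_one.indicator measurableSet_ball), 
                lintegral_indicator_one measurableSet_ball]
          _ = H w * (q (Metric.ball w s) / q (Metric.ball w s)) := by
              rw [div_eq_mul_inv]; ring
          _ ≤ H w := by
              conv_rhs => rw [← mul_one (H w)]
              gcongr
              exact ENNReal.div_self_le_one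

lemma aux_tail {M : ℕ} (K : EuclideanSpace ℝ (Fin M) → ℝ) (h1 : ∀ z, K z ≤ 1)
    (α R_K C_K : ℝ) (hα : 0 < α) (hC_K : 0 < C_K)
    (htail : ∀ z : EuclideanSpace ℝ (Fin M), R_K ≤ ‖z‖ →
      K z ≤ C_K * Real.exp (-‖z‖ ^ α)) :
    ∃ A : ℝ, 0 < A ∧ ∀ z, K z * ‖z‖^2 ≤ A * (1 + ‖z‖) ^ (-((M:ℝ)+1)) := by
  have ht : Tendsto (fun t : ℝ => (1+t)^(M+3) * Real.exp (-t^α)) atTop (nhds 0) := by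
    obtain ⟨k, hk⟩ := exists_nat_ge (((M:ℝ)+3)/α)
    have h2 := (Real.tendsto_pow_mul_exp_neg_atTop_nhds_zero k).comp (tendsto_rpow_atTop hα)
    have h3 := h2.const_mul ((2:ℝ)^(M+3))
    rw [mul_zero] at h3
    refine squeeze_zero' ?_ ?_ h3
    · filter_upwards [eventually_ge_atTop 0] with t ht
      positivity
    · filter_upwards [eventually_ge_atTop 1] with t ht
      simp only [Function.comp]
      rw [← mul_assoc]
      gcongr
      calc (1+t)^(M+3) ≤ (2*t)^(M+3) := by gcongr; linarith
        _ = 2^(M+3) * t^(M+3) := by rw [mul_pow]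
        _ ≤ _ := by
          gcongr
          rw [← Real.rpow_natCast, ← Real.rpow_natCast, ← Real.rpow_mul (by linarith)]
          apply Real.rpow_le_rpow_of_exponent_le ht
          rw [div_le_iff₀ hα] at hk
          push_cast
          linarith
  obtain ⟨T, hT⟩ := eventually_atTop.1 (ht.eventually (gt_mem_nhds (show (0:ℝ) < 1 by norm_num)))
  refine ⟨max ((1 + (|T| + |R_K|))^(M+3)) C_K, lt_max_of_lt_right hC_K, fun z => ?_⟩
  have hp : 0 < (1 + ‖z‖) := by positivity
  have hpp : (1 + ‖z‖) ^ (-((M:ℝ)+1)) = ((1+‖z‖)^(M+1))⁻¹ := by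
    rw [Real.rpow_neg hp.le]; norm_cast
  rw [hpp, ← div_eq_mul_inv, le_div_iff₀ (by positivity)]
  have hle : ‖z‖^2 * (1+‖z‖)^(M+1) ≤ (1+‖z‖)^(M+3) := by
    rw [show M + 3 = 2 + (M+1) by ring, pow_add _ 2]
    gcongr
    linarith
  by_cases hz : max T R_K ≤ ‖z‖
  · have ha := hT ‖z‖ ((le_max_left _ _).trans hz)
    have hb := htail z ((le_max_right _ _).trans hz)
    calc K z * ‖z‖^2 * (1+‖z‖)^(M+1) = K z * (‖z‖^2 * (1+‖z‖)^(M+1)) := by ring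
      _ ≤ (C_K * Real.exp (-‖z‖ ^ α)) * (1+‖z‖)^(M+3) := by gcongr
      _ = C_K * ((1+‖z‖)^(M+3) * Real.exp (-‖z‖ ^ α)) := by ring
      _ ≤ C_K * 1 := by gcongr
      _ ≤ _ := by simp
  · have hz2 : ‖z‖ ≤ |T| + |R_K| := by
      have := abs_nonneg T
      have := abs_nonneg R_K
      refine (not_le.1 hz).le.trans (max_le ?_ ?_)
      · linarith [le_abs_self T]
      · linarith [le_abs_self R_K]
    calc K z * ‖z‖^2 * (1+‖z‖)^(M+1) = K z * (‖z‖^2 * (1+‖z‖)^(M+1)) := by ring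
      _ ≤ 1 * (1+‖z‖)^(M+3) := by gcongr; exact h1 z
      _ ≤ (1 + (|T| + |R_K|))^(M+3) := by rw [one_mul]; gcongr
      _ ≤ _ := le_max_left _ _

lemma aux_orth {Ω : Type*} [MeasurableSpace Ω] (μ : Measure Ω) [IsProbabilityMeasure μ]
    {E : Type*} [MeasurableSpace E] (U : Ω → E) (hU : Measurable U) (Y Z : Ω → ℝ) 
    (hY : Integrable Y μ) (hZ : Z =ᵐ[μ] μ[Y | MeasurableSpace.comap U inferInstance])
    (ψ : E → ℝ) (hψ : Measurable ψ) (B : ℝ) (hB : ∀ ω, |ψ (U ω)| ≤ B) :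
    ∫ ω, ψ (U ω) * (Y ω - Z ω) ∂μ = 0 := by
  have hm : MeasurableSpace.comap U inferInstance ≤ ‹MeasurableSpace Ω› := hU.comap_le
  have hs : StronglyMeasurable[MeasurableSpace.comap U inferInstance] (fun ω => ψ (U ω)) :=
    (hψ.comp (comap_measurable U)).stronglyMeasurable
  have h := condExp_stronglyMeasurable_mul_of_bound (μ := μ) hm hs hY B (Filter.Eventually.of_forall fun ω => hB _)
  have h2 := integral_condExp (μ := μ) (f := (fun ω => ψ (U ω)) * Y) hm
  rw [integral_congr_ae h] at h2
  have hb : ∀ W : Ω → ℝ, Integrable W μ → Integrable (fun ω => ψ (U ω) * W ω) μ := by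
    intro W hW
    exact hW.bdd_mul (hψ.comp hU).aestronglyMeasurable (c := B) (Filter.Eventually.of_forall fun ω => hB _)
  have hZi : Integrable Z μ := integrable_condExp.congr hZ.symm
  simp only [mul_sub]
  rw [integral_sub (hb _ hY) (hb _ hZi), sub_eq_zero]
  have h3 : ∫ ω, ψ (U ω) * Z ω ∂μ = ∫ ω, ((fun ω => ψ (U ω)) * μ[Y | MeasurableSpace.comap U inferInstance]) ω ∂μ := by
    apply integral_congr_ae
    filter_upwards [hZ] with ω hω
    simp [hω]
  rw [h3, h2]
  rfl

lemma aux_detA {n : ℕ} (k c : Fin (n+1) → ℝ) (b : ℝ) (hb : 0 < b) (hb1 : b ≤ 1) (hk0 : ∀ i, 0 ≤ k i)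
    (hk1 : ∀ i, k i ≤ 1) (hc : ∀ i, c i = 0 ∨ c i = 1) (hck : ∀ i, b * c i ≤ k i) :
    ∑ i, (k i / ∑ j, k j)^2 ≤ (2/b) * (1 + ∑ j, c j)⁻¹ := by
  have hD0 : 0 ≤ ∑ j, k j := Finset.sum_nonneg fun i _ => hk0 i
  have hDN : b * ∑ j, c j ≤ ∑ j, k j := by
    rw [Finset.mul_sum]; exact Finset.sum_le_sum fun i _ => hck i
  have hc0 : ∀ i, 0 ≤ c i := fun i => by rcases hc i with h | h <;> simp [h]
  have hN0 : 0 ≤ ∑ j, c j := Finset.sum_nonneg fun i _ => hc0 i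
  set D := ∑ j, k j with hD
  set N := ∑ j, c j with hN
  rcases hD0.eq_or_lt with h0 | h0
  · rw [← h0]; simp; positivity
  have hsum : ∑ i, (k i / D)^2 ≤ 1 / D := by
    calc ∑ i, (k i / D)^2 ≤ ∑ i, k i / D^2 := by
          apply Finset.sum_le_sum; intro i _
          rw [div_pow]; gcongr; nlinarith [hk0 i, hk1 i]
      _ = 1 / D := by rw [← Finset.sum_div, ← hD]; field_simp
  by_cases hN1 : 1 ≤ N
  · refine hsum.trans ?_
    rw [← div_eq_mul_inv, div_div, div_le_div_iff₀ h0 (by positivity)]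
    nlinarith
  · have hNz : N = 0 := by
      apply Finset.sum_eq_zero; intro i _
      rcases hc i with h | h
      · exact h
      · exact absurd (h ▸ Finset.single_le_sum (fun j _ => hc0 j) (Finset.mem_univ i)) hN1
    rw [hNz]
    have h1 : ∑ i, (k i / D)^2 ≤ 1 := by
      calc ∑ i, (k i / D)^2 ≤ ∑ i, k i / D := by
            apply Finset.sum_le_sum; intro i _
            have h2 : k i / D ≤ 1 := by
              rw [div_le_one h0]; exact Finset.single_le_sum (fun j _ => hk0 j) (Finset.mem_univ i)
            have h3 : 0 ≤ k i / D := div_nonneg (hk0 i) hD0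
            nlinarith
        _ = 1 := by rw [← Finset.sum_div, ← hD]; field_simp
    have h2 : 1 ≤ 2 / b := by rw [le_div_iff₀ hb]; linarith
    simp; linarith

lemma aux_detB {n : ℕ} (k c f t : Fin (n+1) → ℝ) (b B lam f0 : ℝ) (hb : 0 < b) (hk0 : ∀ i, 0 ≤ k i)
    (hc : ∀ i, c i = 0 ∨ c i = 1) (hck : ∀ i, b * c i ≤ k i)
    (hf : ∀ i, |f i| ≤ B) (hf0 : |f0| ≤ B) (hft : ∀ i, |f i - f0| ≤ lam * t i) :
    (∑ i, (k i / ∑ j, k j) * f i - f0)^2 ≤ 4 * B^2 * (1 + ∑ j, c j)⁻¹ + 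
      (2 * lam^2/b) * ∑ i, (k i * t i^2) * (1 + ∑ j, c (i.succAbove j))⁻¹ := by
  have hD0 : 0 ≤ ∑ j, k j := Finset.sum_nonneg fun i _ => hk0 i
  have hDN : b * ∑ j, c j ≤ ∑ j, k j := by
    rw [Finset.mul_sum]; exact Finset.sum_le_sum fun i _ => hck i
  have hc0 : ∀ i, 0 ≤ c i := fun i => by rcases hc i with h | h <;> simp [h]
  have hN0 : 0 ≤ ∑ j, c j := Finset.sum_nonneg fun i _ => hc0 i
  have hNs : ∀ i : Fin (n+1), ∑ j, c (i.succAbove j) ≤ ∑ j, c j := by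
    intro i
    rw [Fin.sum_univ_succAbove _ i]
    linarith [hc0 i]
  have hNs0 : ∀ i : Fin (n+1), 0 ≤ ∑ j, c (i.succAbove j) := fun i => Finset.sum_nonneg fun j _ => hc0 _
  set D := ∑ j, k j with hD
  set N := ∑ j, c j with hN
  have hB : 0 ≤ B := (abs_nonneg _).trans hf0
  have hR0 : 0 ≤ (2 * lam^2/b) * ∑ i, (k i * t i^2) * (1 + ∑ j, c (i.succAbove j))⁻¹ := by
    apply mul_nonneg (by positivity)
    apply Finset.sum_nonneg; intro i _
    have := hk0 i
    have := hNs0 i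
    positivity
  by_cases hN1 : 1 ≤ N
  · have h0 : 0 < D := by nlinarith
    have hW1 : ∑ i, k i / D = 1 := by rw [← Finset.sum_div, ← hD]; field_simp
    have e1 : ∑ i, (k i / D) * f i - f0 = ∑ i, (k i / D) * (f i - f0) := by
      simp only [mul_sub, Finset.sum_sub_distrib, ← Finset.sum_mul, hW1, one_mul]
    have hcs : (∑ i, (k i / D) * (f i - f0))^2 ≤ (∑ i, k i / D) * ∑ i, (k i / D) * (f i - f0)^2 := by
      apply Finset.sum_sq_le_sum_mul_sum_of_sq_le_mul
      · intro i _; exact div_nonneg (hk0 i) hD0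
      · intro i _; exact mul_nonneg (div_nonneg (hk0 i) hD0) (sq_nonneg _)
      · intro i _; apply le_of_eq; ring
    rw [hW1, one_mul, ← e1] at hcs
    have h4 : 0 ≤ 4 * B^2 * (1 + N)⁻¹ := by positivity
    refine hcs.trans (le_trans ?_ (le_add_of_nonneg_left h4))
    rw [Finset.mul_sum]
    apply Finset.sum_le_sum; intro i _
    have h5 : (f i - f0)^2 ≤ lam^2 * t i^2 := by
      rw [← mul_pow]; exact sq_le_sq' (by linarith [(abs_le.1 (hft i)).1]) (abs_le.1 (hft i)).2
    have h6 : 1 / D ≤ 2 / b * (1 + ∑ j, c (i.succAbove j))⁻¹ := by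
      have := hNs0 i
      rw [← div_eq_mul_inv, div_div, div_le_div_iff₀ h0 (by positivity)]
      nlinarith [hNs i]
    calc k i / D * (f i - f0)^2 = k i * (f i - f0)^2 * (1 / D) := by ring
      _ ≤ k i * (lam^2 * t i^2) * (2 / b * (1 + ∑ j, c (i.succAbove j))⁻¹) := by
        have := hk0 i
        gcongr
      _ = _ := by ring
  · have hNz : N = 0 := by
      apply Finset.sum_eq_zero; intro i _
      rcases hc i with h | h
      · exact h
      · exact absurd (h ▸ Finset.single_le_sum (fun j _ => hc0 j) (Finset.mem_univ i)) hN1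
    have hW1 : ∑ i, k i / D ≤ 1 := by rw [← Finset.sum_div, ← hD]; exact div_self_le_one D
    have h1 : |∑ i, (k i / D) * f i| ≤ B := by
      calc _ ≤ ∑ i, |(k i / D) * f i| := Finset.abs_sum_le_sum_abs _ _
        _ ≤ ∑ i, (k i / D) * B := by
          apply Finset.sum_le_sum; intro i _
          rw [abs_mul, abs_of_nonneg (div_nonneg (hk0 i) hD0)]
          have := div_nonneg (hk0 i) hD0
          gcongr
          exact hf i
        _ ≤ 1 * B := by rw [← Finset.sum_mul]; gcongr
        _ = B := one_mul B
    rw [hNz]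
    have := abs_le.1 h1
    have := abs_le.1 hf0
    have h2 : (∑ i, (k i / D) * f i - f0)^2 ≤ 4 * B^2 := by
      rw [show 4 * B^2 = (2*B)^2 by ring]
      apply sq_le_sq' <;> linarith
    simp only [add_zero, inv_one, mul_one]
    linarith

lemma aux_ofReal_count {Ω : Type*} (A : Set Ω) {n : ℕ} (ω : Fin n → Ω) :
    ENNReal.ofReal (1 + ∑ j, A.indicator (1 : Ω → ℝ) (ω j))⁻¹ = (1 + ∑ j, A.indicator (1 : Ω → ℝ≥0∞) (ω j))⁻¹ := by
  have h0 : ∀ a, 0 ≤ A.indicator (1 : Ω → ℝ) a := fun a => Set.indicator_nonneg (fun _ _ => zero_le_one) a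
  have hs : 0 ≤ ∑ j, A.indicator (1 : Ω → ℝ) (ω j) := Finset.sum_nonneg fun i _ => h0 _
  rw [ENNReal.ofReal_inv_of_pos (by positivity), ENNReal.ofReal_add zero_le_one hs, 
    ENNReal.ofReal_sum_of_nonneg (fun i _ => h0 _), ENNReal.ofReal_one]
  congr 3
  ext j
  by_cases h : ω j ∈ A <;> simp [h]

lemma aux_var {Ω : Type*} [MeasurableSpace Ω] (μ : Measure Ω) [IsProbabilityMeasure μ]
    {E : Type*} [MeasurableSpace E] (U : Ω → E) (hU : Measurable U) (e : Ω → ℝ) (he : Measurable e)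
    (B : ℝ) (heB : ∀ ω, |e ω| ≤ B) 
    (horth : ∀ ψ : E → ℝ, Measurable ψ → (∃ c, ∀ z, |ψ z| ≤ c) → ∫ ω, ψ (U ω) * e ω ∂μ = 0)
    {n : ℕ} (w : Fin (n+1) → (Fin (n+1) → E) → ℝ) (hw : ∀ i, Measurable (w i)) (hw1 : ∀ i z, |w i z| ≤ 1) :
    ∫ ω, (∑ i, w i (fun j => U (ω j)) * e (ω i))^2 ∂(Measure.pi fun _ : Fin (n+1) => μ)
     = ∫ ω, ∑ i, (w i (fun j => U (ω j)))^2 * e (ω i)^2 ∂(Measure.pi fun _ : Fin (n+1) => μ) := by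
  have hB : 0 ≤ B := by
    by_contra hcon
    have : IsEmpty Ω := ⟨fun ω => hcon ((abs_nonneg _).trans (heB ω))⟩
    have h1 : μ Set.univ = 1 := measure_univ
    rw [Set.univ_eq_empty_iff.2 this] at h1
    simp at h1
  have hint : ∀ i j, Integrable (fun ω : Fin (n+1) → Ω => w i (fun j => U (ω j)) * e (ω i) * (w j (fun j => U (ω j)) * e (ω j)))
      (Measure.pi fun _ : Fin (n+1) => μ) := by
    intro i j
    apply Integrable.of_bound (C := (1 * B) * (1 * B))
    · have := hw i
      have := hw j
      apply Measurable.aestronglyMeasurable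
      fun_prop
    · refine Filter.Eventually.of_forall fun ω => ?_
      simp only [norm_mul, Real.norm_eq_abs]
      gcongr
      · exact hw1 _ _
      · exact heB _
      · exact hw1 _ _
      · exact heB _
  have hcross : ∀ i j, i ≠ j → ∫ ω : Fin (n+1) → Ω, w i (fun j => U (ω j)) * e (ω i) * (w j (fun j => U (ω j)) * e (ω j))
      ∂(Measure.pi fun _ : Fin (n+1) => μ) = 0 := by
    intro i j hij
    obtain ⟨j', rfl⟩ := Fin.exists_succAbove_eq hij.symm
    let Z : E × (Fin n → Ω) → (Fin (n+1) → E) := fun p => i.insertNth p.1 (fun l => U (p.2 l))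
    have hZ : Measurable Z := by
      have h1 := (MeasurableEquiv.piFinSuccAbove (fun _ : Fin (n+1) => E) i).symm.measurable
      have h2 : Measurable (fun p : E × (Fin n → Ω) => ((p.1, fun l => U (p.2 l)) : E × (Fin n → E))) := by fun_prop
      exact h1.comp h2
    let Ψ : E × (Fin n → Ω) → ℝ := fun p => w i (Z p) * (w (i.succAbove j') (Z p) * e (p.2 j'))
    have hΨ : Measurable Ψ := by
      have := (hw i).comp hZ
      have := (hw (i.succAbove j')).comp hZ
      simp only [Ψ]
      fun_prop
    have hΨB : ∀ p, |Ψ p| ≤ 1 * (1 * B) := by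
      intro p
      simp only [Ψ, abs_mul]
      gcongr
      · exact hw1 _ _
      · exact hw1 _ _
      · exact heB _
    have := aux_isplit μ i (fun p => Ψ (U p.1, p.2) * e p.1) (by fun_prop) (1 * (1 * B) * B) (by
      intro p
      rw [abs_mul]
      gcongr
      · exact hΨB _
      · exact heB _) (by
      intro y
      exact horth (fun z => Ψ (z, y)) (by fun_prop) ⟨_, fun z => hΨB _⟩)
    rw [← this]
    congr 1
    ext ω
    have hz : Z (U (ω i), fun j => ω (i.succAbove j)) = fun j => U (ω j) := by
      ext l
      simp only [Z]
      refine Fin.succAboveCases i ?_ ?_ l <;> simp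
    simp only [Ψ, hz]
    ring
  have e1 : ∀ ω : Fin (n+1) → Ω, (∑ i, w i (fun j => U (ω j)) * e (ω i))^2 
      = ∑ i, ∑ j, w i (fun j => U (ω j)) * e (ω i) * (w j (fun j => U (ω j)) * e (ω j)) := by
    intro ω
    rw [sq, Finset.sum_mul_sum]
  simp only [e1]
  have e2 : ∀ ω : Fin (n+1) → Ω, ∀ i, (w i (fun j => U (ω j)))^2 * e (ω i)^2 = 
     w i (fun j => U (ω j)) * e (ω i) * (w i (fun j => U (ω j)) * e (ω i)) := by
    intro ω i; ring
  simp only [e2]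
  rw [integral_finsetSum _ (fun i _ => hint i i), integral_finsetSum _ (fun i _ => integrable_finsetSum _ fun j _ => hint i j)]
  apply Finset.sum_congr rfl
  intro i _
  rw [integral_finsetSum _ (fun j _ => hint i j)]
  rw [Finset.sum_eq_single i]
  · intro j _ hj
    exact hcross i j hj.symm
  · simp

lemma aux_core {Ω : Type*} [MeasurableSpace Ω] (μ : Measure Ω) [IsProbabilityMeasure μ] {M : ℕ}
    (K : EuclideanSpace ℝ (Fin M) → ℝ) (b ρ : ℝ) (hb : 0 < b) (hρ : 0 < ρ) (hKm : Measurable K)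
    (hK0 : ∀ z, 0 ≤ K z) (hKb : ∀ z, ‖z‖ < ρ → b ≤ K z) (hK1 : ∀ z, K z ≤ 1)
    (U : Ω → EuclideanSpace ℝ (Fin M)) (hU : Measurable U) (Y : Ω → ℝ) (hY : Measurable Y)
    (B : ℝ) (hYB : ∀ ω, |Y ω| ≤ B) (φ : EuclideanSpace ℝ (Fin M) → ℝ) (hφ : Measurable φ)
    (hφB : ∀ ω, |φ (U ω)| ≤ B) (lam : ℝ) (hlip : ∀ x y, |φ x - φ y| ≤ lam * ‖y - x‖)
    (horth : ∀ ψ : EuclideanSpace ℝ (Fin M) → ℝ, Measurable ψ → (∃ c, ∀ z, |ψ z| ≤ c) → 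
      ∫ ω, ψ (U ω) * (Y ω - φ (U ω)) ∂μ = 0)
    (n : ℕ) (u : EuclideanSpace ℝ (Fin M)) (hu : |φ u| ≤ B) :
    ∫⁻ ω, ENNReal.ofReal ((∑ i, (K (u - U (ω i)) / ∑ j, K (u - U (ω j))) * Y (ω i) - φ u)^2)
      ∂(Measure.pi fun _ : Fin (n+1) => μ)
    ≤ ENNReal.ofReal (2 * (4 * B^2 * (2/b) + 4 * B^2)) * (((n:ℝ≥0∞)+1) * μ (U ⁻¹' Metric.ball u ρ))⁻¹
      + ENNReal.ofReal (2 * (2 * lam^2/b)) * 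
        ((∫⁻ ω, ENNReal.ofReal (K (u - U ω) * ‖u - U ω‖^2) ∂μ) * (μ (U ⁻¹' Metric.ball u ρ))⁻¹) := by
  set P := Measure.pi fun _ : Fin (n+1) => μ with hP
  set A := U ⁻¹' Metric.ball u ρ with hAdef
  have hA : MeasurableSet A := hU measurableSet_ball
  have hb1 : b ≤ 1 := (hKb 0 (by simpa using hρ)).trans (hK1 0)
  set w : Fin (n+1) → (Fin (n+1) → EuclideanSpace ℝ (Fin M)) → ℝ := 
    fun i z => K (u - z i) / ∑ j, K (u - z j) with hw
  have hwm : ∀ i, Measurable (w i) := by intro i; simp only [hw]; fun_prop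
  have hw1 : ∀ i z, |w i z| ≤ 1 := by
    intro i z
    have hs : 0 ≤ ∑ j, K (u - z j) := Finset.sum_nonneg fun j _ => hK0 _
    simp only [hw]
    rw [abs_of_nonneg (div_nonneg (hK0 _) hs)]
    exact div_le_one_of_le₀ (Finset.single_le_sum (f := fun j => K (u - z j)) (fun j _ => hK0 _) (Finset.mem_univ i)) hs
  set e : Ω → ℝ := fun ω => Y ω - φ (U ω) with he
  have hem : Measurable e := by simp only [he]; fun_prop
  have heB : ∀ ω, |e ω| ≤ 2 * B := by
    intro ω
    have := abs_sub (Y ω) (φ (U ω))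
    have := hYB ω
    have := hφB ω
    simp only [he]; linarith
  have hvar := aux_var μ U hU e hem (2*B) heB horth w hwm hw1
  set c : Ω → ℝ := A.indicator 1 with hc
  have hcm : Measurable c := measurable_one.indicator hA
  have hc01 : ∀ a, c a = 0 ∨ c a = 1 := by
    intro a
    by_cases h : a ∈ A <;> simp [hc, h]
  have hc0 : ∀ a, 0 ≤ c a := fun a => by rcases hc01 a with h | h <;> simp [h]
  have hck : ∀ a, b * c a ≤ K (u - U a) := by
    intro a
    by_cases h : a ∈ A
    · simp only [hc, Set.indicator_of_mem h, Pi.one_apply, mul_one]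
      apply hKb
      have : dist (U a) u < ρ := h
      rwa [dist_comm, dist_eq_norm] at this
    · simp [hc, h, hK0]
  -- pointwise variables
  let V : (Fin (n+1) → Ω) → ℝ := fun ω => ∑ i, w i (fun j => U (ω j)) * e (ω i)
  let N1 : (Fin (n+1) → Ω) → ℝ := fun ω => (1 + ∑ j, c (ω j))⁻¹
  let S : (Fin (n+1) → Ω) → ℝ := fun ω => ∑ i, (K (u - U (ω i)) * ‖u - U (ω i)‖^2) * (1 + ∑ j, c (ω (i.succAbove j)))⁻¹
  have hN1m : Measurable N1 := by simp only [N1]; fun_prop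
  have hVm : Measurable V := by
    simp only [V]
    fun_prop
  have hN10 : ∀ ω, 0 ≤ N1 ω := by
    intro ω
    have : 0 ≤ ∑ j, c (ω j) := Finset.sum_nonneg fun j _ => hc0 _
    simp only [N1]; positivity
  have hS0 : ∀ ω, 0 ≤ S ω := by
    intro ω
    apply Finset.sum_nonneg
    intro i _
    have : 0 ≤ ∑ j, c (ω (i.succAbove j)) := Finset.sum_nonneg fun j _ => hc0 _
    have := hK0 (u - U (ω i))
    positivity
  have hpt : ∀ ω, (∑ i, (K (u - U (ω i)) / ∑ j, K (u - U (ω j))) * Y (ω i) - φ u)^2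
      ≤ 2 * V ω^2 + (2 * (4 * B^2) * N1 ω + 2 * (2 * lam^2/b) * S ω) := by
    intro ω
    have h1 := aux_detB (fun i => K (u - U (ω i))) (fun i => c (ω i)) (fun i => φ (U (ω i))) (fun i => ‖u - U (ω i)‖)
      b B lam (φ u) hb (fun i => hK0 _) (fun i => hc01 _) (fun i => hck _) (fun i => hφB _) hu (fun i => hlip _ _)
    have h2 : ∑ i, (K (u - U (ω i)) / ∑ j, K (u - U (ω j))) * Y (ω i) - φ u 
       = V ω + (∑ i, (K (u - U (ω i)) / ∑ j, K (u - U (ω j))) * φ (U (ω i)) - φ u) := by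
      simp only [V, he, hw, mul_sub, Finset.sum_sub_distrib]; ring
    rw [h2]
    have h3 := add_sq_le (a := V ω) (b := (∑ i, (K (u - U (ω i)) / ∑ j, K (u - U (ω j))) * φ (U (ω i)) - φ u))
    simp only [N1, S]
    linarith
  have hV2 : ∫⁻ ω, ENNReal.ofReal (V ω^2) ∂P ≤ ENNReal.ofReal (4 * B^2 * (2/b)) * ∫⁻ ω, ENNReal.ofReal (N1 ω) ∂P := by
    have hVB : ∀ ω, |V ω| ≤ ∑ i : Fin (n+1), 1 * (2 * B) := by
      intro ω
      refine (Finset.abs_sum_le_sum_abs _ _).trans (Finset.sum_le_sum fun i _ => ?_)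
      rw [abs_mul]
      gcongr
      · exact hw1 i (fun j => U (ω j))
      · exact heB _
    have hQm : Measurable fun ω : Fin (n+1) → Ω => ∑ i, (w i (fun j => U (ω j)))^2 * e (ω i)^2 := by fun_prop
    have hQ : ∀ ω : Fin (n+1) → Ω, ∑ i, (w i (fun j => U (ω j)))^2 * e (ω i)^2 ≤ 4 * B^2 * (2/b) * N1 ω := by
      intro ω
      have h1 := aux_detA (fun i => K (u - U (ω i))) (fun i => c (ω i)) b hb hb1 (fun i => hK0 _) (fun i => hK1 _) 
        (fun i => hc01 _) (fun i => hck _)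
      calc _ ≤ ∑ i, (w i (fun j => U (ω j)))^2 * (4 * B^2) := by
            apply Finset.sum_le_sum; intro i _
            gcongr
            rw [show 4 * B^2 = (2*B)^2 by ring]
            have := abs_le.1 (heB (ω i))
            apply sq_le_sq' <;> linarith
        _ = 4 * B^2 * ∑ i, (w i (fun j => U (ω j)))^2 := by rw [← Finset.sum_mul, mul_comm]
        _ ≤ 4 * B^2 * ((2/b) * N1 ω) := by gcongr
        _ = _ := by ring
    have hVi : Integrable (fun ω => V ω^2) P := by
      apply Integrable.of_bound (C := (∑ i : Fin (n+1), 1 * (2 * B))^2) (by fun_prop)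
      refine Filter.Eventually.of_forall fun ω => ?_
      rw [norm_pow, Real.norm_eq_abs]
      gcongr
      exact hVB ω
    have hQi : Integrable (fun ω : Fin (n+1) → Ω => ∑ i, (w i (fun j => U (ω j)))^2 * e (ω i)^2) P := by
      apply integrable_finsetSum
      intro i _
      refine Integrable.of_bound (C := 1^2 * (2 * B)^2) ?_ ?_
      · have := hwm i
        apply Measurable.aestronglyMeasurable
        fun_prop
      · refine Filter.Eventually.of_forall fun ω => ?_
        simp only [norm_mul, norm_pow, Real.norm_eq_abs]
        gcongr
        · exact hw1 i (fun j => U (ω j))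
        · exact heB _
    rw [← ofReal_integral_eq_lintegral_ofReal hVi (Filter.Eventually.of_forall fun ω => sq_nonneg _)]
    simp only [V]
    rw [hvar, ofReal_integral_eq_lintegral_ofReal hQi (Filter.Eventually.of_forall fun ω => 
      Finset.sum_nonneg fun i _ => by positivity)]
    rw [← lintegral_const_mul _ (by fun_prop)]
    apply lintegral_mono
    intro ω
    simp only
    rw [← ENNReal.ofReal_mul (by positivity)]
    exact ENNReal.ofReal_le_ofReal (hQ ω)
  have hN1i : ∫⁻ ω, ENNReal.ofReal (N1 ω) ∂P ≤ (((n:ℝ≥0∞)+1) * μ A)⁻¹ := by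
    simp only [N1, hc, aux_ofReal_count]
    refine (aux_count' μ (n+1) A hA).trans ?_
    gcongr
    exact le_self_add
  have hSi : ∫⁻ ω, ENNReal.ofReal (S ω) ∂P ≤ (∫⁻ ω, ENNReal.ofReal (K (u - U ω) * ‖u - U ω‖^2) ∂μ) * (μ A)⁻¹ := by
    have e1 : ∀ ω, ENNReal.ofReal (S ω) = ∑ i, ENNReal.ofReal (K (u - U (ω i)) * ‖u - U (ω i)‖^2) * 
        (1 + ∑ j, A.indicator (1 : Ω → ℝ≥0∞) (ω (i.succAbove j)))⁻¹ := by
      intro ω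
      simp only [S]
      rw [ENNReal.ofReal_sum_of_nonneg]
      · apply Finset.sum_congr rfl
        intro i _
        rw [ENNReal.ofReal_mul (mul_nonneg (hK0 _) (sq_nonneg _)), 
          ← aux_ofReal_count A (fun j => ω (i.succAbove j))]
      · intro i _
        have : 0 ≤ ∑ j, c (ω (i.succAbove j)) := Finset.sum_nonneg fun j _ => hc0 _
        have := hK0 (u - U (ω i))
        positivity
    have hind : Measurable (A.indicator (1 : Ω → ℝ≥0∞)) := measurable_one.indicator hA
    simp only [e1]
    rw [lintegral_finsetSum _ (by intro i _; fun_prop)]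
    have e2 : ∀ i : Fin (n+1), ∫⁻ ω, ENNReal.ofReal (K (u - U (ω i)) * ‖u - U (ω i)‖^2) * 
        (1 + ∑ j, A.indicator (1 : Ω → ℝ≥0∞) (ω (i.succAbove j)))⁻¹ ∂P
        ≤ (∫⁻ ω, ENNReal.ofReal (K (u - U ω) * ‖u - U ω‖^2) ∂μ) * (((n:ℝ≥0∞)+1) * μ A)⁻¹ := by
      intro i
      rw [hP, aux_lsplit μ i (fun a => ENNReal.ofReal (K (u - U a) * ‖u - U a‖^2)) 
        (fun y => (1 + ∑ j, A.indicator (1 : Ω → ℝ≥0∞) (y j))⁻¹) (by fun_prop) (by fun_prop)]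
      gcongr
      exact aux_count' μ n A hA
    refine (Finset.sum_le_sum fun i _ => e2 i).trans ?_
    simp only [Finset.sum_const, Finset.card_univ, Fintype.card_fin, nsmul_eq_mul]
    push_cast
    rw [mul_left_comm]
    gcongr
    rw [ENNReal.mul_inv (Or.inl (by simp)) (Or.inl (by finiteness)), ← mul_assoc, 
      ENNReal.mul_inv_cancel (by simp) (by finiteness), one_mul]
  calc _ ≤ ∫⁻ ω, (ENNReal.ofReal 2 * ENNReal.ofReal (V ω^2) + (ENNReal.ofReal (2 * (4 * B^2)) * ENNReal.ofReal (N1 ω) + 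
        ENNReal.ofReal (2 * (2 * lam^2/b)) * ENNReal.ofReal (S ω))) ∂P := by
        apply lintegral_mono
        intro ω
        simp only
        have := hN10 ω
        have := hS0 ω
        rw [← ENNReal.ofReal_mul (by positivity), ← ENNReal.ofReal_mul (by positivity), ← ENNReal.ofReal_mul (by positivity),
          ← ENNReal.ofReal_add (by positivity) (by positivity), ← ENNReal.ofReal_add (by positivity) (by positivity)]
        exact ENNReal.ofReal_le_ofReal (hpt ω)
    _ = ENNReal.ofReal 2 * (∫⁻ ω, ENNReal.ofReal (V ω^2) ∂P) + (ENNReal.ofReal (2 * (4 * B^2)) * (∫⁻ ω, ENNReal.ofReal (N1 ω) ∂P) + 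
        ENNReal.ofReal (2 * (2 * lam^2/b)) * ∫⁻ ω, ENNReal.ofReal (S ω) ∂P) := by
        rw [lintegral_add_left (by fun_prop), lintegral_add_left (by fun_prop), lintegral_const_mul' _ _ (by finiteness),
          lintegral_const_mul' _ _ (by finiteness), lintegral_const_mul' _ _ (by finiteness)]
    _ ≤ ENNReal.ofReal 2 * (ENNReal.ofReal (4 * B^2 * (2/b)) * (((n:ℝ≥0∞)+1) * μ A)⁻¹) + 
         (ENNReal.ofReal (2 * (4 * B^2)) * (((n:ℝ≥0∞)+1) * μ A)⁻¹ + 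
        ENNReal.ofReal (2 * (2 * lam^2/b)) * ((∫⁻ ω, ENNReal.ofReal (K (u - U ω) * ‖u - U ω‖^2) ∂μ) * (μ A)⁻¹)) := by
        gcongr
        refine hV2.trans ?_
        gcongr
    _ = _ := by
        rw [mul_add 2 (4 * B^2 * (2/b)), ENNReal.ofReal_add (by positivity) (by positivity), 
          ENNReal.ofReal_mul (p := 2) (q := 4 * B^2 * (2/b)) (by norm_num)]
        ring

lemma aux_int {Ω : Type*} [MeasurableSpace Ω] (μ : Measure Ω) [IsProbabilityMeasure μ] {M : ℕ}
    (K : EuclideanSpace ℝ (Fin M) → ℝ) (b ρ : ℝ) (hb : 0 < b) (hρ : 0 < ρ) (hKm : Measurable K)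
    (hK0 : ∀ z, 0 ≤ K z) (hKb : ∀ z, ‖z‖ < ρ → b ≤ K z) (hK1 : ∀ z, K z ≤ 1)
    (A : ℝ) (hA : 0 < A) (hKA : ∀ z, K z * ‖z‖^2 ≤ A * (1 + ‖z‖) ^ (-((M:ℝ)+1)))
    (U : Ω → EuclideanSpace ℝ (Fin M)) (hU : Measurable U) (Y : Ω → ℝ) (hY : Measurable Y)
    (B : ℝ) (hYB : ∀ ω, |Y ω| ≤ B) (φ : EuclideanSpace ℝ (Fin M) → ℝ) (hφ : Measurable φ)
    (hφB : ∀ ω, |φ (U ω)| ≤ B) (lam : ℝ) (hlip : ∀ x y, |φ x - φ y| ≤ lam * ‖y - x‖)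
    (horth : ∀ ψ : EuclideanSpace ℝ (Fin M) → ℝ, Measurable ψ → (∃ c, ∀ z, |ψ z| ≤ c) → 
      ∫ ω, ψ (U ω) * (Y ω - φ (U ω)) ∂μ = 0)
    (T : ℝ) (hT : ∀ ω, ‖U ω‖ ≤ T)
    (n : ℕ)  :
    ∫⁻ ω', (∫⁻ ω, ENNReal.ofReal ((∑ i, (K (U ω' - U (ω i)) / ∑ j, K (U ω' - U (ω j))) * Y (ω i) - φ (U ω'))^2)
      ∂(Measure.pi fun _ : Fin (n+1) => μ)) ∂μ
    ≤ ENNReal.ofReal (2 * (4 * B^2 * (2/b) + 4 * B^2)) * (((n:ℝ≥0∞)+1)⁻¹ * 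
        ((volume (Metric.ball (0 : EuclideanSpace ℝ (Fin M)) (ρ/2)))⁻¹ 
        * volume (Metric.closedBall (0 : EuclideanSpace ℝ (Fin M)) (T + ρ/2))))
      + ENNReal.ofReal (2 * (2 * lam^2/b)) * ((volume (Metric.ball (0 : EuclideanSpace ℝ (Fin M)) (ρ/2)))⁻¹ 
        * ∫⁻ w : EuclideanSpace ℝ (Fin M), ENNReal.ofReal (A * (1+ρ/2)^((M:ℝ)+1) * (1 + ‖w‖) ^ (-((M:ℝ)+1)))) := by
  set q := μ.map U with hq
  have : IsProbabilityMeasure q := Measure.isProbabilityMeasure_map hU.aemeasurable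
  have hqm : Measurable fun u : EuclideanSpace ℝ (Fin M) => q (Metric.ball u ρ) := by
    have : MeasurableSet {p : EuclideanSpace ℝ (Fin M) × EuclideanSpace ℝ (Fin M) | dist p.2 p.1 < ρ} :=
      (isOpen_lt (by fun_prop) (by fun_prop)).measurableSet
    exact measurable_measure_prodMk_left this
  let F : EuclideanSpace ℝ (Fin M) → ℝ≥0∞ := fun u => ∫⁻ v, ENNReal.ofReal (K (u - v) * ‖u - v‖^2) ∂q
  have hFm : Measurable F := by
    apply Measurable.lintegral_prod_right'
      (f := fun p : EuclideanSpace ℝ (Fin M) × EuclideanSpace ℝ (Fin M) => ENNReal.ofReal (K (p.1 - p.2) * ‖p.1 - p.2‖^2))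
    fun_prop
  have hqA : ∀ u, μ (U ⁻¹' Metric.ball u ρ) = q (Metric.ball u ρ) := fun u => 
    (Measure.map_apply hU measurableSet_ball).symm
  have hFe : ∀ u, ∫⁻ ω, ENNReal.ofReal (K (u - U ω) * ‖u - U ω‖^2) ∂μ = F u := by
    intro u
    simp only [F, hq]
    rw [lintegral_map (by fun_prop) hU]
  let J : EuclideanSpace ℝ (Fin M) → ℝ≥0∞ := fun w => 
    ENNReal.ofReal (A * (1+ρ/2)^((M:ℝ)+1) * (1 + ‖w‖) ^ (-((M:ℝ)+1)))
  have hJm : Measurable J := by simp only [J]; fun_prop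
  have hs : 0 < ρ/2 := by linarith
  have hFJ : ∀ z w, dist z w < ρ/2 → ENNReal.ofReal (K z * ‖z‖^2) ≤ J w := by
    intro z w hzw
    apply ENNReal.ofReal_le_ofReal
    refine (hKA z).trans ?_
    rw [mul_assoc]
    gcongr
    have h1 : 0 < 1 + ‖z‖ := by positivity
    have h2 : 0 < 1 + ‖w‖ := by positivity
    have h3 : 0 < 1 + ρ/2 := by positivity
    rw [Real.rpow_neg h1.le, Real.rpow_neg h2.le, ← div_eq_mul_inv, ← Real.div_rpow h3.le h2.le, ← Real.inv_rpow h1.le]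
    gcongr
    rw [inv_le_comm₀ h1 (by positivity), inv_div, div_le_iff₀ h3]
    have h4 : ‖w‖ ≤ ‖z‖ + ρ/2 := by
      rw [dist_comm, dist_eq_norm] at hzw
      have := norm_sub_norm_le w z
      linarith
    nlinarith [norm_nonneg z]
  have hg1 := aux_geom q (ρ/2) hs ((Metric.closedBall 0 T).indicator 1) ((Metric.closedBall 0 (T + ρ/2)).indicator 1)
    (measurable_one.indicator measurableSet_closedBall) (by
      intro u w huw
      by_cases h : u ∈ Metric.closedBall (0 : EuclideanSpace ℝ (Fin M)) T
      · have h' : w ∈ Metric.closedBall (0 : EuclideanSpace ℝ (Fin M)) (T + ρ/2) := by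
          rw [Metric.mem_closedBall] at h ⊢
          have := dist_triangle w u 0
          rw [dist_comm w u] at this
          linarith
        simp [h, h']
      · simp [h])
  rw [lintegral_indicator_one measurableSet_closedBall] at hg1
  have hg2 := aux_geom q (ρ/2) hs F (fun w => ∫⁻ v, J (w - v) ∂q) hFm (by
    intro u w huw
    apply lintegral_mono
    intro v
    exact hFJ _ _ (by simpa using huw))
  have hJi : ∫⁻ w, ∫⁻ v, J (w - v) ∂q = ∫⁻ w, J w := by
    rw [lintegral_lintegral_swap (by fun_prop)]
    simp only [lintegral_sub_right_eq_self J]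
    simp
  rw [hJi] at hg2
  rw [show 2 * (ρ/2) = ρ by ring] at hg1 hg2
  calc _ ≤ ∫⁻ ω', (ENNReal.ofReal (2 * (4 * B^2 * (2/b) + 4 * B^2)) * (((n:ℝ≥0∞)+1)⁻¹ * 
          ((Metric.closedBall 0 T).indicator 1 (U ω') * (q (Metric.ball (U ω') ρ))⁻¹))
      + ENNReal.ofReal (2 * (2 * lam^2/b)) * 
        (F (U ω') * (q (Metric.ball (U ω') ρ))⁻¹)) ∂μ := by
        apply lintegral_mono
        intro ω'
        have hh := aux_core μ K b ρ hb hρ hKm hK0 hKb hK1 U hU Y hY B hYB φ hφ hφB lam hlip horth n (U ω') (hφB ω')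
        rw [hqA, hFe, ENNReal.mul_inv (Or.inl (by simp)) (Or.inl (by finiteness))] at hh
        have hm : U ω' ∈ Metric.closedBall (0 : EuclideanSpace ℝ (Fin M)) T := by simpa using hT ω'
        beta_reduce
        rw [Set.indicator_of_mem hm, Pi.one_apply, one_mul]
        exact hh
    _ = ∫⁻ u, (ENNReal.ofReal (2 * (4 * B^2 * (2/b) + 4 * B^2)) * (((n:ℝ≥0∞)+1)⁻¹ * 
          ((Metric.closedBall 0 T).indicator 1 u * (q (Metric.ball u ρ))⁻¹))
      + ENNReal.ofReal (2 * (2 * lam^2/b)) * 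
        (F u * (q (Metric.ball u ρ))⁻¹)) ∂q := by
        have hi : Measurable ((Metric.closedBall (0 : EuclideanSpace ℝ (Fin M)) T).indicator (1 : EuclideanSpace ℝ (Fin M) → ℝ≥0∞)) := 
          measurable_one.indicator measurableSet_closedBall
        rw [hq, lintegral_map _ hU]
        rw [← hq]
        exact ((hi.mul hqm.inv).const_mul _ |>.const_mul _).add ((hFm.mul hqm.inv).const_mul _)
    _ ≤ _ := by
        have hi : Measurable ((Metric.closedBall (0 : EuclideanSpace ℝ (Fin M)) T).indicator (1 : EuclideanSpace ℝ (Fin M) → ℝ≥0∞)) := 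
          measurable_one.indicator measurableSet_closedBall
        have hm0 : Measurable fun u => (Metric.closedBall (0 : EuclideanSpace ℝ (Fin M)) T).indicator (1 : EuclideanSpace ℝ (Fin M) → ℝ≥0∞) u 
            * (q (Metric.ball u ρ))⁻¹ := hi.mul hqm.inv
        rw [lintegral_add_left (hm0.const_mul _ |>.const_mul _), lintegral_const_mul' _ _ ENNReal.ofReal_ne_top,
          lintegral_const_mul' _ _ (by simp), lintegral_const_mul' _ _ ENNReal.ofReal_ne_top]

        gcongr

lemma aux_rate {Ω : Type*} [MeasurableSpace Ω] (μ : Measure Ω) [IsProbabilityMeasure μ]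
    {M : ℕ} (hM : 0 < M) (K : EuclideanSpace ℝ (Fin M) → ℝ) (b ρ : ℝ) (hb : 0 < b) (hρ : 0 < ρ) (hKm : Measurable K)
    (hK0 : ∀ z, 0 ≤ K z) (hKb : ∀ z, ‖z‖ < ρ → b ≤ K z) (hK1 : ∀ z, K z ≤ 1)
    (A : ℝ) (hA : 0 < A) (hKA : ∀ z, K z * ‖z‖^2 ≤ A * (1 + ‖z‖) ^ (-((M:ℝ)+1)))
    (U : Ω → EuclideanSpace ℝ (Fin M)) (hU : Measurable U) (Y : Ω → ℝ) (hY : Measurable Y)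
    (B : ℝ) (hYB : ∀ ω, |Y ω| ≤ B) (R : ℝ) (hR : 0 < R) (hUR : ∀ ω, ‖U ω‖ ≤ R)
    (G : EuclideanSpace ℝ (Fin M) → ℝ) (hG : Measurable G)
    (hGB : ∀ ω, |G (U ω)| ≤ B) (L : ℝ) (hlip : ∀ x y, |G x - G y| ≤ L * ‖y - x‖)
    (horth : ∀ ψ : EuclideanSpace ℝ (Fin M) → ℝ, Measurable ψ → (∃ c, ∀ z, |ψ z| ≤ c) → 
      ∫ ω, ψ (U ω) * (Y ω - G (U ω)) ∂μ = 0) :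
    ∃ C : ℝ, 0 < C ∧ ∀ n : ℕ, ∀ h : ℝ, h = ((n+1 : ℕ) : ℝ) ^ (-(1 : ℝ) / ((M : ℝ) + 2)) →
      ∫⁻ ω', (∫⁻ ω, ENNReal.ofReal ((∑ i, (K (h⁻¹ • (U ω' - U (ω i))) / ∑ j, K (h⁻¹ • (U ω' - U (ω j)))) 
        * Y (ω i) - G (U ω'))^2) ∂(Measure.pi fun _ : Fin (n+1) => μ)) ∂μ 
      ≤ ENNReal.ofReal (C * ((n+1 : ℕ) : ℝ) ^ (-(2 : ℝ) / ((M : ℝ) + 2))) := by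
  set V := volume (Metric.ball (0 : EuclideanSpace ℝ (Fin M)) (ρ/2)) with hV
  have hs : 0 < ρ/2 := by linarith
  have hV0 : V ≠ 0 := (Metric.measure_ball_pos _ _ hs).ne'
  have hVt : V ≠ ∞ := measure_ball_lt_top.ne
  set JJ := ∫⁻ w : EuclideanSpace ℝ (Fin M), ENNReal.ofReal (A * (1+ρ/2)^((M:ℝ)+1) * (1 + ‖w‖) ^ (-((M:ℝ)+1))) with hJJ
  have hJJt : JJ ≠ ∞ := by
    have h1 := finite_integral_one_add_norm (E := EuclideanSpace ℝ (Fin M)) (μ := volume) (r := (M:ℝ)+1) (by simp)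
    simp only [hJJ]
    simp_rw [ENNReal.ofReal_mul (show 0 ≤ A * (1+ρ/2)^((M:ℝ)+1) by positivity)]
    rw [lintegral_const_mul' _ _ (by finiteness)]
    finiteness
  have hVJ : V⁻¹ * JJ ≠ ∞ := ENNReal.mul_ne_top (ENNReal.inv_ne_top.2 hV0) hJJt
  set κ := (V⁻¹ * JJ).toReal with hκ
  have hκe : V⁻¹ * JJ = ENNReal.ofReal κ := (ENNReal.ofReal_toReal hVJ).symm
  have hκ0 : 0 ≤ κ := ENNReal.toReal_nonneg
  set C1 := 2 * (4 * B^2 * (2/b) + 4 * B^2) with hC1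
  have hC10 : 0 ≤ C1 := by positivity
  refine ⟨C1 * (R/(ρ/2) + 1)^M + 2 * (2 * L^2/b) * κ + 1, by positivity, ?_⟩
  intro n h hh
  set l : ℝ := ((n+1 : ℕ) : ℝ) with hl
  have hl1 : 1 ≤ l := by simp [hl]
  have hl0 : 0 < l := by linarith
  have hh0 : 0 < h := by rw [hh]; positivity
  have hh1 : h ≤ 1 := by
    rw [hh]; apply Real.rpow_le_one_of_one_le_of_nonpos hl1
    rw [neg_div]
    have : 0 < 1 / ((M:ℝ) + 2) := by positivity
    linarith
  have hh2 : h^2 = l ^ (-(2 : ℝ) / ((M : ℝ) + 2)) := by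
    rw [hh, ← Real.rpow_natCast, ← Real.rpow_mul hl0.le]; congr 1; push_cast; ring
  have hh3 : h^(M+2) = l⁻¹ := by
    rw [hh, ← Real.rpow_natCast, ← Real.rpow_mul hl0.le, ← Real.rpow_neg_one]; congr 1; push_cast; field_simp
  have key := aux_int μ K b ρ hb hρ hKm hK0 hKb hK1 A hA hKA (fun ω => h⁻¹ • U ω) (by fun_prop) Y hY B hYB
    (fun z => G (h • z)) (by fun_prop) (by simpa [smul_inv_smul₀ hh0.ne'] using hGB) (L * h) (by
      intro x y
      refine (hlip _ _).trans (le_of_eq ?_)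
      rw [← smul_sub, norm_smul, Real.norm_of_nonneg hh0.le, mul_assoc]) (by
      intro ψ hψ hψc
      obtain ⟨c, hc⟩ := hψc
      simp only [smul_inv_smul₀ hh0.ne']
      exact horth (fun z => ψ (h⁻¹ • z)) (by fun_prop) ⟨c, fun z => hc _⟩) (h⁻¹ * R) (by
      intro ω
      rw [norm_smul, Real.norm_of_nonneg (inv_pos.2 hh0).le]
      have := hUR ω
      gcongr) n
  simp only [smul_inv_smul₀ hh0.ne', ← smul_sub] at key
  refine key.trans ?_
  rw [← hV, ← hJJ, hκe]
  have hball : V⁻¹ * volume (Metric.closedBall (0 : EuclideanSpace ℝ (Fin M)) (h⁻¹ * R + ρ/2)) 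
      = ENNReal.ofReal (((h⁻¹ * R + ρ/2)/(ρ/2))^M) := by
    rw [mul_comm, ← div_eq_mul_inv]
    symm
    rw [ENNReal.eq_div_iff hV0 hVt, mul_comm]
    rw [hV, Measure.addHaar_closedBall _ _ (by positivity), Measure.addHaar_ball_of_pos _ _ hs]
    simp only [finrank_euclideanSpace, Fintype.card_fin]
    rw [← mul_assoc, ← ENNReal.ofReal_mul (by positivity), ← mul_pow, div_mul_cancel₀ _ hs.ne']
  rw [hball]
  have hninv : ((n:ℝ≥0∞)+1)⁻¹ = ENNReal.ofReal l⁻¹ := by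
    rw [ENNReal.ofReal_inv_of_pos hl0, hl, ENNReal.ofReal_natCast]; push_cast; rfl
  rw [hninv, ← ENNReal.ofReal_mul (by positivity), ← ENNReal.ofReal_mul (by positivity), ← ENNReal.ofReal_mul (by positivity),
    ← ENNReal.ofReal_add (by positivity) (by positivity)]
  apply ENNReal.ofReal_le_ofReal
  rw [← hh2, ← hh3]
  have hb2 : (h⁻¹ * R + ρ/2)/(ρ/2) ≤ h⁻¹ * (R/(ρ/2) + 1) := by
    have : 1 ≤ h⁻¹ := (one_le_inv₀ hh0).2 hh1
    have e : (h⁻¹ * R + ρ/2)/(ρ/2) = h⁻¹ * (R/(ρ/2)) + 1 := by field_simp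
    rw [e, mul_add]; linarith
  have hb3 : h^(M+2) * ((h⁻¹ * R + ρ/2)/(ρ/2))^M ≤ h^2 * (R/(ρ/2) + 1)^M := by
    calc _ ≤ h^(M+2) * (h⁻¹ * (R/(ρ/2) + 1))^M := by gcongr
      _ = _ := by rw [mul_pow, pow_add, inv_pow]; field_simp
  have e2 : 2 * (2 * (L * h)^2/b) * κ = h^2 * (2 * (2 * L^2/b) * κ) := by ring
  rw [e2]
  nlinarith [mul_le_mul_of_nonneg_left hb3 hC10, sq_nonneg h]

set_option maxHeartbeats 800000 in
lemma aux_main {Ω : Type*} [MeasurableSpace Ω] (μ : Measure Ω) [IsProbabilityMeasure μ]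
    {d M : ℕ} (hM : 0 < M)
    (K : EuclideanSpace ℝ (Fin M) → ℝ) (b ρ κ₀ : ℝ)
    (hK : IsRegularKernel K b ρ κ₀)
    (α R_K C_K : ℝ) (hα : 0 < α) (hC_K : 0 < C_K)
    (htail : ∀ z : EuclideanSpace ℝ (Fin M), R_K ≤ ‖z‖ →
      K z ≤ C_K * Real.exp (-‖z‖ ^ α))
    (X : Ω → Fin d → ℝ) (Y : Ω → ℝ) (hX : Measurable X) (hY : Measurable Y)
    (R : ℝ) (hR : 0 < R) (hYbdd : ∀ ω, |Y ω| ≤ R)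
    (r : (Fin d → ℝ) → EuclideanSpace ℝ (Fin M)) (hr : Measurable r)
    (hrBdd : ∀ x, ‖r x‖ ≤ R)
    (L : ℝ) (hL : 0 ≤ L)
    (G : EuclideanSpace ℝ (Fin M) → ℝ) (hGLip : LipschitzWith L.toNNReal G)
    (hGCE : (fun ω => G (r (X ω))) =ᵐ[μ]
      μ[Y | MeasurableSpace.comap (fun ω => r (X ω)) inferInstance])
    (gstar : (Fin d → ℝ) → ℝ) (hgstar : Measurable gstar) (hgB : ∀ x, |gstar x| ≤ R)
    (hgstarCE : (fun ω => gstar (X ω)) =ᵐ[μ]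
      μ[Y | MeasurableSpace.comap X inferInstance]) :
    ∃ C : ℝ, 0 < C ∧ ∀ ℓ : ℕ, 1 ≤ ℓ →
      ∫ ω : (Fin ℓ → Ω) × Ω,
          |aggEstimator K ((ℓ : ℝ) ^ (-(1 : ℝ) / ((M : ℝ) + 2))) r X Y ω.1 (X ω.2)
              - gstar (X ω.2)| ^ 2
          ∂((Measure.pi fun _ : Fin ℓ => μ).prod μ)
        ≤ (⨅ m : Fin M, ∫ ω, |r (X ω) m - gstar (X ω)| ^ 2 ∂μ)
          + C * (ℓ : ℝ) ^ (-(2 : ℝ) / ((M : ℝ) + 2)) := by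
  obtain ⟨A, hA, hKA⟩ := aux_tail K hK.le_one α R_K C_K hα hC_K htail
  have hGm : Measurable G := hGLip.continuous.measurable
  have hKm := hK.measurable
  have hlip : ∀ x y, |G x - G y| ≤ L * ‖y - x‖ := by
    intro x y
    have := hGLip.dist_le_mul x y
    rwa [Real.coe_toNNReal _ hL, dist_comm x y, dist_eq_norm, dist_eq_norm] at this
  set B := R + (|G 0| + L * R) with hBdef
  have hYi : Integrable Y μ := Integrable.of_bound hY.aestronglyMeasurable R (Filter.Eventually.of_forall hYbdd)
  have hYB : ∀ ω, |Y ω| ≤ B := by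
    intro ω
    have := hYbdd ω
    have : 0 ≤ |G 0| + L * R := by positivity
    linarith
  have hgB' : ∀ x, |gstar x| ≤ B := by
    intro x
    have := hgB x
    have : 0 ≤ |G 0| + L * R := by positivity
    linarith
  have hrB' : ∀ x m, |r x m| ≤ B := by
    intro x m
    have h1 := hrBdd x
    have h2 := PiLp.norm_apply_le (r x) m
    rw [Real.norm_eq_abs] at h2
    have : 0 ≤ |G 0| + L * R := by positivity
    linarith
  have hB0 : 0 ≤ B := by positivity
  have hGB : ∀ x, |G (r x)| ≤ B := by
    intro x
    have h1 := hlip (r x) 0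
    rw [zero_sub, norm_neg] at h1
    have h2 := hrBdd x
    have h3 : |G (r x)| ≤ |G (r x) - G 0| + |G 0| := by
      have := abs_add_le (G (r x) - G 0) (G 0)
      simpa using this
    have h4 : L * ‖r x‖ ≤ L * R := by gcongr
    linarith
  have horth1 : ∀ ψ : EuclideanSpace ℝ (Fin M) → ℝ, Measurable ψ → ∀ c, (∀ x, |ψ (r x)| ≤ c) → 
      ∫ ω, ψ (r (X ω)) * (Y ω - G (r (X ω))) ∂μ = 0 := by
    intro ψ hψ c hc
    exact aux_orth μ (fun ω => r (X ω)) (hr.comp hX) Y _ hYi hGCE ψ hψ c (fun ω => hc _)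
  have horth2 : ∀ ψ : EuclideanSpace ℝ (Fin M) → ℝ, Measurable ψ → ∀ c, (∀ x, |ψ (r x)| ≤ c) → 
      ∫ ω, ψ (r (X ω)) * (G (r (X ω)) - gstar (X ω)) ∂μ = 0 := by
    intro ψ hψ c hc
    have h1 := horth1 ψ hψ c hc
    have h2 := aux_orth μ X hX Y _ hYi hgstarCE (fun x => ψ (r x)) (hψ.comp hr) c (fun ω => hc _)
    have hi : ∀ Z : Ω → ℝ, Measurable Z → (∀ ω, |Z ω| ≤ B) → Integrable (fun ω => ψ (r (X ω)) * (Y ω - Z ω)) μ := by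
      intro Z hZ hZB
      refine Integrable.of_bound (C := c * (B + B)) (by fun_prop) (Filter.Eventually.of_forall fun ω => ?_)
      rw [norm_mul, Real.norm_eq_abs, Real.norm_eq_abs]
      have h3 := abs_sub (Y ω) (Z ω)
      have h4 := hZB ω
      have h5 := hYB ω
      have h6 : |Y ω - Z ω| ≤ B + B := by linarith
      have h7 := hc (X ω)
      have h8 : 0 ≤ c := (abs_nonneg _).trans h7
      gcongr
    have h3 := integral_sub (hi _ (hgstar.comp hX) fun ω => hgB' _) (hi _ (hGm.comp (hr.comp hX)) fun ω => hGB _)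
    simp only [Function.comp] at h3
    rw [h1, h2, sub_zero] at h3
    rw [← h3]
    congr 1
    ext ω
    ring
  have hproj : ∫ ω, (G (r (X ω)) - gstar (X ω))^2 ∂μ ≤ ⨅ m : Fin M, ∫ ω, |r (X ω) m - gstar (X ω)| ^ 2 ∂μ := by
    have : Nonempty (Fin M) := ⟨⟨0, hM⟩⟩
    apply le_ciInf
    intro m
    have hdB : ∀ ω, |r (X ω) m - G (r (X ω))| ≤ B + B := by
      intro ω
      have h3 := abs_sub (r (X ω) m) (G (r (X ω)))
      have h4 := hGB (X ω)
      have h5 := hrB' (X ω) m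
      linarith
    have hdB2 : ∀ ω, |G (r (X ω)) - gstar (X ω)| ≤ B + B := by
      intro ω
      have h3 := abs_sub (G (r (X ω))) (gstar (X ω))
      have h4 := hGB (X ω)
      have h5 := hgB' (X ω)
      linarith
    have ho := horth2 (fun z => z m - G z) (by fun_prop) (B + B) (by
      intro x
      have h3 := abs_sub (r x m) (G (r x))
      have h4 := hGB x
      have h5 := hrB' x m
      linarith)
    have hi1 : Integrable (fun ω => (r (X ω) m - G (r (X ω)))^2) μ := by
      refine Integrable.of_bound (C := (B+B)^2) (by fun_prop) (Filter.Eventually.of_forall fun ω => ?_)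
      rw [norm_pow, Real.norm_eq_abs]
      have := hdB ω
      gcongr
    have hi2 : Integrable (fun ω => (G (r (X ω)) - gstar (X ω))^2) μ := by
      refine Integrable.of_bound (C := (B+B)^2) (by fun_prop) (Filter.Eventually.of_forall fun ω => ?_)
      rw [norm_pow, Real.norm_eq_abs]
      have := hdB2 ω
      gcongr
    have hi3 : Integrable (fun ω => (r (X ω) m - G (r (X ω))) * (G (r (X ω)) - gstar (X ω))) μ := by
      refine Integrable.of_bound (C := (B+B) * (B+B)) (by fun_prop) (Filter.Eventually.of_forall fun ω => ?_)
      rw [norm_mul, Real.norm_eq_abs, Real.norm_eq_abs]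
      have := hdB ω
      have := hdB2 ω
      gcongr
    have e : ∀ ω, |r (X ω) m - gstar (X ω)| ^ 2 = (r (X ω) m - G (r (X ω)))^2 + 
        2 * ((r (X ω) m - G (r (X ω))) * (G (r (X ω)) - gstar (X ω))) + (G (r (X ω)) - gstar (X ω))^2 := by
      intro ω; rw [sq_abs]; ring
    simp only [e]
    have hi13 : Integrable (fun ω => (r (X ω) m - G (r (X ω)))^2 + 
        2 * ((r (X ω) m - G (r (X ω))) * (G (r (X ω)) - gstar (X ω)))) μ := hi1.add (hi3.const_mul 2)
    rw [integral_add hi13 hi2, integral_add hi1 (hi3.const_mul 2), integral_const_mul, ho]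
    have : 0 ≤ ∫ ω, (r (X ω) m - G (r (X ω)))^2 ∂μ := integral_nonneg fun ω => sq_nonneg _
    linarith
  obtain ⟨C, hC, hrate⟩ := aux_rate μ hM K b ρ hK.b_pos hK.rho_pos hK.measurable hK.nonneg hK.lower hK.le_one A hA hKA
    (fun ω => r (X ω)) (hr.comp hX) Y hY B hYB R hR (fun ω => hrBdd _) G hGm (fun ω => hGB _) L hlip 
    (fun ψ hψ ⟨c, hc⟩ => horth1 ψ hψ c fun x => hc _)
  refine ⟨C, hC, ?_⟩
  intro ℓ hℓ
  obtain ⟨n, rfl⟩ : ∃ n, ℓ = n + 1 := ⟨ℓ - 1, by omega⟩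
  have hrate' := hrate n _ rfl
  set h : ℝ := ((n+1 : ℕ) : ℝ) ^ (-(1 : ℝ) / ((M : ℝ) + 2)) with hh
  set P := Measure.pi fun _ : Fin (n+1) => μ with hP
  obtain ⟨g, hg⟩ : ∃ g : (Fin (n+1) → Ω) → EuclideanSpace ℝ (Fin M) → ℝ, ∀ ω z, g ω z = 
    ∑ i, (K (h⁻¹ • (z - r (X (ω i)))) / ∑ j, K (h⁻¹ • (z - r (X (ω j))))) * Y (ω i) := ⟨_, fun _ _ => rfl⟩
  simp only [← hg] at hrate'
  have hgm : Measurable (fun p : (Fin (n+1) → Ω) × EuclideanSpace ℝ (Fin M) => g p.1 p.2) := by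
    simp only [hg]
    fun_prop
  have hgBd : ∀ ω z, |g ω z| ≤ B := by
    intro ω z
    have hs : 0 ≤ ∑ j, K (h⁻¹ • (z - r (X (ω j)))) := Finset.sum_nonneg fun j _ => hK.nonneg _
    calc |g ω z| ≤ ∑ i, |(K (h⁻¹ • (z - r (X (ω i)))) / ∑ j, K (h⁻¹ • (z - r (X (ω j))))) * Y (ω i)| := 
          by rw [hg]; exact Finset.abs_sum_le_sum_abs _ _
      _ ≤ ∑ i, (K (h⁻¹ • (z - r (X (ω i)))) / ∑ j, K (h⁻¹ • (z - r (X (ω j))))) * B := by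
          apply Finset.sum_le_sum
          intro i _
          have h1 := div_nonneg (hK.nonneg (h⁻¹ • (z - r (X (ω i))))) hs
          rw [abs_mul, abs_of_nonneg h1]
          have := hYB (ω i)
          gcongr
      _ ≤ 1 * B := by
          rw [← Finset.sum_mul, ← Finset.sum_div]
          gcongr
          exact div_self_le_one _
      _ = B := one_mul B
  have hagg : ∀ ω : (Fin (n+1) → Ω) × Ω, aggEstimator K h r X Y ω.1 (X ω.2) = g ω.1 (r (X ω.2)) := fun ω => (hg _ _).symm
  simp only [hagg]
  have hdB1 : ∀ (ω : Fin (n+1) → Ω) x, |g ω (r x) - G (r x)| ≤ B + B := by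
    intro ω x
    have h3 := abs_sub (g ω (r x)) (G (r x))
    have h4 := hGB x
    have h5 := hgBd ω (r x)
    linarith
  have hdB2 : ∀ x, |G (r x) - gstar x| ≤ B + B := by
    intro x
    have h3 := abs_sub (G (r x)) (gstar x)
    have h4 := hGB x
    have h5 := hgB' x
    linarith
  have hm1 : Measurable fun ω : (Fin (n+1) → Ω) × Ω => g ω.1 (r (X ω.2)) - G (r (X ω.2)) := by
    have h0 : Measurable fun ω : (Fin (n+1) → Ω) × Ω => (ω.1, r (X ω.2)) := by fun_prop
    have h1 : Measurable fun ω : (Fin (n+1) → Ω) × Ω => g ω.1 (r (X ω.2)) := hgm.comp h0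
    have h2 : Measurable fun ω : (Fin (n+1) → Ω) × Ω => G (r (X ω.2)) := by fun_prop
    exact h1.sub h2
  have hi1 : Integrable (fun ω : (Fin (n+1) → Ω) × Ω => (g ω.1 (r (X ω.2)) - G (r (X ω.2)))^2) (P.prod μ) := by
    refine Integrable.of_bound (C := (B+B)^2) (by fun_prop) (Filter.Eventually.of_forall fun ω => ?_)
    rw [norm_pow, Real.norm_eq_abs]
    have := hdB1 ω.1 (X ω.2)
    gcongr
  have hi2 : Integrable (fun ω : (Fin (n+1) → Ω) × Ω => (G (r (X ω.2)) - gstar (X ω.2))^2) (P.prod μ) := by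
    refine Integrable.of_bound (C := (B+B)^2) (by fun_prop) (Filter.Eventually.of_forall fun ω => ?_)
    rw [norm_pow, Real.norm_eq_abs]
    have := hdB2 (X ω.2)
    gcongr
  have hi3 : Integrable (fun ω : (Fin (n+1) → Ω) × Ω => (g ω.1 (r (X ω.2)) - G (r (X ω.2))) * (G (r (X ω.2)) - gstar (X ω.2)))
      (P.prod μ) := by
    refine Integrable.of_bound (C := (B+B) * (B+B)) (by fun_prop) (Filter.Eventually.of_forall fun ω => ?_)
    rw [norm_mul, Real.norm_eq_abs, Real.norm_eq_abs]
    have := hdB1 ω.1 (X ω.2)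
    have := hdB2 (X ω.2)
    gcongr
  have ho : ∫ ω : (Fin (n+1) → Ω) × Ω, (g ω.1 (r (X ω.2)) - G (r (X ω.2))) * (G (r (X ω.2)) - gstar (X ω.2)) ∂(P.prod μ) = 0 := by
    rw [integral_prod _ hi3]
    have : ∀ ω : Fin (n+1) → Ω, ∫ ω', (g ω (r (X ω')) - G (r (X ω'))) * (G (r (X ω')) - gstar (X ω')) ∂μ = 0 := by
      intro ω
      have hgo : Measurable (g ω) := hgm.comp (measurable_const.prodMk measurable_id)
      exact horth2 (fun z => g ω z - G z) (by fun_prop) (B+B) (hdB1 ω)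
    simp [this]
  have hfirst : ∫ ω : (Fin (n+1) → Ω) × Ω, (g ω.1 (r (X ω.2)) - G (r (X ω.2)))^2 ∂(P.prod μ) 
      ≤ C * ((n+1 : ℕ) : ℝ) ^ (-(2 : ℝ) / ((M : ℝ) + 2)) := by
    rw [integral_eq_lintegral_of_nonneg_ae (Filter.Eventually.of_forall fun ω => sq_nonneg _) hi1.aestronglyMeasurable]
    apply ENNReal.toReal_le_of_le_ofReal (by positivity)
    rw [lintegral_prod_symm _ (by fun_prop)]
    exact hrate'
  have e : ∀ ω : (Fin (n+1) → Ω) × Ω, |g ω.1 (r (X ω.2)) - gstar (X ω.2)| ^ 2 = (g ω.1 (r (X ω.2)) - G (r (X ω.2)))^2 + 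
        2 * ((g ω.1 (r (X ω.2)) - G (r (X ω.2))) * (G (r (X ω.2)) - gstar (X ω.2))) + (G (r (X ω.2)) - gstar (X ω.2))^2 := by
      intro ω; rw [sq_abs]; ring
  simp only [e]
  have hi13 : Integrable (fun ω : (Fin (n+1) → Ω) × Ω => (g ω.1 (r (X ω.2)) - G (r (X ω.2)))^2 + 
        2 * ((g ω.1 (r (X ω.2)) - G (r (X ω.2))) * (G (r (X ω.2)) - gstar (X ω.2)))) (P.prod μ) := hi1.add (hi3.const_mul 2)
  rw [integral_add hi13 hi2, integral_add hi1 (hi3.const_mul 2), integral_const_mul, ho]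
  have hlast : ∫ ω : (Fin (n+1) → Ω) × Ω, (G (r (X ω.2)) - gstar (X ω.2))^2 ∂(P.prod μ) 
     = ∫ ω, (G (r (X ω)) - gstar (X ω))^2 ∂μ := by
    rw [integral_fun_snd (fun ω => (G (r (X ω)) - gstar (X ω))^2)]
    simp
  rw [hlast]
  linarith

/-- (Theorem 1.)  Let `K` be a regular kernel with constants
`b, ρ, κ₀` satisfying moreover the tail bound `K(z) ≤ C_K·exp(−‖z‖^α)` for `‖z‖ ≥ R_K`
(with `α, R_K, C_K > 0`).  Assume `|Y| ≤ R` a.s. and `‖r(x)‖ ≤ R` for all `x`, that `G`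
is `L`-Lipschitz with `G(r(X))` a version of `E[Y | r(X)]`, and let `g*(X)` be a version
of `E[Y|X]`.  Then, choosing `h = ℓ^{−1/(M+2)}`, there is `C > 0` independent of `ℓ` with
`E[|g_n(r(X)) − g*(X)|²] ≤ min_{1≤m≤M} E[|r_m(X) − g*(X)|²] + C·ℓ^{−2/(M+2)}` for every
`ℓ ≥ 1`, the expectation being over both `X` and the sample `(X_i,Y_i)_{i=1}^ℓ`. -/
theorem aggEstimator_risk_rate
    {Ω : Type*} [MeasurableSpace Ω] (μ : Measure Ω) [IsProbabilityMeasure μ]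
    {d M : ℕ} (hM : 0 < M)
    (K : EuclideanSpace ℝ (Fin M) → ℝ) (b ρ κ₀ : ℝ)
    (hK : IsRegularKernel K b ρ κ₀)
    (α R_K C_K : ℝ) (hα : 0 < α) (hR_K : 0 < R_K) (hC_K : 0 < C_K)
    (htail : ∀ z : EuclideanSpace ℝ (Fin M), R_K ≤ ‖z‖ →
      K z ≤ C_K * Real.exp (-‖z‖ ^ α))
    (X : Ω → Fin d → ℝ) (Y : Ω → ℝ) (hX : Measurable X) (hY : Measurable Y)
    (hY2 : Integrable (fun ω => (Y ω) ^ 2) μ)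
    (R : ℝ) (hR : 0 < R) (hYbdd : ∀ᵐ ω ∂μ, |Y ω| ≤ R)
    (r : (Fin d → ℝ) → EuclideanSpace ℝ (Fin M)) (hr : Measurable r)
    (hrBdd : ∀ x, ‖r x‖ ≤ R)
    (L : ℝ) (hL : 0 ≤ L)
    (G : EuclideanSpace ℝ (Fin M) → ℝ) (hGLip : LipschitzWith L.toNNReal G)
    (hGCE : (fun ω => G (r (X ω))) =ᵐ[μ]
      μ[Y | MeasurableSpace.comap (fun ω => r (X ω)) inferInstance])
    (gstar : (Fin d → ℝ) → ℝ) (hgstar : Measurable gstar)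
    (hgstarCE : (fun ω => gstar (X ω)) =ᵐ[μ]
      μ[Y | MeasurableSpace.comap X inferInstance]) :
    ∃ C : ℝ, 0 < C ∧ ∀ ℓ : ℕ, 1 ≤ ℓ →
      ∫ ω : (Fin ℓ → Ω) × Ω,
          |aggEstimator K ((ℓ : ℝ) ^ (-(1 : ℝ) / ((M : ℝ) + 2))) r X Y ω.1 (X ω.2)
              - gstar (X ω.2)| ^ 2
          ∂((Measure.pi fun _ : Fin ℓ => μ).prod μ)
        ≤ (⨅ m : Fin M, ∫ ω, |r (X ω) m - gstar (X ω)| ^ 2 ∂μ)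
          + C * (ℓ : ℝ) ^ (-(2 : ℝ) / ((M : ℝ) + 2)) := by

  let cl : ℝ → ℝ := fun y => max (-R) (min R y)
  have hclm : Measurable cl := by simp only [cl]; fun_prop
  have hclB : ∀ y, |cl y| ≤ R := by
    intro y
    rw [abs_le]
    exact ⟨le_max_left _ _, max_le (by linarith) (min_le_left _ _)⟩
  have hcle : ∀ y, |y| ≤ R → cl y = y := by
    intro y hy
    rw [abs_le] at hy
    simp only [cl]
    rw [min_eq_right hy.2, max_eq_right hy.1]
  have hYe : (fun ω => cl (Y ω)) =ᵐ[μ] Y := by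
    filter_upwards [hYbdd] with ω hω
    exact hcle _ hω
  have hgb : ∀ᵐ ω ∂μ, |gstar (X ω)| ≤ R := by
    have h1 := ae_bdd_abs_condExp_of_ae_bdd_abs (m := MeasurableSpace.comap X inferInstance) hYbdd
    filter_upwards [h1, hgstarCE] with ω h1 h2
    rw [h2]; exact h1
  have hge : (fun ω => cl (gstar (X ω))) =ᵐ[μ] fun ω => gstar (X ω) := by
    filter_upwards [hgb] with ω hω
    exact hcle _ hω
  obtain ⟨C, hC, H⟩ := aux_main μ hM K b ρ κ₀ hK α R_K C_K hα hC_K htail X (fun ω => cl (Y ω)) hX (hclm.comp hY) R hR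
    (fun ω => hclB _) r hr hrBdd L hL G hGLip (hGCE.trans (condExp_congr_ae hYe.symm)) (fun x => cl (gstar x)) 
    (hclm.comp hgstar) (fun x => hclB _) (hge.trans (hgstarCE.trans (condExp_congr_ae hYe.symm)))
  refine ⟨C, hC, fun ℓ hℓ => ?_⟩
  have H1 := H ℓ hℓ
  have e1 : ∀ m : Fin M, ∫ ω, |r (X ω) m - cl (gstar (X ω))| ^ 2 ∂μ = ∫ ω, |r (X ω) m - gstar (X ω)| ^ 2 ∂μ := by
    intro m
    apply integral_congr_ae
    filter_upwards [hge] with ω hω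
    rw [hω]
  simp only [e1] at H1
  refine le_trans (le_of_eq ?_) H1
  apply integral_congr_ae
  have hp1 : ∀ᵐ ω ∂((Measure.pi fun _ : Fin ℓ => μ).prod μ), ∀ i, cl (Y (ω.1 i)) = Y (ω.1 i) := by
    rw [ae_all_iff]
    intro i
    have q1 := (measurePreserving_eval (fun _ : Fin ℓ => μ) i).quasiMeasurePreserving
    have q2 := (Measure.quasiMeasurePreserving_fst (μ := Measure.pi fun _ : Fin ℓ => μ) (ν := μ))
    exact (q1.comp q2).ae hYe
  have hp2 : ∀ᵐ ω ∂((Measure.pi fun _ : Fin ℓ => μ).prod μ), cl (gstar (X ω.2)) = gstar (X ω.2) := 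
    (Measure.quasiMeasurePreserving_snd (μ := Measure.pi fun _ : Fin ℓ => μ) (ν := μ)).ae hge
  filter_upwards [hp1, hp2] with ω h1 h2
  simp only [aggEstimator, h1, h2]
end
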